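/- Let R be a d-dimensional Noetherian local ring containing a field, let x_1,…,x_d be a system of parameters of R, and let Min_d(R) denote the set of minimal primes P of R with dim(R/P) = d. Then for every finitely generated R-module M, 𝔥^d_x(M) = max{ rank_{R/P}(M/PM) : P ∈ Min_d(R) }, where for a domain T, rank_T of a T-module is the dimension over Frac(T) of its base change to Frac(T). -/

import Mathlib

open scoped BigOperators ENNReal

universe u v

/-- A filtration of `M` of length `h` whose factors are cyclic modules killed by `J`. -/
def HasQLFiltration (S : Type u) [CommRing S] (J : Ideal S)
    (M : Type v) [AddCommGroup M] [Module S M] (h : ℕ) : Prop :=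
  ∃ c : Fin (h + 1) → Submodule S M,
    Monotone c ∧ c 0 = ⊥ ∧ c (Fin.last h) = ⊤ ∧
    ∀ i : Fin h,
      (∃ m : M, c i.succ = c i.castSucc ⊔ Submodule.span S {m}) ∧
      ∀ a ∈ J, ∀ x ∈ c i.succ, a • x ∈ c i.castSucc

/-- The `J`-quasilength of `M`. -/
noncomputable def quasilength (S : Type u) [CommRing S] (J : Ideal S)
    (M : Type v) [AddCommGroup M] [Module S M] : ℕ∞ :=
  sInf {n : ℕ∞ | ∃ h : ℕ, n = (h : ℕ∞) ∧ HasQLFiltration S J M h}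

/-- The ideal `(x₁^{t₁}, …, x_d^{t_d})`. -/
def powerIdeal {R : Type u} [CommRing R] {d : ℕ} (x : Fin d → R) (t : Fin d → ℕ) : Ideal R :=
  Ideal.span (Set.range fun i => x i ^ t i)

/-- The content `𝔥^d_x(M)` of `M` with respect to `x₁, …, x_d`. -/
noncomputable def content {R : Type u} [CommRing R] {d : ℕ} (x : Fin d → R)
    (M : Type v) [AddCommGroup M] [Module R M] : ℝ≥0∞ :=
  ⨆ s : ℕ, ⨅ t : {t : Fin d → ℕ // ∀ i, s ≤ t i ∧ 0 < t i},
    (quasilength R (Ideal.span (Set.range x))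
        (M ⧸ (powerIdeal x (t : Fin d → ℕ) • (⊤ : Submodule R M))) : ℝ≥0∞) /
      ∏ i, ((t : Fin d → ℕ) i : ℝ≥0∞)


open scoped TensorProduct

/-!
If `N → M` has a cokernel `C` of dimension less than `d`, the content of `M` is at most that of `N`,
because the quasilength of `C / I_t C` is of smaller order than `t₁ ⋯ t_d`.

*Upper bound.* Let `r` be the maximal rank. Since there are no inclusions between the
`P ∈ Min_d(R)`, one can find `r` elements of `M` which generate all `M_P`. They span a submodule `N`
such that `M / N` has dimension less than `d`, and the quasilength of `N / I_t N` is at most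
`r t₁ ⋯ t_d`.

*Lower bound.* If `M / PM` has rank `r`, then `M` maps to `(R / P)ʳ` with a cokernel of smaller
dimension, so one has to show that a filtration of `Dʳ / I_t Dʳ`, `D = R / P`, has length `h` at
least `r t₁ ⋯ t_d`.

In characteristic `p`, base change along the `e`-th iterate of Frobenius turns the filtration into
one of `Dʳ / I_{qt} Dʳ`, `q = pᵉ`, with factors that are quotients of `D / I_{(q,…,q)} D`. Thus
`r · length (D / I_{qt} D) ≤ h · length (D / I_{(q,…,q)} D)`. The length of `D / I_s D` per unit of
volume `s₁ ⋯ s_d` has a positive infimum, to which it converges as `s → ∞`, so that the claim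
follows by letting `e → ∞`.

In characteristic `0`, the filtration is defined over a subring `A` of `D` of finite type over `ℤ`,
and it suffices to map `A` to a `d`-dimensional local ring of characteristic `p` so that the `xᵢ`
go to a system of parameters. Modulo a minimal prime, the completion of `D` is a finite extension of
a power series ring `K⟦x₁, …, x_d⟧`, which reduces the problem to subrings of the latter. These are
treated by induction on `d`, as in the proof of Artin approximation: generators of `A` satisfy
polynomial equations over `ℤ` with a primitive element `θ`; by Weierstrass preparation, a
solution in power series is approximated by polynomials in one variable over a finitely generated
ring of power series in the others; these are specialized to characteristic `p` by induction, and
Newton's method turns the result back into an exact solution.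
-/

/-! ## Quasilength -/

section Quasilength

variable {S : Type*} [CommRing S] {J : Ideal S} {M : Type*} [AddCommGroup M] [Module S M]
  {N : Type*} [AddCommGroup N] [Module S N]

/-- `IsQLChain J B h C`: one can pass from `B` to `C` by `h` successive extensions with cyclic
factors killed by `J`. This is the relative form of `HasQLFiltration`, which is the case `B = ⊥`,
`C = ⊤`. -/
inductive IsQLChain (J : Ideal S) (B : Submodule S M) : ℕ → Submodule S M → Prop
  | zero : IsQLChain J B 0 B
  | step {h : ℕ} {C : Submodule S M} (m : M) : IsQLChain J B h C → (∀ a ∈ J, a • m ∈ C) →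
      IsQLChain J B (h + 1) (C ⊔ Submodule.span S {m})

namespace IsQLChain

theorem trans {B C D : Submodule S M} {h k : ℕ} (hBC : IsQLChain J B h C)
    (hCD : IsQLChain J C k D) : IsQLChain J B (h + k) D := by
  induction hCD with
  | zero => exact hBC
  | step m _ hm ih => exact step m ih hm

theorem map {B C : Submodule S M} {h : ℕ} (f : M →ₗ[S] N) (hBC : IsQLChain J B h C) :
    IsQLChain J (B.map f) h (C.map f) := by
  induction hBC with
  | zero => exact zero
  | step m _ hm ih =>
    rw [Submodule.map_sup, Submodule.map_span, Set.image_singleton]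
    refine step (f m) ih fun a ha => ?_
    rw [← map_smul]
    exact Submodule.mem_map_of_mem (hm a ha)

theorem sup_left {B C : Submodule S M} {h : ℕ} (D : Submodule S M) (hBC : IsQLChain J B h C) :
    IsQLChain J (D ⊔ B) h (D ⊔ C) := by
  induction hBC with
  | zero => exact zero
  | step m _ hm ih =>
    rw [← sup_assoc]
    exact step m ih fun a ha => Submodule.mem_sup_right (hm a ha)

theorem comap {B C : Submodule S N} {h : ℕ} {f : M →ₗ[S] N} (hf : Function.Surjective f)
    (hBC : IsQLChain J B h C) : IsQLChain J (B.comap f) h (C.comap f) := by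
  induction hBC with
  | zero => exact zero
  | @step h C n _ hn ih =>
    obtain ⟨m, rfl⟩ := hf n
    have comap_sup : (C ⊔ Submodule.span S {f m}).comap f = C.comap f ⊔ Submodule.span S {m} := by
      have map_sup : (C.comap f ⊔ Submodule.span S {m}).map f = C ⊔ Submodule.span S {f m} := by
        rw [Submodule.map_sup, Submodule.map_comap_eq_of_surjective hf, Submodule.map_span,
          Set.image_singleton]
      rw [← map_sup, Submodule.comap_map_eq, sup_eq_left]
      exact (Submodule.comap_mono bot_le : LinearMap.ker f ≤ C.comap f).trans le_sup_left
    rw [comap_sup]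
    exact step m ih fun a ha => by simpa using hn a ha

theorem sup_span {B : Submodule S M} (s : Finset M) (hs : ∀ m ∈ s, ∀ a ∈ J, a • m ∈ B) :
    IsQLChain J B s.card (B ⊔ Submodule.span S s) := by
  classical
  induction s using Finset.induction_on with
  | empty => simpa using zero
  | insert m s hm ih =>
    rw [Finset.card_insert_of_notMem hm, Finset.coe_insert, Submodule.span_insert,
      sup_comm (Submodule.span S {m}), ← sup_assoc]
    exact step m (ih fun n hn => hs n (Finset.mem_insert_of_mem hn)) fun a ha =>
      Submodule.mem_sup_left (hs m (Finset.mem_insert_self m s) a ha)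

theorem exists_smul_of_fg {N : Submodule S M} (hN : N.FG) : ∃ h, IsQLChain J (J • N) h N := by
  obtain ⟨s, rfl⟩ := hN
  have chain := sup_span (J := J) (B := J • Submodule.span S (s : Set M)) s fun m hm a ha =>
    Submodule.smul_mem_smul ha (Submodule.subset_span hm)
  rw [sup_eq_right.mpr Submodule.smul_le_right] at chain
  exact ⟨_, chain⟩

theorem exists_pow_smul_top [IsNoetherian S M] (n : ℕ) :
    ∃ h, IsQLChain J (J ^ n • (⊤ : Submodule S M)) h ⊤ := by
  induction n with
  | zero => exact ⟨0, by simpa using zero⟩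
  | succ n ih =>
    obtain ⟨h, hn⟩ := ih
    obtain ⟨k, hk⟩ :=
      exists_smul_of_fg (J := J) (IsNoetherian.noetherian (J ^ n • (⊤ : Submodule S M)))
    rw [pow_succ', Submodule.mul_smul]
    exact ⟨k + h, hk.trans hn⟩

theorem exists_chain {B C : Submodule S M} {h : ℕ} (hBC : IsQLChain J B h C) :
    ∃ c : ℕ → Submodule S M, c 0 = B ∧ c h = C ∧ ∀ i < h,
      ∃ m : M, c (i + 1) = c i ⊔ Submodule.span S {m} ∧ ∀ a ∈ J, a • m ∈ c i := by
  induction hBC with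
  | zero => exact ⟨fun _ => B, rfl, rfl, by simp⟩
  | @step h C m _ hm ih =>
    obtain ⟨c, h0, hh, hc⟩ := ih
    refine ⟨fun i => if i ≤ h then c i else C ⊔ Submodule.span S {m}, by simpa using h0,
      by simp, fun i hi => ?_⟩
    rcases Nat.lt_succ_iff_lt_or_eq.mp hi with hi | rfl
    · simpa only [hi.le, Nat.succ_le_of_lt hi, if_true] using hc i hi
    · exact ⟨m, by simp [hh], by simpa [hh] using hm⟩

theorem of_hasQLFiltration {h : ℕ} (H : HasQLFiltration S J M h) :
    IsQLChain J (⊥ : Submodule S M) h ⊤ := by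
  obtain ⟨c, -, c_zero, c_last, hc⟩ := H
  have chain (k : Fin (h + 1)) : IsQLChain J (⊥ : Submodule S M) k (c k) := by
    induction k using Fin.induction with
    | zero => rw [c_zero]; exact zero
    | succ k ih =>
      obtain ⟨⟨m, hm⟩, hJ⟩ := hc k
      have m_mem : m ∈ c k.succ :=
        hm ▸ Submodule.mem_sup_right (Submodule.mem_span_singleton_self m)
      rw [hm]
      exact step m ih fun a ha => hJ a ha m m_mem
  exact c_last ▸ chain (Fin.last h)

theorem hasQLFiltration {h : ℕ} (H : IsQLChain J (⊥ : Submodule S M) h ⊤) :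
    HasQLFiltration S J M h := by
  obtain ⟨c, c_zero, c_last, hc⟩ := H.exists_chain
  choose m hm hJ using hc
  refine ⟨fun i => c i, Fin.monotone_iff_le_succ.mpr fun i => ?_, c_zero, c_last, fun i =>
    ⟨⟨m i i.2, hm i i.2⟩, fun a ha x hx => ?_⟩⟩
  · exact (hm i i.2).symm ▸ le_sup_left
  · replace hx : x ∈ c (i + 1) := hx
    rw [hm i i.2] at hx
    obtain ⟨y, hy, z, hz, rfl⟩ := Submodule.mem_sup.mp hx
    obtain ⟨b, rfl⟩ := Submodule.mem_span_singleton.mp hz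
    rw [smul_add, smul_comm]
    exact add_mem (Submodule.smul_mem _ _ hy) (Submodule.smul_mem _ _ (hJ i i.2 a ha))

theorem quasilength_le {h : ℕ} (H : IsQLChain J (⊥ : Submodule S M) h ⊤) :
    quasilength S J M ≤ h :=
  sInf_le ⟨h, rfl, H.hasQLFiltration⟩

end IsQLChain

theorem exists_isQLChain_of_quasilength_ne_top (H : quasilength S J M ≠ ⊤) :
    ∃ h : ℕ, quasilength S J M = h ∧ IsQLChain J (⊥ : Submodule S M) h ⊤ := by
  have nonempty : {n : ℕ∞ | ∃ h : ℕ, n = h ∧ HasQLFiltration S J M h}.Nonempty :=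
    Set.nonempty_iff_ne_empty.mpr fun empty => H (by rw [quasilength, empty, sInf_empty])
  obtain ⟨h, hh, hq⟩ := csInf_mem nonempty
  exact ⟨h, hh, .of_hasQLFiltration hq⟩

theorem quasilength_le_of_surjective {f : M →ₗ[S] N} (hf : Function.Surjective f) :
    quasilength S J N ≤ quasilength S J M := by
  by_cases hM : quasilength S J M = ⊤
  · simp [hM]
  obtain ⟨h, hh, chain⟩ := exists_isQLChain_of_quasilength_ne_top hM
  have chain_map := chain.map f
  rw [Submodule.map_bot, Submodule.map_top, LinearMap.range_eq_top.mpr hf] at chain_map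
  exact hh ▸ chain_map.quasilength_le

theorem quasilength_le_add_of_rightExact {M' : Type*} [AddCommGroup M'] [Module S M']
    {f : N →ₗ[S] M} {g : M →ₗ[S] M'} (hg : Function.Surjective g)
    (hfg : LinearMap.ker g ≤ LinearMap.range f) :
    quasilength S J M ≤ quasilength S J N + quasilength S J M' := by
  by_cases hN : quasilength S J N = ⊤
  · simp [hN]
  by_cases hM' : quasilength S J M' = ⊤
  · simp [hM']
  obtain ⟨a, ha, chain_N⟩ := exists_isQLChain_of_quasilength_ne_top hN
  obtain ⟨b, hb, chain_M'⟩ := exists_isQLChain_of_quasilength_ne_top hM'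
  have chain_range := chain_N.map f
  rw [Submodule.map_bot, Submodule.map_top] at chain_range
  have chain_above := (chain_M'.comap hg).sup_left (LinearMap.range f)
  rw [Submodule.comap_bot, Submodule.comap_top, sup_eq_left.mpr hfg, sup_top_eq] at chain_above
  rw [ha, hb, ← Nat.cast_add]
  exact (chain_range.trans chain_above).quasilength_le

theorem quasilength_le_card_of_span_eq_top {s : Finset M} (hs : Submodule.span S (s : Set M) = ⊤)
    (hJ : ∀ a ∈ J, ∀ m : M, a • m = 0) : quasilength S J M ≤ s.card := by
  refine IsQLChain.quasilength_le ?_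
  simpa [hs] using IsQLChain.sup_span (J := J) (B := ⊥) s fun m _ a ha => by simp [hJ a ha m]

theorem quasilength_ne_top_of_pow_smul_eq_bot [IsNoetherian S M] {n : ℕ}
    (hn : J ^ n • (⊤ : Submodule S M) = ⊥) : quasilength S J M ≠ ⊤ := by
  obtain ⟨h, chain⟩ := IsQLChain.exists_pow_smul_top (J := J) (M := M) n
  exact ne_top_of_le_ne_top (ENat.natCast_ne_top h) (hn ▸ chain).quasilength_le

end Quasilength

section BoxSubadditive

/-- A monotone function of a box of side lengths `t` which is subadditive under cutting the box in
two along a coordinate direction. The quasilength and the length of `M / I_t M` both have this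
property. -/
structure IsBoxSubadditive {ι : Type*} [DecidableEq ι] (lam : (ι → ℕ) → ℕ∞) : Prop where
  mono : Monotone lam
  update_add_le : ∀ (t : ι → ℕ) (i : ι) (a b : ℕ), lam (Function.update t i (a + b)) ≤
    lam (Function.update t i a) + lam (Function.update t i b)

namespace IsBoxSubadditive

variable {ι : Type*} [DecidableEq ι] {lam : (ι → ℕ) → ℕ∞}

theorem update_succ_mul_le (hlam : IsBoxSubadditive lam) (t : ι → ℕ) (i : ι) (k : ℕ) :
    lam (Function.update t i ((k + 1) * t i)) ≤ (k + 1 : ℕ) * lam t := by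
  induction k with
  | zero => simp
  | succ k ih =>
    calc lam (Function.update t i ((k + 1 + 1) * t i))
        = lam (Function.update t i ((k + 1) * t i + t i)) := by rw [add_one_mul (k + 1)]
      _ ≤ lam (Function.update t i ((k + 1) * t i)) + lam (Function.update t i (t i)) :=
        hlam.update_add_le t i _ _
      _ ≤ (k + 1 : ℕ) * lam t + lam t := by rw [Function.update_eq_self]; gcongr
      _ = (k + 1 + 1 : ℕ) * lam t := by push_cast; ring

variable [Fintype ι]

theorem succ_mul_le (hlam : IsBoxSubadditive lam) (k t : ι → ℕ) :
    lam (fun i => (k i + 1) * t i) ≤ (∏ i, (k i + 1) : ℕ) * lam t := by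
  have piecewise_le (s : Finset ι) : lam (s.piecewise (fun i => (k i + 1) * t i) t) ≤
      (∏ i ∈ s, (k i + 1) : ℕ) * lam t := by
    induction s using Finset.induction_on with
    | empty => simp
    | insert j s hj ih =>
      have update_eq : (insert j s).piecewise (fun i => (k i + 1) * t i) t =
          Function.update (s.piecewise (fun i => (k i + 1) * t i) t) j
            ((k j + 1) * s.piecewise (fun i => (k i + 1) * t i) t j) := by
        rw [Finset.piecewise_insert, Finset.piecewise_eq_of_notMem _ _ _ hj]
      rw [Finset.prod_insert hj, update_eq, Nat.cast_mul, mul_assoc]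
      exact (hlam.update_succ_mul_le _ j (k j)).trans (by gcongr)
  simpa using piecewise_le Finset.univ

theorem le_prod_mul_one (hlam : IsBoxSubadditive lam) {t : ι → ℕ} (ht : ∀ i, 0 < t i) :
    lam t ≤ (∏ i, t i : ℕ) * lam 1 := by
  simpa [Nat.sub_add_cancel (ht _)] using hlam.succ_mul_le (fun i => t i - 1) 1

theorem mul_prod_le (hlam : IsBoxSubadditive lam) {N : ℕ} {s t : ι → ℕ} (hs : ∀ i, 0 < s i)
    (hst : ∀ i, N * s i ≤ t i) :
    ((∏ i, N * s i : ℕ) : ℕ∞) * lam t ≤ ((∏ i, (N + 1) * t i : ℕ) : ℕ∞) * lam s := by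
  -- `⌊t i / s i⌋ + 1` copies of `s i` cover `t i`
  have cover : lam t ≤ (∏ i, (t i / s i + 1) : ℕ) * lam s := by
    refine (hlam.mono fun i => ?_).trans (hlam.succ_mul_le (fun i => t i / s i) s)
    simpa [mul_comm] using (Nat.lt_mul_div_succ (t i) (hs i)).le
  calc ((∏ i, N * s i : ℕ) : ℕ∞) * lam t
      ≤ (∏ i, N * s i : ℕ) * ((∏ i, (t i / s i + 1) : ℕ) * lam s) := by gcongr
    _ = ((∏ i, N * s i * (t i / s i + 1) : ℕ) : ℕ∞) * lam s := by
      rw [← mul_assoc, ← Nat.cast_mul, ← Finset.prod_mul_distrib]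
    _ ≤ ((∏ i, (N + 1) * t i : ℕ) : ℕ∞) * lam s := by
      refine mul_le_mul_left (Nat.cast_le.mpr (Finset.prod_le_prod' fun i _ => ?_)) _
      have := Nat.div_mul_le_self (t i) (s i)
      have := hst i
      nlinarith

end IsBoxSubadditive

end BoxSubadditive

section PowerQuotient

/-- The module `M / I_t M`. -/
abbrev PowerQuotient {R : Type*} [CommRing R] {d : ℕ} (x : Fin d → R) (t : Fin d → ℕ) (M : Type*)
    [AddCommGroup M] [Module R M] : Type _ :=
  M ⧸ (powerIdeal x t • (⊤ : Submodule R M))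

variable {R : Type*} [CommRing R] {M N M' : Type*} [AddCommGroup M] [Module R M]
  [AddCommGroup N] [Module R N] [AddCommGroup M'] [Module R M']

theorem mapQ_surjective {f : N →ₗ[R] M} (hf : Function.Surjective f) {n : Submodule R N}
    {p : Submodule R M} {h : n ≤ p.comap f} : Function.Surjective (Submodule.mapQ n p f h) := by
  rw [← LinearMap.range_eq_top, Submodule.range_mapQ, LinearMap.range_eq_top.mpr hf,
    Submodule.map_top, Submodule.range_mkQ]

theorem ker_mapQ_le_range_mapQ {f : N →ₗ[R] M} {g : M →ₗ[R] M'} {n : Submodule R N}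
    {p : Submodule R M} {q : Submodule R M'} (hf : n ≤ p.comap f) (hg : p ≤ q.comap g)
    (hfg : q.comap g ≤ LinearMap.range f ⊔ p) :
    LinearMap.ker (Submodule.mapQ p q g hg) ≤ LinearMap.range (Submodule.mapQ n p f hf) := by
  rw [Submodule.range_mapQ, Submodule.mapQ, Submodule.ker_liftQ, LinearMap.ker_comp,
    Submodule.ker_mkQ, Submodule.map_le_iff_le_comap, Submodule.comap_map_mkQ, sup_comm]
  exact hfg

theorem length_le_add_of_rightExact {f : N →ₗ[R] M} {g : M →ₗ[R] M'} (hg : Function.Surjective g)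
    (hfg : LinearMap.ker g ≤ LinearMap.range f) :
    Module.length R M ≤ Module.length R N + Module.length R M' := by
  rw [Module.length_eq_add_of_exact (LinearMap.ker g).subtype g (Submodule.subtype_injective _) hg
    (LinearMap.exact_subtype_ker_map g)]
  gcongr
  exact (Module.length_le_of_injective _ (Submodule.inclusion_injective hfg)).trans
    (Module.length_le_of_surjective f.rangeRestrict f.surjective_rangeRestrict)

theorem span_range_pow_mul_le_powerIdeal {d : ℕ} (hd : 0 < d) (x : Fin d → R) (s : ℕ) :
    Ideal.span (Set.range x) ^ (d * s) ≤ powerIdeal x fun _ => s := by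
  have : NeZero d := ⟨hd.ne'⟩
  rw [Ideal.span, Submodule.span_pow, Submodule.span_le]
  intro a ha
  obtain ⟨f, rfl⟩ := Set.mem_pow.mp ha
  choose g hg using fun j => (f j).2
  -- among `d * s` factors, one of the `d` generators occurs at least `s` times
  obtain ⟨i, hi⟩ := Fintype.exists_le_card_fiber_of_mul_le_card (f := g) (n := s) (by simp)
  have fiber_dvd : ∏ j with g j = i, x (g j) ∣ ∏ j, x (g j) :=
    Finset.prod_dvd_prod_of_subset _ _ _ (Finset.filter_subset _ _)
  rw [Finset.prod_congr rfl (g := fun _ => x i) fun j hj => by rw [(Finset.mem_filter.mp hj).2],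
    Finset.prod_const] at fiber_dvd
  rw [List.prod_ofFn]
  simp only [← hg]
  exact Ideal.mem_of_dvd _ ((pow_dvd_pow _ hi).trans fiber_dvd) (Ideal.subset_span ⟨i, rfl⟩)

theorem exists_pow_mul_mem_powerIdeal [IsNoetherianRing R] {d : ℕ} (hd : 0 < d) (x : Fin d → R) :
    ∃ E > 0, ∀ y ∈ (Ideal.span (Set.range x)).radical, ∀ s,
      y ^ (E * s) ∈ powerIdeal x fun _ => s := by
  obtain ⟨N, hN⟩ := (Ideal.span (Set.range x)).exists_radical_pow_le_of_fg
    (IsNoetherian.noetherian _)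
  refine ⟨(N + 1) * d, by positivity, fun y hy s => ?_⟩
  rw [mul_assoc, pow_mul]
  exact span_range_pow_mul_le_powerIdeal hd x s <| Ideal.pow_mem_pow
    (hN (Ideal.pow_le_pow_right (Nat.le_succ N) (Ideal.pow_mem_pow hy _))) _

variable {d : ℕ} {x : Fin d → R} {s t : Fin d → ℕ}

theorem powerIdeal_one (x : Fin d → R) : powerIdeal x 1 = Ideal.span (Set.range x) := by
  simp [powerIdeal]

theorem powerIdeal_smul_top_le_iff {P : Submodule R M} :
    powerIdeal x t • (⊤ : Submodule R M) ≤ P ↔ ∀ i m, x i ^ t i • m ∈ P := by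
  rw [powerIdeal, Submodule.span_smul_eq, Submodule.set_smul_le_iff]
  simpa using ⟨fun h i m => h i rfl, fun h r m i hr => hr ▸ h i m⟩

theorem pow_smul_mem_powerIdeal_smul_top {i : Fin d} {n : ℕ} (hn : t i ≤ n) (m : M) :
    x i ^ n • m ∈ powerIdeal x t • (⊤ : Submodule R M) := by
  refine Submodule.smul_mem_smul ?_ trivial
  exact Ideal.mem_of_dvd _ (pow_dvd_pow _ hn) (Ideal.subset_span ⟨i, rfl⟩)

theorem powerIdeal_smul_top_anti (x : Fin d → R) (hst : s ≤ t) :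
    powerIdeal x t • (⊤ : Submodule R M) ≤ powerIdeal x s • (⊤ : Submodule R M) :=
  powerIdeal_smul_top_le_iff.mpr fun i m => pow_smul_mem_powerIdeal_smul_top (hst i) m

theorem powerIdeal_smul_top_le_comap (x : Fin d → R) (t : Fin d → ℕ) (f : N →ₗ[R] M) :
    powerIdeal x t • (⊤ : Submodule R N) ≤ (powerIdeal x t • (⊤ : Submodule R M)).comap f :=
  Submodule.smul_top_le_comap_smul_top _ f

/-- The map `N / I_t N → M / I_t M` induced by `f : N → M`. -/
abbrev PowerQuotient.map (x : Fin d → R) (t : Fin d → ℕ) (f : N →ₗ[R] M) :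
    PowerQuotient x t N →ₗ[R] PowerQuotient x t M :=
  Submodule.mapQ _ _ f (powerIdeal_smul_top_le_comap x t f)

theorem PowerQuotient.map_surjective {f : N →ₗ[R] M} (hf : Function.Surjective f) :
    Function.Surjective (PowerQuotient.map x t f) :=
  mapQ_surjective hf

theorem PowerQuotient.ker_map_le_range_map {f : N →ₗ[R] M} {g : M →ₗ[R] M'}
    (hg : Function.Surjective g) (hfg : LinearMap.ker g ≤ LinearMap.range f) :
    LinearMap.ker (PowerQuotient.map x t g) ≤ LinearMap.range (PowerQuotient.map x t f) := by
  refine ker_mapQ_le_range_mapQ _ _ ?_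
  rw [← LinearMap.range_eq_top.mpr hg, ← Submodule.map_top, ← Submodule.map_smul'',
    Submodule.comap_map_eq, sup_comm]
  gcongr

theorem exists_rightExact_powerQuotient_update_add (x : Fin d → R) (t : Fin d → ℕ) (i : Fin d)
    (a b : ℕ) :
    ∃ (f : PowerQuotient x (Function.update t i a) M →ₗ[R]
        PowerQuotient x (Function.update t i (a + b)) M)
      (g : PowerQuotient x (Function.update t i (a + b)) M →ₗ[R]
        PowerQuotient x (Function.update t i b) M),
      Function.Surjective g ∧ LinearMap.ker g ≤ LinearMap.range f := by
  have mul_mem : powerIdeal x (Function.update t i a) • (⊤ : Submodule R M) ≤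
      (powerIdeal x (Function.update t i (a + b)) • (⊤ : Submodule R M)).comap
        (LinearMap.lsmul R M (x i ^ b)) := by
    refine powerIdeal_smul_top_le_iff.mpr fun j m => ?_
    rw [Submodule.mem_comap, LinearMap.lsmul_apply]
    obtain rfl | hj := eq_or_ne j i
    · rw [smul_smul, ← pow_add]
      exact pow_smul_mem_powerIdeal_smul_top (by simp [add_comm]) m
    · rw [smul_comm]
      exact pow_smul_mem_powerIdeal_smul_top (by simp [hj]) _
  have le_add : Function.update t i b ≤ Function.update t i (a + b) :=
    update_le_update_iff.mpr ⟨Nat.le_add_left b a, fun _ _ => le_rfl⟩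
  refine ⟨Submodule.mapQ _ _ _ mul_mem,
    Submodule.mapQ _ _ LinearMap.id (powerIdeal_smul_top_anti x le_add),
    mapQ_surjective Function.surjective_id,
    ker_mapQ_le_range_mapQ _ _ (powerIdeal_smul_top_le_iff.mpr fun j m => ?_)⟩
  obtain rfl | hj := eq_or_ne j i
  · exact Submodule.mem_sup_left ⟨m, by simp⟩
  · exact Submodule.mem_sup_right (pow_smul_mem_powerIdeal_smul_top (by simp [hj]) m)

theorem isBoxSubadditive_quasilength_powerQuotient (J : Ideal R) (x : Fin d → R) (M : Type*)
    [AddCommGroup M] [Module R M] :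
    IsBoxSubadditive fun t => quasilength R J (PowerQuotient x t M) where
  mono _ _ hst := quasilength_le_of_surjective
    (Submodule.factor_surjective (powerIdeal_smul_top_anti x hst))
  update_add_le t i a b := by
    obtain ⟨f, g, hg, hfg⟩ := exists_rightExact_powerQuotient_update_add (M := M) x t i a b
    exact quasilength_le_add_of_rightExact hg hfg

theorem isBoxSubadditive_length_powerQuotient (x : Fin d → R) (M : Type*)
    [AddCommGroup M] [Module R M] :
    IsBoxSubadditive fun t => Module.length R (PowerQuotient x t M) where
  mono _ _ hst := Module.length_le_of_surjective _
    (Submodule.factor_surjective (powerIdeal_smul_top_anti x hst))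
  update_add_le t i a b := by
    obtain ⟨f, g, hg, hfg⟩ := exists_rightExact_powerQuotient_update_add (M := M) x t i a b
    exact length_le_add_of_rightExact hg hfg

theorem quasilength_powerQuotient_le_of_span_eq_top {u : Finset M}
    (hu : Submodule.span R (u : Set M) = ⊤) (ht : ∀ i, 0 < t i) :
    quasilength R (Ideal.span (Set.range x)) (PowerQuotient x t M) ≤ (∏ i, t i : ℕ) * u.card := by
  classical
  refine ((isBoxSubadditive_quasilength_powerQuotient (Ideal.span (Set.range x)) x
    M).le_prod_mul_one ht).trans ?_
  gcongr
  set π := (powerIdeal x 1 • (⊤ : Submodule R M)).mkQ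
  have span_image : Submodule.span R ((u.image π : Finset _) : Set (PowerQuotient x 1 M)) = ⊤ := by
    rw [Finset.coe_image, ← Submodule.map_span, hu, Submodule.map_top, Submodule.range_mkQ]
  refine (quasilength_le_card_of_span_eq_top span_image fun a ha m => ?_).trans
    (by exact_mod_cast Finset.card_image_le)
  obtain ⟨m, rfl⟩ := Submodule.mkQ_surjective _ m
  rw [← map_smul, Submodule.mkQ_apply, Submodule.Quotient.mk_eq_zero, powerIdeal_one]
  exact Submodule.smul_mem_smul ha trivial

end PowerQuotient

section Content

variable {R : Type*} [CommRing R] {d : ℕ} {x : Fin d → R} {M : Type*} [AddCommGroup M]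
  [Module R M] {N : Type*} [AddCommGroup N] [Module R N] {C : Type*} [AddCommGroup C] [Module R C]

theorem iInf_le_content (x : Fin d → R) (M : Type*) [AddCommGroup M] [Module R M] (s : ℕ) :
    ⨅ t : {t : Fin d → ℕ // ∀ i, s ≤ t i ∧ 0 < t i},
      (quasilength R (Ideal.span (Set.range x)) (PowerQuotient x t.1 M) : ℝ≥0∞) /
        ∏ i, (t.1 i : ℝ≥0∞) ≤ content x M :=
  le_iSup (fun s : ℕ => ⨅ t : {t : Fin d → ℕ // ∀ i, s ≤ t i ∧ 0 < t i},
    (quasilength R (Ideal.span (Set.range x)) (PowerQuotient x t.1 M) : ℝ≥0∞) /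
      ∏ i, (t.1 i : ℝ≥0∞)) s

theorem prod_natCast_ne_zero {t : Fin d → ℕ} (ht : ∀ i, 0 < t i) :
    ∏ i, (t i : ℝ≥0∞) ≠ 0 :=
  Finset.prod_ne_zero_iff.mpr fun i _ => Nat.cast_ne_zero.mpr (ht i).ne'

theorem prod_natCast_ne_top (t : Fin d → ℕ) : ∏ i, (t i : ℝ≥0∞) ≠ ⊤ :=
  ENNReal.prod_ne_top fun i _ => ENNReal.natCast_ne_top (t i)

theorem content_le_of_quasilength_le {r : ℕ}
    (h : ∀ t : Fin d → ℕ, (∀ i, 0 < t i) →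
      quasilength R (Ideal.span (Set.range x)) (PowerQuotient x t M) ≤ (∏ i, t i : ℕ) * r) :
    content x M ≤ r := by
  refine iSup_le fun s => iInf_le_of_le ⟨fun _ => s + 1, fun _ => ⟨s.le_succ, s.succ_pos⟩⟩ ?_
  refine ENNReal.div_le_of_le_mul' ?_
  have := ENat.toENNReal_le.mpr (h (fun _ => s + 1) fun _ => s.succ_pos)
  simpa using this

theorem le_content_of_le_quasilength {r : ℕ}
    (h : ∀ t : Fin d → ℕ, (∀ i, 0 < t i) →
      ((∏ i, t i : ℕ) : ℕ∞) * r ≤ quasilength R (Ideal.span (Set.range x)) (PowerQuotient x t M)) :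
    r ≤ content x M := by
  refine (le_iInf fun t => ?_).trans (iInf_le_content x M 0)
  rw [ENNReal.le_div_iff_mul_le (.inl (prod_natCast_ne_zero fun i => (t.2 i).2))
    (.inl (prod_natCast_ne_top _)), mul_comm,
    ← Nat.cast_prod]
  simpa [-Nat.cast_prod] using ENat.toENNReal_le.mpr (h t.1 fun i => (t.2 i).2)

/-- The quasilength of `C / I_t C` is `O(t₁ ⋯ t_d / min t)`; such a module does not contribute to
contents. The inequality is multiplied out so that it can be stated in `ℕ∞`. -/
def IsContentNegligible (x : Fin d → R) (C : Type*) [AddCommGroup C] [Module R C] : Prop :=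
  ∃ A : ℕ, ∀ s > 0, ∀ t : Fin d → ℕ, (∀ i, s ≤ t i) →
    (s : ℕ∞) * quasilength R (Ideal.span (Set.range x)) (PowerQuotient x t C) ≤ A * (∏ i, t i : ℕ)

theorem content_le_content_of_rightExact {f : N →ₗ[R] M} {g : M →ₗ[R] C}
    (hg : Function.Surjective g) (hfg : LinearMap.ker g ≤ LinearMap.range f)
    (hC : IsContentNegligible x C) : content x M ≤ content x N := by
  obtain ⟨A, hA⟩ := hC
  refine iSup_le fun s => ?_
  set a : ℕ → ℝ≥0∞ := fun s => ⨅ t : {t : Fin d → ℕ // ∀ i, s ≤ t i ∧ 0 < t i},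
    (quasilength R (Ideal.span (Set.range x)) (PowerQuotient x t.1 M) : ℝ≥0∞) /
      ∏ i, (t.1 i : ℝ≥0∞)
  have a_mono : Monotone a := fun s s' hs => le_iInf fun t =>
    iInf_le_of_le ⟨t.1, fun i => ⟨hs.trans (t.2 i).1, (t.2 i).2⟩⟩ le_rfl
  have a_le (n : ℕ) (hn : 0 < n) : a n ≤ content x N + (A : ℝ≥0∞) / n := by
    refine le_trans ?_ (add_le_add_left (iInf_le_content x N n) _)
    rw [ENNReal.iInf_add]
    refine le_iInf fun t => (iInf_le _ t).trans ?_
    have ql_le : (quasilength R (Ideal.span (Set.range x)) (PowerQuotient x t.1 M) : ℝ≥0∞) ≤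
        quasilength R (Ideal.span (Set.range x)) (PowerQuotient x t.1 N) +
        quasilength R (Ideal.span (Set.range x)) (PowerQuotient x t.1 C) := by
      exact_mod_cast ENat.toENNReal_le.mpr (quasilength_le_add_of_rightExact
        (PowerQuotient.map_surjective hg) (PowerQuotient.ker_map_le_range_map hg hfg))
    have negligible : (quasilength R (Ideal.span (Set.range x)) (PowerQuotient x t.1 C) : ℝ≥0∞) /
        ∏ i, (t.1 i : ℝ≥0∞) ≤ A / n := by
      rw [ENNReal.div_le_iff (prod_natCast_ne_zero fun i => (t.2 i).2) (prod_natCast_ne_top _),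
        ← ENNReal.mul_div_right_comm, ENNReal.le_div_iff_mul_le (by simp [hn.ne']) (by simp),
        mul_comm, ← Nat.cast_prod]
      simpa [-Nat.cast_prod] using ENat.toENNReal_le.mpr (hA n hn t.1 fun i => (t.2 i).1)
    exact (ENNReal.div_le_div_right ql_le _).trans (ENNReal.add_div ▸ by gcongr)
  have lim : Filter.Tendsto (fun n : ℕ => content x N + (A : ℝ≥0∞) / n) Filter.atTop
      (nhds (content x N)) := by
    simpa using tendsto_const_nhds.add
      (ENNReal.Tendsto.const_div ENNReal.tendsto_nat_nhds_top (.inr (ENNReal.natCast_ne_top A)))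
  refine ge_of_tendsto lim (Filter.eventually_atTop.mpr ⟨s + 1, fun n hn => ?_⟩)
  exact (a_mono (Nat.le_of_succ_le hn)).trans (a_le n (Nat.lt_of_succ_le hn |>.pos))

theorem isContentNegligible_of_subsingleton [Subsingleton C] : IsContentNegligible x C := by
  have quasilength_zero (t : Fin d → ℕ) :
      quasilength R (Ideal.span (Set.range x)) (PowerQuotient x t C) = 0 := by
    simpa using quasilength_le_card_of_span_eq_top (S := R) (M := PowerQuotient x t C)
      (J := Ideal.span (Set.range x)) (s := ∅) (Subsingleton.elim _ _)
      fun _ _ _ => Subsingleton.elim _ _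
  exact ⟨0, fun s _ t _ => by simp [quasilength_zero]⟩

theorem isContentNegligible_of_quasilength_le {k B : ℕ} (hk : k < d)
    (h : ∀ s > 0, quasilength R (Ideal.span (Set.range x)) (PowerQuotient x (fun _ => s) C) ≤
      (B * s ^ k : ℕ)) : IsContentNegligible x C := by
  refine ⟨2 ^ d * B, fun s hs t ht => ?_⟩
  have compare : ((s ^ d : ℕ) : ℕ∞) *
        quasilength R (Ideal.span (Set.range x)) (PowerQuotient x t C) ≤
      (2 ^ d * (∏ i, t i) * (B * s ^ k) : ℕ) := by
    have := (isBoxSubadditive_quasilength_powerQuotient (Ideal.span (Set.range x)) x C).mul_prod_le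
      (N := 1) (s := fun _ => s) (t := t) (fun _ => hs) (by simpa using ht)
    refine le_trans (by simpa using this) ?_
    rw [Nat.cast_mul _ (B * s ^ k), Finset.prod_mul_distrib]
    simpa using mul_le_mul_right (h s hs) _
  generalize quasilength R (Ideal.span (Set.range x)) (PowerQuotient x t C) = q at compare ⊢
  induction q using ENat.recTopCoe with
  | top =>
    rw [ENat.mul_top (Nat.cast_ne_zero.mpr (pow_pos hs d).ne'), top_le_iff] at compare
    exact absurd compare (ENat.natCast_ne_top _)
  | coe q =>
    norm_cast at compare ⊢
    refine Nat.le_of_mul_le_mul_left ?_ (pow_pos hs k)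
    calc s ^ k * (s * q) = s ^ (k + 1) * q := by ring
      _ ≤ s ^ d * q := Nat.mul_le_mul_right _ (Nat.pow_le_pow_right hs hk)
      _ ≤ 2 ^ d * (∏ i, t i) * (B * s ^ k) := compare
      _ = s ^ k * (2 ^ d * B * ∏ i, t i) := by ring

end Content

section NegligibleModules

variable {R : Type*} [CommRing R] [IsNoetherianRing R] [IsLocalRing R]

theorem exists_span_range_radical_eq_maximalIdeal {d : ℕ} (h : ringKrullDim R < d) :
    ∃ k < d, ∃ y : Fin k → R,
      (Ideal.span (Set.range y)).radical = IsLocalRing.maximalIdeal R := by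
  obtain ⟨s, hs, hcard⟩ :=
    (IsLocalRing.maximalIdeal R).exists_finset_card_eq_height_of_isNoetherianRing
  refine ⟨s.card, ?_, fun i => s.equivFin.symm i, ?_⟩
  · rw [← IsLocalRing.maximalIdeal_height_eq_ringKrullDim, ← hcard] at h
    exact_mod_cast h
  have range_eq : Set.range (fun i => (s.equivFin.symm i : R)) = s := by
    rw [Set.range_comp' Subtype.val, s.equivFin.symm.range_eq_univ, Set.image_univ,
      Subtype.range_val]
  rw [range_eq]
  refine le_antisymm ((IsLocalRing.maximalIdeal.isMaximal R).isPrime.radical_le_iff.mpr hs.1.2) ?_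
  rw [Ideal.radical_eq_sInf]
  exact le_sInf fun P ⟨hP, hprime⟩ => hs.2 ⟨hprime, hP⟩ (IsLocalRing.le_maximalIdeal hprime.ne_top)

theorem exists_pow_le_sup_span_range {d : ℕ} {𝔞 : Ideal R} (h𝔞 : 𝔞 ≠ ⊤)
    (h : ringKrullDim (R ⧸ 𝔞) < d) :
    ∃ k < d, ∃ y : Fin k → R, (∀ i, y i ∈ IsLocalRing.maximalIdeal R) ∧
      ∃ N, IsLocalRing.maximalIdeal R ^ N ≤ 𝔞 ⊔ Ideal.span (Set.range y) := by
  have : Nontrivial (R ⧸ 𝔞) := Ideal.Quotient.nontrivial_iff.mpr h𝔞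
  have : IsLocalHom (Ideal.Quotient.mk 𝔞) := .of_surjective _ Ideal.Quotient.mk_surjective
  have : IsLocalRing (R ⧸ 𝔞) := .of_surjective' _ Ideal.Quotient.mk_surjective
  have comap_max : (IsLocalRing.maximalIdeal (R ⧸ 𝔞)).comap (Ideal.Quotient.mk 𝔞) =
      IsLocalRing.maximalIdeal R := IsLocalRing.maximalIdeal_comap _
  obtain ⟨k, hk, y, hy⟩ := exists_span_range_radical_eq_maximalIdeal h
  choose z hz using fun i => Ideal.Quotient.mk_surjective (y i)
  obtain rfl : (fun i => Ideal.Quotient.mk 𝔞 (z i)) = y := funext hz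
  rw [Set.range_comp', ← Ideal.map_span] at hy
  rw [← hy, Ideal.comap_radical, Ideal.comap_map_of_surjective _ Ideal.Quotient.mk_surjective,
    ← RingHom.ker_eq_comap_bot, Ideal.mk_ker, sup_comm] at comap_max
  refine ⟨k, hk, z, fun i => ?_, comap_max ▸
    Ideal.exists_radical_pow_le_of_fg _ (IsNoetherian.noetherian _)⟩
  rw [← comap_max]
  exact Ideal.le_radical (Ideal.mem_sup_right (Ideal.subset_span ⟨i, rfl⟩))

theorem isContentNegligible_of_ringKrullDim_lt {d : ℕ} {x : Fin d → R}
    (hx : (Ideal.span (Set.range x)).radical = IsLocalRing.maximalIdeal R)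
    {𝔞 : Ideal R} (h : ringKrullDim (R ⧸ 𝔞) < d) {C : Type*} [AddCommGroup C] [Module R C]
    [Module.Finite R C] (hC : ∀ a ∈ 𝔞, ∀ c : C, a • c = 0) : IsContentNegligible x C := by
  by_cases h𝔞 : 𝔞 = ⊤
  · have : Subsingleton C := subsingleton_of_forall_eq 0 fun c => by
      simpa using hC 1 (h𝔞 ▸ trivial) c
    exact isContentNegligible_of_subsingleton
  obtain ⟨k, hk, y, hy, N, hN⟩ := exists_pow_le_sup_span_range h𝔞 h
  set I := Ideal.span (Set.range x)
  have quasilength_ne_top : quasilength R I (PowerQuotient y 1 C) ≠ ⊤ := by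
    refine quasilength_ne_top_of_pow_smul_eq_bot (n := N) (eq_bot_iff.mpr ?_)
    refine Submodule.smul_le.mpr fun r hr c _ => ?_
    obtain ⟨c, rfl⟩ := Submodule.mkQ_surjective _ c
    obtain ⟨a, ha, b, hb, rfl⟩ := Submodule.mem_sup.mp
      (hN (Ideal.pow_right_mono (Ideal.le_radical.trans hx.le) N hr))
    rw [← map_smul, add_smul, hC a ha, zero_add, Submodule.mem_bot, Submodule.mkQ_apply,
      Submodule.Quotient.mk_eq_zero, powerIdeal_one]
    exact Submodule.smul_mem_smul hb trivial
  obtain ⟨B, hB⟩ := ENat.ne_top_iff_exists.mp quasilength_ne_top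
  obtain ⟨E, hE, pow_mem⟩ := exists_pow_mul_mem_powerIdeal (Nat.zero_lt_of_lt hk) x
  refine isContentNegligible_of_quasilength_le (B := E ^ k * B) hk fun s hs => ?_
  have smul_le : powerIdeal y (fun _ => E * s) • (⊤ : Submodule R C) ≤
      powerIdeal x (fun _ => s) • (⊤ : Submodule R C) :=
    Submodule.smul_mono_left <| Ideal.span_le.mpr <| Set.range_subset_iff.mpr fun i =>
      pow_mem (y i) (hx ▸ hy i) s
  calc quasilength R I (PowerQuotient x (fun _ => s) C)
      ≤ quasilength R I (PowerQuotient y (fun _ => E * s) C) :=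
        quasilength_le_of_surjective (Submodule.factor_surjective smul_le)
    _ ≤ (∏ _ : Fin k, E * s : ℕ) * quasilength R I (PowerQuotient y 1 C) :=
        (isBoxSubadditive_quasilength_powerQuotient I y C).le_prod_mul_one fun _ =>
          Nat.mul_pos hE hs
    _ = (E ^ k * B * s ^ k : ℕ) := by rw [← hB]; simp [mul_pow, mul_right_comm]

end NegligibleModules

/-! ## Systems of polynomial equations with a primitive element -/

section RootSystem

open Polynomial

variable {ι σ T T' : Type*} [CommRing T] [CommRing T']

/-- Evaluation at `(z, θ)` of a polynomial with integer coefficients in the variables indexed by `ι`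
and one further variable, which is singled out because we differentiate and divide with respect to
it. -/
noncomputable def bieval (z : ι → T) (θ : T) : (MvPolynomial ι ℤ)[X] →+* T :=
  eval₂RingHom (MvPolynomial.eval₂Hom (Int.castRingHom T) z) θ

theorem bieval_C (z : ι → T) (θ : T) (c : MvPolynomial ι ℤ) :
    bieval z θ (C c) = MvPolynomial.eval₂Hom (Int.castRingHom T) z c := by
  simp [bieval]

theorem bieval_eq_eval (z : ι → T) (θ : T) (f : (MvPolynomial ι ℤ)[X]) :
    bieval z θ f = (f.map (MvPolynomial.eval₂Hom (Int.castRingHom T) z)).eval θ := by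
  simp [bieval, eval₂_eq_eval_map]

theorem map_bieval (φ : T →+* T') (z : ι → T) (θ : T) (P : (MvPolynomial ι ℤ)[X]) :
    φ (bieval z θ P) = bieval (fun i => φ (z i)) (φ θ) P := by
  have : φ.comp (bieval z θ) = bieval (fun i => φ (z i)) (φ θ) :=
    Polynomial.ringHom_ext'
      (MvPolynomial.ringHom_ext (by simp) fun i => by simp [bieval]) (by simp [bieval])
  exact congrArg (fun h => h P) this

theorem dvd_bieval_sub {g : T} {z z' : ι → T} {θ θ' : T} (hz : ∀ i, g ∣ z i - z' i)
    (hθ : g ∣ θ - θ') (P : (MvPolynomial ι ℤ)[X]) : g ∣ bieval z θ P - bieval z' θ' P := by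
  have hmk : ∀ {a b : T}, g ∣ a - b ↔
      Ideal.Quotient.mk (Ideal.span {g}) a = Ideal.Quotient.mk (Ideal.span {g}) b := by
    simp [Ideal.Quotient.eq, Ideal.mem_span_singleton]
  rw [hmk, map_bieval, map_bieval, hmk.mp hθ, funext fun i => hmk.mp (hz i)]

/-- A system of equations `f(z, θ) = 0`, `c(z) y_s = P_s(z, θ)` over `ℤ`, in unknowns `z`, `θ`, `y`:
`θ` is algebraic over the `z` and the `y_s` are expressed through `z` and `θ` with common
denominator `c`. -/
structure RootSystem (ι σ : Type*) where
  f : (MvPolynomial ι ℤ)[X]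
  c : MvPolynomial ι ℤ
  P : σ → (MvPolynomial ι ℤ)[X]

namespace RootSystem

variable (E : RootSystem ι σ)

/-- `(z, θ, y)` solves the system `E`. -/
structure IsSolution (z : ι → T) (θ : T) (y : σ → T) : Prop where
  bieval_f : bieval z θ E.f = 0
  bieval_P : ∀ s, bieval z θ (C E.c) * y s = bieval z θ (E.P s)

/-- A solution that is a simple root with nonzero denominator, and such that, after inverting the
denominator, every relation between `z` and `θ` is a multiple of `f`. Hence every relation between
the `y_s` carries over to all solutions with nonzero denominator. -/
structure IsGeneric (z : ι → T) (θ : T) (y : σ → T) : Prop extends E.IsSolution z θ y where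
  bieval_derivative_ne_zero : bieval z θ (C E.c * derivative E.f) ≠ 0
  exists_dvd : ∀ Q, bieval z θ Q = 0 → ∃ N : ℕ, E.f ∣ C E.c ^ N * Q

/-- `(z, θ, y)` solves `E` modulo `a² T²`, where `c f'` takes the value `a b` at `(z, θ)`. If `b` is
a unit this is the precision needed to start Newton's method. -/
structure IsApproxSolution (t : T) (z : ι → T) (θ : T) (y : σ → T) (a b : T) : Prop where
  dvd_bieval_f : a ^ 2 * t ^ 2 ∣ bieval z θ E.f
  bieval_derivative : bieval z θ (C E.c * derivative E.f) = a * b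
  dvd_bieval_P : ∀ s, a ^ 2 * t ^ 2 ∣ bieval z θ (C E.c) * y s - bieval z θ (E.P s)

variable {E}

theorem IsSolution.map {z : ι → T} {θ : T} {y : σ → T} (h : E.IsSolution z θ y) (φ : T →+* T') :
    E.IsSolution (fun i => φ (z i)) (φ θ) (fun s => φ (y s)) where
  bieval_f := by rw [← map_bieval, h.bieval_f, map_zero]
  bieval_P s := by rw [← map_bieval, ← map_bieval, ← map_mul, h.bieval_P]

theorem IsApproxSolution.map {t : T} {z : ι → T} {θ : T} {y : σ → T} {a b : T}
    (h : E.IsApproxSolution t z θ y a b) (φ : T →+* T') :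
    E.IsApproxSolution (φ t) (fun i => φ (z i)) (φ θ) (fun s => φ (y s)) (φ a) (φ b) where
  dvd_bieval_f := by simpa [map_bieval] using map_dvd φ h.dvd_bieval_f
  bieval_derivative := by rw [← map_bieval, h.bieval_derivative, map_mul]
  dvd_bieval_P s := by simpa [map_bieval] using map_dvd φ (h.dvd_bieval_P s)

theorem IsSolution.exists_pow_mul_aeval_eq {z : ι → T} {θ : T} {y : σ → T} {z' : ι → T'} {θ' : T'}
    {y' : σ → T'} (h : E.IsSolution z θ y) (h' : E.IsSolution z' θ' y') (Q : MvPolynomial σ ℤ) :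
    ∃ (N : ℕ) (G : (MvPolynomial ι ℤ)[X]),
      bieval z θ (C E.c) ^ N * MvPolynomial.aeval y Q = bieval z θ G ∧
      bieval z' θ' (C E.c) ^ N * MvPolynomial.aeval y' Q = bieval z' θ' G := by
  induction Q using MvPolynomial.induction_on with
  | C n => exact ⟨0, (n : (MvPolynomial ι ℤ)[X]), by simp, by simp⟩
  | add p q hp hq =>
    obtain ⟨N, G, hN, hN'⟩ := hp
    obtain ⟨M, H, hM, hM'⟩ := hq
    refine ⟨N + M, C E.c ^ M * G + C E.c ^ N * H, ?_, ?_⟩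
    · simp only [map_add, map_mul, map_pow, ← hN, ← hM]; ring
    · simp only [map_add, map_mul, map_pow, ← hN', ← hM']; ring
  | mul_X p s hp =>
    obtain ⟨N, G, hN, hN'⟩ := hp
    refine ⟨N + 1, G * E.P s, ?_, ?_⟩
    · rw [map_mul, map_mul, MvPolynomial.aeval_X, ← hN, ← h.bieval_P]; ring
    · rw [map_mul, map_mul, MvPolynomial.aeval_X, ← hN', ← h'.bieval_P]; ring

theorem IsGeneric.aeval_eq_zero [IsDomain T'] {z : ι → T} {θ : T} {y : σ → T} {z' : ι → T'}
    {θ' : T'} {y' : σ → T'} (h : E.IsGeneric z θ y) (h' : E.IsSolution z' θ' y')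
    (hc : bieval z' θ' (C E.c) ≠ 0) {Q : MvPolynomial σ ℤ} (hQ : MvPolynomial.aeval y Q = 0) :
    MvPolynomial.aeval y' Q = 0 := by
  obtain ⟨N, G, hG, hG'⟩ := h.toIsSolution.exists_pow_mul_aeval_eq h' Q
  rw [hQ, mul_zero] at hG
  obtain ⟨M, q, hq⟩ := h.exists_dvd G hG.symm
  have := congrArg (bieval z' θ') hq
  rw [map_mul, map_mul, h'.bieval_f, zero_mul, map_pow, ← hG'] at this
  simpa [hc] using this

theorem IsGeneric.exists_ringHom [IsDomain T'] {z : ι → T} {θ : T} {y : σ → T} {z' : ι → T'}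
    {θ' : T'} {y' : σ → T'} (h : E.IsGeneric z θ y) (hy : Algebra.adjoin ℤ (Set.range y) = ⊤)
    (h' : E.IsSolution z' θ' y') (hc : bieval z' θ' (C E.c) ≠ 0) :
    ∃ ψ : T →+* T', ∀ s, ψ (y s) = y' s := by
  have hπ : Function.Surjective (MvPolynomial.aeval (R := ℤ) y) := by
    rwa [← AlgHom.range_eq_top, ← Algebra.adjoin_range_eq_range_aeval]
  have hker : RingHom.ker (MvPolynomial.aeval (R := ℤ) y).toRingHom ≤
      RingHom.ker (MvPolynomial.aeval (R := ℤ) y').toRingHom :=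
    fun Q hQ => h.aeval_eq_zero h' hc hQ
  refine ⟨AlgHom.liftOfSurjective _ hπ (MvPolynomial.aeval y') hker, fun s => ?_⟩
  have := AlgHom.liftOfSurjective_apply _ hπ _ hker (MvPolynomial.X s)
  rwa [MvPolynomial.aeval_X, MvPolynomial.aeval_X] at this

end RootSystem

end RootSystem

/-! ## Newton's method -/

section Newton

open Polynomial

variable {B : Type*} [CommRing B] (I : Ideal B) [IsAdicComplete I B]

theorem exists_eq_self_of_sub_mem_pow {φ : B → B}
    (hφ : ∀ n a b, a - b ∈ I ^ n → φ a - φ b ∈ I ^ (n + 1)) : ∃ a, φ a = a := by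
  have hstep : ∀ n, φ^[n + 1] 0 - φ^[n] 0 ∈ I ^ n := by
    intro n
    induction n with
    | zero => simp
    | succ n ih =>
      simp only [Function.iterate_succ_apply'] at ih ⊢
      exact hφ _ _ _ ih
  obtain ⟨a, ha⟩ := IsPrecomplete.prec inferInstance (I := I) (f := fun n => φ^[n] 0)
    ((AdicCompletion.isAdicCauchy_iff I B (fun n => φ^[n] 0)).mpr (fun n => by
      rw [SModEq.comm, SModEq.sub_mem]
      simpa only [smul_eq_mul, Ideal.mul_top] using hstep n) ·)
  replace ha : ∀ n, φ^[n] 0 - a ∈ I ^ n := fun n => by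
    simpa only [SModEq.sub_mem, smul_eq_mul, Ideal.mul_top] using ha n
  refine ⟨a, sub_eq_zero.mp (IsHausdorff.haus inferInstance (I := I) _ fun n => ?_)⟩
  have hmem : φ (φ^[n] 0) - φ a ∈ I ^ n := Ideal.pow_le_pow_right n.le_succ (hφ n _ _ (ha n))
  have hmem' : φ^[n + 1] 0 - a ∈ I ^ n := Ideal.pow_le_pow_right n.le_succ (ha (n + 1))
  rw [Function.iterate_succ_apply'] at hmem'
  rw [SModEq.zero, smul_eq_mul, Ideal.mul_top]
  simpa using sub_mem hmem' hmem

theorem exists_eval_add_derivative_eval_mul (F : B[X]) (θ : B) :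
    ∃ G : B[X], ∀ w, F.eval (θ + w) =
      F.eval θ + F.derivative.eval θ * w + w ^ 2 * G.eval w := by
  have : X ^ 2 ∣ taylor θ F - C (F.eval θ) - C (F.derivative.eval θ) * X := by
    rw [X_pow_dvd_iff]
    intro n hn
    interval_cases n <;> simp [taylor_coeff_zero, taylor_coeff_one]
  obtain ⟨G, hG⟩ := this
  refine ⟨G, fun w => ?_⟩
  have := congrArg (eval w) hG
  simp only [eval_sub, taylor_eval, eval_C, eval_mul, eval_X, eval_pow] at this
  rw [add_comm θ]
  linear_combination this

variable {I}

-- Substituting `θ + F'(θ) e v`, a factor `F'(θ)² e` splits off from the Taylor expansion, and the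
-- remaining equation for `v` is a fixed point equation contracting in the `I`-adic topology.
theorem exists_eval_eq_zero_of_eval_eq_sq_mul {F : B[X]} {θ e : B} (he : e ∈ I)
    (h : F.eval θ = F.derivative.eval θ ^ 2 * e) :
    ∃ v, F.eval (θ + F.derivative.eval θ * (e * v)) = 0 := by
  obtain ⟨G, hG⟩ := exists_eval_add_derivative_eval_mul F θ
  set δ := F.derivative.eval θ
  obtain ⟨v, hv⟩ := exists_eq_self_of_sub_mem_pow I
    (φ := fun v => -1 + e * (-X ^ 2 * G.comp (C (δ * e) * X)).eval v) (fun n a b hab => by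
      rw [add_sub_add_left_eq_sub, ← mul_sub, pow_succ']
      exact Ideal.mul_mem_mul he ((I ^ n).mem_of_dvd (sub_dvd_eval_sub a b _) hab))
  refine ⟨v, ?_⟩
  rw [hG, h]
  simp only [eval_mul, eval_neg, eval_pow, eval_X, eval_comp, eval_C] at hv
  rw [mul_assoc δ] at hv
  linear_combination -(δ ^ 2 * e) * hv

theorem RootSystem.IsApproxSolution.exists_isSolution {ι σ : Type*} [IsDomain B]
    {E : RootSystem ι σ} {t : B} {z : ι → B} {θ : B} {y : σ → B} {a b : B}
    (h : E.IsApproxSolution t z θ y a b) (ht : t ∈ I) (ha : a ≠ 0) (hb : IsUnit b) :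
    ∃ (θ' : B) (r : σ → B), bieval z θ' (C E.c) ≠ 0 ∧
      E.IsSolution z θ' (fun s => y s + t ^ 2 * r s) := by
  obtain ⟨b', hb'⟩ := hb.exists_right_inv
  set F := E.f.map (MvPolynomial.eval₂Hom (Int.castRingHom B) z) with hF
  set δ := F.derivative.eval θ with hδ
  set γ := MvPolynomial.eval₂Hom (Int.castRingHom B) z E.c with hγ
  have ha' : a = γ * δ * b' := by
    have := h.bieval_derivative
    rw [map_mul, bieval_C, bieval_eq_eval, ← derivative_map, ← hF, ← hδ, ← hγ] at this
    rw [this, mul_assoc, hb', mul_one]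
  obtain ⟨qf, hqf⟩ := h.dvd_bieval_f
  set e := γ ^ 2 * b' ^ 2 * t ^ 2 * qf with he
  have heI : e ∈ I :=
    Ideal.mul_mem_right _ _ (Ideal.mul_mem_left _ _ (Ideal.pow_mem_of_mem I ht 2 two_pos))
  obtain ⟨v, hv⟩ := exists_eval_eq_zero_of_eval_eq_sq_mul heI (F := F) (θ := θ)
    (by rw [← bieval_eq_eval, hqf, ha']; ring)
  have hP : ∀ s, γ * t ^ 2 ∣ bieval z (θ + δ * (e * v)) (E.P s) - bieval z θ (E.P s) := fun s =>
    dvd_bieval_sub (by simp) ⟨δ * (γ * b' ^ 2 * qf) * v, by rw [he]; ring⟩ _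
  choose r hr using hP
  choose q hq using h.dvd_bieval_P
  refine ⟨θ + δ * (e * v), fun s => r s - γ * δ ^ 2 * b' ^ 2 * q s, ?_, ?_, fun s => ?_⟩
  · rw [bieval_C]
    rintro h0
    exact ha (by rw [ha', hγ, h0, zero_mul, zero_mul])
  · rw [bieval_eq_eval, hv]
  · have hs := hq s
    rw [bieval_C, ← hγ, ha'] at hs
    rw [bieval_C, ← hγ]
    linear_combination hs - hr s

end Newton

/-! ## Weierstrass approximation -/

section Weierstrass

open Polynomial

variable {A : Type*} [CommRing A]

theorem isDistinguishedAt_X (I : Ideal A) : (X : A[X]).IsDistinguishedAt I where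
  mem {n} hn := by
    rcases subsingleton_or_nontrivial A with hA | hA
    · simp [Subsingleton.elim (X : A[X]) 0]
    · simp [show n = 0 by simpa using hn]
  monic := monic_X

theorem dvd_of_coe_dvd_coe {I : Ideal A} [IsAdicComplete I A] {g p : A[X]}
    (hg : g.IsDistinguishedAt I) (h : (g : PowerSeries A) ∣ p) : g ∣ p := by
  have : hg.algEquivQuotient (Ideal.Quotient.mk _ p) = 0 := by
    rw [← Ideal.mem_span_singleton, ← Ideal.Quotient.eq_zero_iff_mem] at h
    simpa using h
  rwa [map_eq_zero_iff _ hg.algEquivQuotient.injective, Ideal.Quotient.eq_zero_iff_mem,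
    Ideal.mem_span_singleton] at this

theorem exists_polynomial_dvd_sub {I : Ideal A} [IsAdicComplete I A] {g : A[X]}
    (hg : g.IsDistinguishedAt I) (φ : PowerSeries A) :
    ∃ p : A[X], (g : PowerSeries A) ∣ φ - p := by
  obtain ⟨q, hq⟩ := hg.algEquivQuotient.surjective (Ideal.Quotient.mk _ φ)
  obtain ⟨p, rfl⟩ := Ideal.Quotient.mk_surjective q
  refine ⟨p, ?_⟩
  rw [← Ideal.mem_span_singleton, ← Ideal.Quotient.eq, ← hq]
  simp

theorem exists_rightInverse_coe_dvd_sub {I : Ideal A} [IsAdicComplete I A] {g : A[X]}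
    (hg : g.IsDistinguishedAt I) :
    ∃ r : PowerSeries A → A[X], (∀ φ, (g : PowerSeries A) ∣ φ - r φ) ∧ ∀ p : A[X], r p = p := by
  choose s hs using exists_polynomial_dvd_sub hg
  refine ⟨fun φ => Function.extend (fun p : A[X] => (p : PowerSeries A)) id s φ, fun φ => ?_,
    fun p => coe_injective A |>.extend_apply id s p⟩
  by_cases hφ : ∃ p : A[X], (p : PowerSeries A) = φ
  · obtain ⟨p, rfl⟩ := hφ
    simp [(coe_injective A).extend_apply]
  · simpa [Function.extend_apply' _ _ _ hφ] using hs φ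

variable [IsLocalRing A]

theorem exists_eq_mul_of_coe_dvd_sub [IsAdicComplete (IsLocalRing.maximalIdeal A) A]
    {D h : PowerSeries A} {a Q : A[X]} (H : D.IsWeierstrassFactorization a h)
    (hQ : ((a ^ 2 * X ^ 2 : A[X]) : PowerSeries A) ∣ D - Q) :
    ∃ b, Q = a * b ∧ IsUnit (b.coeff 0) := by
  have ha := H.isDistinguishedAt
  obtain ⟨w, hw⟩ := hQ
  have hQa : (Q : PowerSeries A) =
      (a : PowerSeries A) * (h - (a : PowerSeries A) * PowerSeries.X ^ 2 * w) := by
    rw [H.eq_mul] at hw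
    push_cast at hw
    linear_combination -hw
  obtain ⟨b, rfl⟩ := dvd_of_coe_dvd_coe ha ⟨_, hQa⟩
  have hb : (b : PowerSeries A) = h - (a : PowerSeries A) * PowerSeries.X ^ 2 * w := by
    rw [Polynomial.coe_mul] at hQa
    exact sub_eq_zero.mp (ha.isWeierstrassDivisorAt'.eq_zero_of_mul_eq (r := 0) (by simp)
      (by rw [mul_sub, hQa]; simp)).1
  refine ⟨b, rfl, ?_⟩
  rw [← Polynomial.coeff_coe, hb, PowerSeries.coeff_zero_eq_constantCoeff]
  simpa using H.isUnit.map PowerSeries.constantCoeff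

variable {ι σ : Type*} {E : RootSystem ι σ}

-- The modulus `a² X²` with `a` the Weierstrass polynomial of `c f'` is distinguished, so that a
-- solution in power series can be approximated by polynomials.
theorem RootSystem.IsSolution.exists_isApproxSolution_polynomial
    [IsAdicComplete (IsLocalRing.maximalIdeal A) A] {z : ι → PowerSeries A} {θ : PowerSeries A}
    {y : σ → PowerSeries A} (h : E.IsSolution z θ y)
    (hD : (bieval z θ (C E.c * derivative E.f)).map (IsLocalRing.residue A) ≠ 0) :
    ∃ (z' : ι → A[X]) (θ' : A[X]) (r : PowerSeries A → A[X]) (a b : A[X]),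
      a.Monic ∧ IsUnit (b.coeff 0) ∧ (∀ p : A[X], r p = p) ∧
      E.IsApproxSolution X z' θ' (fun s => r (y s)) a b := by
  obtain ⟨a, u, H⟩ := PowerSeries.exists_isWeierstrassFactorization hD
  have ha := H.isDistinguishedAt
  have hX := isDistinguishedAt_X (IsLocalRing.maximalIdeal A)
  have hg : (a ^ 2 * X ^ 2).IsDistinguishedAt (IsLocalRing.maximalIdeal A) := by
    rw [pow_two, pow_two]
    exact (ha.mul ha).mul (hX.mul hX)
  obtain ⟨r, hr, hrp⟩ := exists_rightInverse_coe_dvd_sub hg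
  have hcongr : ∀ Q, ((a ^ 2 * X ^ 2 : A[X]) : PowerSeries A) ∣
      bieval z θ Q - (bieval (fun i => r (z i)) (r θ) Q : A[X]) := fun Q => by
    have := map_bieval (coeToPowerSeries.ringHom (R := A)) (fun i => r (z i)) (r θ) Q
    rw [coeToPowerSeries.ringHom_apply] at this
    rw [this]
    exact dvd_bieval_sub (fun i => hr (z i)) (hr θ) Q
  obtain ⟨b, hb, hb0⟩ := exists_eq_mul_of_coe_dvd_sub H (hcongr _)
  refine ⟨fun i => r (z i), r θ, r, a, b, ha.monic, hb0, hrp, ?_, hb, fun s => ?_⟩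
  · have := hcongr E.f
    rw [h.bieval_f, zero_sub, dvd_neg] at this
    exact dvd_of_coe_dvd_coe hg this
  · refine dvd_of_coe_dvd_coe hg ?_
    push_cast
    obtain ⟨u₁, h₁⟩ := hcongr (C E.c)
    obtain ⟨u₂, h₂⟩ := hcongr (E.P s)
    obtain ⟨u₃, h₃⟩ := hr (y s)
    refine ⟨u₂ - u₁ * y s - (bieval (fun i => r (z i)) (r θ) (C E.c) : A[X]) * u₃, ?_⟩
    push_cast at h₁ h₂ h₃ ⊢
    linear_combination h₂ - y s * h₁ -
      (bieval (fun i => r (z i)) (r θ) (C E.c) : A[X]) * h₃ + h.bieval_P s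

end Weierstrass

/-! ## Generic solutions -/

section GenericSolution

open Polynomial IntermediateField

theorem exists_leadingCoeff_pow_mul_eq_mul_add {A : Type*} [CommRing A] [IsDomain A] {f : A[X]}
    (hf : 0 < f.natDegree) (Q : A[X]) :
    ∃ (N : ℕ) (q r : A[X]), C f.leadingCoeff ^ N * Q = f * q + r ∧ r.natDegree < f.natDegree := by
  induction hn : Q.natDegree using Nat.strong_induction_on generalizing Q with
  | _ n ih =>
    subst hn
    rcases lt_or_ge Q.natDegree f.natDegree with hlt | hle
    · exact ⟨0, 0, Q, by simp, hlt⟩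
    obtain ⟨N, q, r, h, hr⟩ := ih _
      (natDegree_cancelLeads_lt_of_natDegree_le_natDegree hle (hf.trans_le hle))
      (f.cancelLeads Q) rfl
    refine ⟨N + 1, q + C f.leadingCoeff ^ N *
      (C Q.leadingCoeff * X ^ (Q.natDegree - f.natDegree)), r, ?_, hr⟩
    simp only [cancelLeads, Nat.sub_eq_zero_of_le hle, pow_zero, mul_one] at h
    linear_combination h

section Minimal

variable {A Ω : Type*} [CommRing A] [CommRing Ω] [Algebra A Ω]

theorem exists_minimal_aeval_eq_zero [Algebra.IsAlgebraic A Ω] (θ : Ω) :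
    ∃ f : A[X], f ≠ 0 ∧ aeval θ f = 0 ∧
      ∀ r : A[X], r.natDegree < f.natDegree → aeval θ r = 0 → r = 0 := by
  obtain ⟨f, ⟨hf, hfθ⟩, hmin⟩ := exists_minimalFor_of_wellFoundedLT
    (fun f : A[X] => f ≠ 0 ∧ aeval θ f = 0) natDegree (Algebra.IsAlgebraic.isAlgebraic θ)
  refine ⟨f, hf, hfθ, fun r hr hrθ => by_contra fun hne => ?_⟩
  exact hr.not_ge (hmin ⟨hne, hrθ⟩ hr.le)

theorem natDegree_pos_of_aeval_eq_zero [FaithfulSMul A Ω] {θ : Ω} {f : A[X]} (hf : f ≠ 0)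
    (hfθ : aeval θ f = 0) : 0 < f.natDegree := by
  refine Nat.pos_of_ne_zero fun h => hf ?_
  rw [eq_C_of_natDegree_eq_zero h, aeval_C,
    map_eq_zero_iff _ (FaithfulSMul.algebraMap_injective A Ω)] at hfθ
  rw [eq_C_of_natDegree_eq_zero h, hfθ, C_0]

theorem aeval_derivative_ne_zero [CharZero A] [IsDomain A] {θ : Ω} {f : A[X]}
    (hf : 0 < f.natDegree) (hmin : ∀ r : A[X], r.natDegree < f.natDegree → aeval θ r = 0 → r = 0) :
    aeval θ (derivative f) ≠ 0 := fun h =>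
  hf.ne' (derivative_eq_zero.mp (hmin _ (natDegree_derivative_lt hf.ne') h))

end Minimal

attribute [local instance] FractionRing.liftAlgebra

section Algebraic

variable (A Ω : Type*) [CommRing A] [IsDomain A] [CommRing Ω] [IsDomain Ω] [Algebra A Ω]
  [FaithfulSMul A Ω] [Algebra.IsAlgebraic A Ω]

theorem finiteDimensional_fractionRing_of_finiteType [Algebra.FiniteType A Ω] :
    FiniteDimensional (FractionRing A) (FractionRing Ω) := by
  have : Algebra.EssFiniteType Ω (FractionRing Ω) := .of_isLocalization _ (nonZeroDivisors Ω)
  have : Algebra.EssFiniteType A (FractionRing Ω) := .comp A Ω _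
  have : Algebra.EssFiniteType (FractionRing A) (FractionRing Ω) := .of_comp A _ _
  exact Algebra.finite_of_essFiniteType_of_isAlgebraic

theorem exists_smul_eq_algebraMap (ω : FractionRing Ω) :
    ∃ (e : A) (w : Ω), e ≠ 0 ∧ e • ω = algebraMap Ω (FractionRing Ω) w := by
  obtain ⟨⟨w, -, e, he, rfl⟩, h⟩ :=
    IsLocalization.surj (Algebra.algebraMapSubmonoid Ω (nonZeroDivisors A)) ω
  refine ⟨e, w, nonZeroDivisors.ne_zero he, ?_⟩
  rw [← h, Algebra.smul_def, mul_comm, IsScalarTower.algebraMap_apply A Ω (FractionRing Ω)]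

theorem exists_adjoin_algebraMap_eq_top [CharZero A] [Algebra.FiniteType A Ω] :
    ∃ θ : Ω, (FractionRing A)⟮algebraMap Ω (FractionRing Ω) θ⟯ = ⊤ := by
  have := finiteDimensional_fractionRing_of_finiteType A Ω
  obtain ⟨θ, hθ⟩ := Field.exists_primitive_element (FractionRing A) (FractionRing Ω)
  obtain ⟨e, w, he, h⟩ := exists_smul_eq_algebraMap A Ω θ
  refine ⟨w, eq_top_iff.mpr (hθ ▸ adjoin_simple_le_iff.mpr ?_)⟩
  have hθw : θ = (algebraMap A (FractionRing A) e)⁻¹ • algebraMap Ω (FractionRing Ω) w := by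
    rw [← h, ← algebraMap_smul (FractionRing A) e, inv_smul_smul₀]
    simpa using he
  rw [hθw]
  exact IntermediateField.smul_mem _ (mem_adjoin_simple_self _ _)

variable {A Ω} in
theorem exists_algebraMap_mul_eq_aeval {θ : Ω}
    (hθ : (FractionRing A)⟮algebraMap Ω (FractionRing Ω) θ⟯ = ⊤) (ω : Ω) :
    ∃ (e : A) (P : A[X]), e ≠ 0 ∧ algebraMap A Ω e * ω = aeval θ P := by
  set θ' := algebraMap Ω (FractionRing Ω) θ
  obtain ⟨g, hg⟩ : ∃ g : (FractionRing A)[X], aeval θ' g = algebraMap Ω (FractionRing Ω) ω := by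
    have : algebraMap Ω (FractionRing Ω) ω ∈ (FractionRing A)⟮θ'⟯.toSubalgebra := by simp [hθ]
    rwa [adjoin_simple_toSubalgebra_of_isAlgebraic
      (Algebra.IsAlgebraic.isAlgebraic (R := FractionRing A) θ'),
      Algebra.adjoin_singleton_eq_range_aeval] at this
  obtain ⟨e, he, h⟩ := IsLocalization.integerNormalization_spec (nonZeroDivisors A) g
  refine ⟨e, IsLocalization.integerNormalization (nonZeroDivisors A) g,
    nonZeroDivisors.ne_zero he, IsFractionRing.injective Ω (FractionRing Ω) ?_⟩
  rw [← aeval_algebraMap_apply, ← aeval_map_algebraMap (FractionRing A), h, map_mul, ← hg,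
    ← IsScalarTower.algebraMap_apply, ← Algebra.smul_def, ← algebraMap_smul (FractionRing A) e g,
    map_smul, algebraMap_smul]

variable {Ω} in
theorem exists_generic_relations [CharZero A] [Algebra.FiniteType A Ω] {σ : Type*} [Finite σ]
    (y : σ → Ω) : ∃ (θ : Ω) (f : A[X]) (c : A) (P : σ → A[X]), aeval θ f = 0 ∧
      (∀ s, aeval θ (C c) * y s = aeval θ (P s)) ∧ aeval θ (C c * derivative f) ≠ 0 ∧
      ∀ Q : A[X], aeval θ Q = 0 → ∃ N : ℕ, f ∣ C c ^ N * Q := by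
  have := Fintype.ofFinite σ
  obtain ⟨θ, hθ⟩ := exists_adjoin_algebraMap_eq_top A Ω
  obtain ⟨f, hf, hfθ, hmin⟩ := exists_minimal_aeval_eq_zero (A := A) θ
  have hdeg := natDegree_pos_of_aeval_eq_zero hf hfθ
  choose e P he hP using fun s => exists_algebraMap_mul_eq_aeval hθ (y s)
  choose g hg using fun s => Finset.dvd_prod_of_mem e (Finset.mem_univ s)
  refine ⟨θ, f, f.leadingCoeff * ∏ s, e s, fun s => C (f.leadingCoeff * g s) * P s, hfθ,
    fun s => ?_, ?_, fun Q hQ => ?_⟩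
  · simp only [map_mul, aeval_C, ← hP, hg s]
    ring
  · rw [map_mul, aeval_C]
    refine mul_ne_zero ?_ (aeval_derivative_ne_zero hdeg hmin)
    simp [hf, Finset.prod_ne_zero_iff, he]
  · obtain ⟨N, q, r, hqr, hr⟩ := exists_leadingCoeff_pow_mul_eq_mul_add hdeg Q
    have hrθ := congrArg (aeval θ) hqr
    rw [map_mul, hQ, mul_zero, map_add, map_mul, hfθ, zero_mul, zero_add] at hrθ
    rw [hmin r hr hrθ.symm, add_zero] at hqr
    refine ⟨N, C (∏ s, e s) ^ N * q, ?_⟩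
    rw [C_mul, mul_pow]
    linear_combination C (∏ s, e s) ^ N * hqr

end Algebraic

namespace RootSystem

variable {Ω : Type*} [CommRing Ω] [IsDomain Ω] [CharZero Ω]

theorem exists_isGeneric [Algebra.FiniteType ℤ Ω] {σ : Type*} [Finite σ]
    (y : σ → Ω) :
    ∃ (t : Set Ω) (E : RootSystem t σ) (z : t → Ω) (θ : Ω), Finite t ∧ E.IsGeneric z θ y := by
  obtain ⟨g, hg⟩ := Algebra.FiniteType.out (R := ℤ) (A := Ω)
  have : Algebra.IsAlgebraic (Algebra.adjoin ℤ (g : Set Ω)) Ω := by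
    rw [hg]
    exact ⟨fun x => isAlgebraic_algebraMap (⟨x, Algebra.mem_top⟩ : (⊤ : Subalgebra ℤ Ω))⟩
  obtain ⟨t, htg, ht⟩ := exists_isTranscendenceBasis_subset (R := ℤ) (g : Set Ω)
  let z : t → Ω := (↑)
  let : Algebra (MvPolynomial t ℤ) Ω := (MvPolynomial.aeval z).toAlgebra
  have : FaithfulSMul (MvPolynomial t ℤ) Ω := (faithfulSMul_iff_algebraMap_injective _ _).mpr ht.1
  have : Algebra.FiniteType (MvPolynomial t ℤ) Ω := .of_restrictScalars_finiteType ℤ _ _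
  have : Algebra.IsAlgebraic (MvPolynomial t ℤ) Ω := by
    have := ht.isAlgebraic
    exact Algebra.IsAlgebraic.of_ringHom_of_comp_eq ht.1.aevalEquiv (RingHom.id Ω)
      ht.1.aevalEquiv.surjective Function.injective_id
      (RingHom.ext fun x => ht.1.algebraMap_aevalEquiv x)
  obtain ⟨θ, f, c, P, hf, hP, hD, hdvd⟩ := exists_generic_relations (MvPolynomial t ℤ) y
  exact ⟨t, ⟨f, c, P⟩, z, θ, g.finite_toSet.subset htg, ⟨hf, hP⟩, hD, hdvd⟩

end RootSystem

end GenericSolution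

/-! ## Power series in several variables -/

section PowerSeries

theorem weight_one_eq_sum {σ : Type*} [Fintype σ] (e : σ →₀ ℕ) :
    Finsupp.weight (1 : σ → ℕ) e = ∑ i, e i := by
  simp [Finsupp.weight_apply, Finsupp.sum_fintype]

theorem eval_smul_of_isHomogeneous {σ R : Type*} [Finite σ] [CommRing R] {p : MvPolynomial σ R}
    {m : ℕ} (hp : p.IsHomogeneous m) (c : R) (x : σ → R) :
    MvPolynomial.eval (c • x) p = c ^ m * MvPolynomial.eval x p := by
  have := Fintype.ofFinite σ
  simp only [MvPolynomial.eval_eq', Finset.mul_sum]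
  refine Finset.sum_congr rfl fun e he => ?_
  have he : ∑ i, e i = m := by
    rw [← hp (MvPolynomial.mem_support_iff.mp he), weight_one_eq_sum]
  simp only [Pi.smul_apply, smul_eq_mul, mul_pow, Finset.prod_mul_distrib,
    Finset.prod_pow_eq_pow_sum, he]
  ring

theorem exists_eval_cons_one_ne_zero {K : Type*} [Field K] [Infinite K] {d m : ℕ}
    {p : MvPolynomial (Fin (d + 1)) K} (hp : p.IsHomogeneous m) (h0 : p ≠ 0) :
    ∃ κ : Fin d → K, MvPolynomial.eval (Fin.cons 1 κ) p ≠ 0 := by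
  by_contra! h
  refine h0 (MvPolynomial.funext_set (fun _ => {0}ᶜ)
    (fun _ => (Set.finite_singleton 0).infinite_compl) fun x hx => ?_)
  have hx0 : x 0 ≠ 0 := hx 0 (Set.mem_univ _)
  have hx : x = x 0 • (Fin.cons 1 fun i => (x 0)⁻¹ * x i.succ : Fin (d + 1) → K) := by
    ext i
    cases i using Fin.cases <;> simp [hx0]
  rw [hx, eval_smul_of_isHomogeneous hp, h, mul_zero, map_zero]

open MvPowerSeries

theorem isHomogeneous_truncFinset_finsuppAntidiag {σ R : Type*} [Fintype σ] [DecidableEq σ]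
    [CommRing R] (m : ℕ) (D : MvPowerSeries σ R) :
    (truncFinset R (Finset.univ.finsuppAntidiag m) D).IsHomogeneous m := fun e he => by
  by_contra hne
  refine he (coeff_truncFinset_eq_zero D fun h => hne ?_)
  rw [weight_one_eq_sum]
  exact (Finset.mem_finsuppAntidiag.mp h).1

section Shear

variable {R : Type*} [CommRing R] {d : ℕ} (κ : Fin d → R)

theorem hasSubst_shear :
    HasSubst (Fin.cons (X 0) fun i => X i.succ + C (κ i) * X 0 :
      Fin (d + 1) → MvPowerSeries (Fin (d + 1)) R) :=
  hasSubst_of_constantCoeff_zero fun i => by cases i using Fin.cases <;> simp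

/-- The change of variables `X₀ ↦ T`, `Xᵢ₊₁ ↦ Xᵢ + κᵢ T`, where the first variable becomes the
variable `T` of power series over the ring of power series in the remaining ones. -/
noncomputable def shear :
    MvPowerSeries (Fin (d + 1)) R →+* PowerSeries (MvPowerSeries (Fin d) R) :=
  (finSuccEquiv R d).toRingHom.comp (substAlgHom (R := R) (hasSubst_shear κ)).toRingHom

theorem shear_apply (D : MvPowerSeries (Fin (d + 1)) R) :
    shear κ D = finSuccEquiv R d (substAlgHom (hasSubst_shear κ) D) := rfl

theorem shear_X_zero : shear κ (X 0) = PowerSeries.X := by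
  rw [shear_apply, substAlgHom_X]
  simp

theorem shear_X_succ (i : Fin d) :
    shear κ (X i.succ) = PowerSeries.C (X i) + PowerSeries.C (C (κ i)) * PowerSeries.X := by
  rw [shear_apply, substAlgHom_X]
  simp

theorem coeff_cons_zero_shear_monomial (m : ℕ) (e : Fin (d + 1) →₀ ℕ) :
    coeff (Finsupp.cons m 0) (e.prod fun s n =>
      (Fin.cons (X 0) fun i => X i.succ + C (κ i) * X 0 :
        Fin (d + 1) → MvPowerSeries (Fin (d + 1)) R) s ^ n) =
      if ∑ i, e i = m then ∏ i, (Fin.cons 1 κ : Fin (d + 1) → R) i ^ e i else 0 := by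
  have hX : ∀ i, PowerSeries.map (constantCoeff (σ := Fin d) (R := R)) (finSuccEquiv R d
      ((Fin.cons (X 0) fun i => X i.succ + C (κ i) * X 0 :
        Fin (d + 1) → MvPowerSeries (Fin (d + 1)) R) i)) =
      PowerSeries.C ((Fin.cons 1 κ : Fin (d + 1) → R) i) * PowerSeries.X := fun i => by
    cases i using Fin.cases <;> simp
  rw [← coeff_coeff_finSuccEquiv, coeff_zero_eq_constantCoeff_apply, ← PowerSeries.coeff_map,
    Finsupp.prod_fintype _ _ (by simp)]
  simp only [map_prod, map_pow, hX, mul_pow, Finset.prod_mul_distrib, Finset.prod_pow_eq_pow_sum]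
  simp only [← map_pow, ← map_prod, PowerSeries.coeff_C_mul, PowerSeries.coeff_X_pow, mul_ite,
    mul_one, mul_zero, eq_comm]

theorem coeff_map_constantCoeff_shear (m : ℕ) (D : MvPowerSeries (Fin (d + 1)) R) :
    PowerSeries.coeff m (PowerSeries.map constantCoeff (shear κ D)) =
      MvPolynomial.eval (Fin.cons 1 κ) (truncFinset R (Finset.univ.finsuppAntidiag m) D) := by
  classical
  rw [PowerSeries.coeff_map, ← coeff_zero_eq_constantCoeff_apply, shear_apply,
    coeff_coeff_finSuccEquiv, coe_substAlgHom, coeff_subst (hasSubst_shear κ), truncFinset_apply,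
    map_sum, finsum_eq_sum_of_support_subset (s := Finset.univ.finsuppAntidiag m)]
  · refine Finset.sum_congr rfl fun e he => ?_
    rw [coeff_cons_zero_shear_monomial, if_pos (Finset.mem_finsuppAntidiag.mp he).1,
      MvPolynomial.eval_monomial, Finsupp.prod_fintype _ _ (by simp), smul_eq_mul]
  · intro e he
    simp only [coeff_cons_zero_shear_monomial, Function.mem_support] at he
    simpa using (ite_ne_right_iff.mp (right_ne_zero_of_smul he)).1

end Shear

theorem exists_map_constantCoeff_shear_ne_zero {K : Type*} [Field K] [Infinite K] {d : ℕ}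
    {D : MvPowerSeries (Fin (d + 1)) K} (hD : D ≠ 0) :
    ∃ κ : Fin d → K, PowerSeries.map constantCoeff (shear κ D) ≠ 0 := by
  obtain ⟨e, he⟩ : ∃ e, coeff e D ≠ 0 := by
    by_contra! h
    exact hD (MvPowerSeries.ext h)
  have he' : e ∈ Finset.univ.finsuppAntidiag (∑ i, e i) := by simp
  obtain ⟨κ, hκ⟩ := exists_eval_cons_one_ne_zero
    (isHomogeneous_truncFinset_finsuppAntidiag (∑ i, e i) D) fun h => he <| by
      rw [← coeff_truncFinset_of_mem D he', h, MvPolynomial.coeff_zero]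
  refine ⟨κ, fun h => hκ ?_⟩
  rw [← coeff_map_constantCoeff_shear, h, map_zero]

theorem ker_constantCoeff_le_span_range_X {R : Type*} [CommRing R] (d : ℕ) :
    RingHom.ker (constantCoeff (σ := Fin d) (R := R)) ≤ Ideal.span (Set.range X) := by
  induction d with
  | zero =>
    intro φ hφ
    have : φ = 0 := by
      ext e
      rw [Subsingleton.elim e 0, coeff_zero_eq_constantCoeff_apply, hφ, map_zero]
    simp [this]
  | succ d ih =>
    intro φ hφ
    set g := finSuccEquiv R d φ with hg
    have hg0 : constantCoeff (PowerSeries.constantCoeff g) = 0 := by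
      rw [← PowerSeries.coeff_zero_eq_constantCoeff_apply, ← coeff_zero_eq_constantCoeff_apply, hg,
        coeff_coeff_finSuccEquiv, Finsupp.cons_zero_zero]
      exact hφ
    have hmem : g ∈ Ideal.span (Set.range fun i => finSuccEquiv R d (X i)) := by
      obtain ⟨q, hq⟩ := PowerSeries.X_dvd_iff.mpr
        (show PowerSeries.constantCoeff (g - PowerSeries.C (PowerSeries.constantCoeff g)) = 0 by
          simp)
      rw [sub_eq_iff_eq_add.mp hq]
      refine add_mem (Ideal.mul_mem_right _ _ (Ideal.subset_span ⟨0, by simp⟩)) ?_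
      have := Ideal.mem_map_of_mem PowerSeries.C (ih hg0)
      rw [Ideal.map_span, ← Set.range_comp] at this
      refine Ideal.span_mono ?_ this
      rintro _ ⟨i, rfl⟩
      exact ⟨i.succ, by simp⟩
    have := Ideal.mem_map_of_mem (finSuccEquiv R d).symm hmem
    rw [Ideal.map_span, ← Set.range_comp] at this
    simpa [hg, Function.comp_def] using this

theorem maximalIdeal_mvPowerSeries_eq_span {K : Type*} [Field K] (d : ℕ) :
    IsLocalRing.maximalIdeal (MvPowerSeries (Fin d) K) = Ideal.span (Set.range X) := by
  have hker : ∀ φ : MvPowerSeries (Fin d) K,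
      φ ∈ IsLocalRing.maximalIdeal _ ↔ φ ∈ RingHom.ker (constantCoeff (R := K)) := by
    simp [MvPowerSeries.isUnit_iff_constantCoeff]
  refine le_antisymm (fun φ h => ker_constantCoeff_le_span_range_X d ((hker φ).mp h)) ?_
  rw [Ideal.span_le]
  rintro _ ⟨i, rfl⟩
  exact (hker _).mpr (by simp)

end PowerSeries

section FiniteType

theorem isJacobsonRing_int : IsJacobsonRing ℤ := by
  rw [isJacobsonRing_iff_prime_eq]
  intro P hP
  rcases eq_or_ne P ⊥ with rfl | h
  · refine eq_bot_iff.mpr fun n hn => by_contra fun h0 => ?_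
    have hunit := Int.isUnit_iff.mp (Ideal.mem_jacobson_bot.mp hn (2 * n))
    have : n ≠ 0 := h0
    have : 0 < n ^ 2 := by positivity
    rcases hunit with h | h <;> nlinarith
  · have := IsPrime.to_maximal_ideal h
    exact Ideal.jacobson_eq_self_of_isMaximal

theorem exists_prime_charP_of_surjective {A F : Type*} [CommRing A] [Algebra.FiniteType ℤ A]
    [Field F] {f : A →+* F} (hf : Function.Surjective f) : ∃ p : ℕ, p.Prime ∧ CharP F p := by
  have : Algebra.FiniteType ℤ F := .of_surjective f.toIntAlgHom hf
  obtain ⟨p, hp⟩ := CharP.exists F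
  refine ⟨p, (CharP.char_is_prime_or_zero F p).resolve_right fun h => ?_, hp⟩
  subst h
  have := CharP.charP_to_charZero F
  have := isJacobsonRing_int
  have := finite_of_finite_type_of_isJacobsonRing ℤ F
  exact Int.not_isField
    (isField_of_isIntegral_of_isField (Int.cast_injective (α := F)) (Field.toIsField F))

end FiniteType

/-! ## Specialization of power series to prime characteristic -/

section Specialization

open Polynomial

theorem exists_subring_mem_lifts {A : Type*} [CommRing A] {P : Set A[X]} (hP : P.Finite) :
    ∃ B : Subring A, Algebra.FiniteType ℤ B ∧ ∀ p ∈ P, p ∈ lifts B.subtype := by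
  have hfin : (⋃ p ∈ P, (p.coeffs : Set A)).Finite := hP.biUnion fun p _ => p.coeffs.finite_toSet
  refine ⟨(Algebra.adjoin ℤ (⋃ p ∈ P, (p.coeffs : Set A))).toSubring,
    (Subalgebra.fg_iff_finiteType _).mp ⟨hfin.toFinset, by simp⟩, fun p hp => ?_⟩
  rw [lifts_iff_coeffs_subset_range]
  exact fun a ha => ⟨⟨a, Algebra.subset_adjoin (Set.mem_biUnion hp ha)⟩, rfl⟩

theorem RootSystem.IsApproxSolution.exists_subring_descent {A ι σ : Type*} [CommRing A] [Finite ι]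
    [Finite σ] {E : RootSystem ι σ} {z : ι → A[X]} {θ : A[X]} {y : σ → A[X]} {a b : A[X]}
    (h : E.IsApproxSolution X z θ y a b) (ha : a.Monic) (hb : IsUnit (b.coeff 0)) {S : Set A}
    (hS : S.Finite) :
    ∃ (B : Subring A) (z' : ι → B[X]) (θ' : B[X]) (y' : σ → B[X]) (a' b' : B[X]),
      Algebra.FiniteType ℤ B ∧ S ⊆ B ∧ a'.Monic ∧ IsUnit (b'.coeff 0) ∧
      (∀ s, (y' s).map B.subtype = y s) ∧ E.IsApproxSolution X z' θ' y' a' b' := by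
  obtain ⟨b₀, hb₀⟩ := hb.exists_right_inv
  obtain ⟨q, hq⟩ := h.dvd_bieval_f
  choose q' hq' using h.dvd_bieval_P
  obtain ⟨B, hB, hlift⟩ := exists_subring_mem_lifts
    (P := {θ, a, b, q} ∪ (Set.range z ∪ (Set.range y ∪ (Set.range q' ∪ C '' insert b₀ S))))
    ((Set.toFinite _).union <| (Set.finite_range z).union <| (Set.finite_range y).union <|
      (Set.finite_range q').union <| (hS.insert b₀).image C)
  simp only [Set.union_def, Set.mem_ofPred_eq, or_imp, forall_and, Set.forall_mem_range,
    Set.forall_mem_image, Set.mem_insert_iff, Set.mem_singleton_iff,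
    forall_eq, Polynomial.mem_lifts] at hlift
  obtain ⟨⟨⟨θ₁, rfl⟩, ⟨a₁, rfl⟩, ⟨b₁, rfl⟩, ⟨q₁, rfl⟩⟩, hz, hy, hq₁, ⟨p₀, hp₀⟩, hS'⟩ := hlift
  choose z₁ hz₁ using hz
  choose y₁ hy₁ using hy
  choose q₁' hq₁' using hq₁
  obtain rfl : (fun i => (z₁ i).map B.subtype) = z := funext hz₁
  have hBinj : Function.Injective B.subtype := Subtype.val_injective
  have hev : ∀ Q, (bieval z₁ θ₁ Q).map B.subtype =
      bieval (fun i => (z₁ i).map B.subtype) (θ₁.map B.subtype) Q :=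
    map_bieval (mapRingHom B.subtype) z₁ θ₁
  have hmem : ∀ {p : B[X]} {s : A}, p.map B.subtype = C s → s ∈ B := fun {p s} hp => by
    rw [← coeff_C_zero (a := s), ← hp, coeff_map]
    exact (p.coeff 0).2
  refine ⟨B, z₁, θ₁, y₁, a₁, b₁, hB, fun s hs => ?_, monic_of_injective hBinj ha, ?_, hy₁,
    ⟨q₁, map_injective _ hBinj ?_⟩, map_injective _ hBinj ?_,
    fun s => ⟨q₁' s, map_injective _ hBinj ?_⟩⟩
  · obtain ⟨p, hp⟩ := hS' s hs
    exact hmem hp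
  · refine .of_mul_eq_one (⟨b₀, hmem hp₀⟩ : B) (hBinj ?_)
    simpa using hb₀
  · simpa [hev] using hq
  · simpa only [hev, Polynomial.map_mul] using h.bieval_derivative
  · simpa [hev, hy₁, hq₁'] using hq' s

theorem RootSystem.IsGeneric.exists_ringHom_powerSeries {ι σ T B A : Type*} [CommRing T]
    [CommRing B] [CommRing A] [IsDomain A] {E : RootSystem ι σ} {z₀ : ι → T} {θ₀ : T} {y₀ : σ → T}
    (h₀ : E.IsGeneric z₀ θ₀ y₀) (hy₀ : Algebra.adjoin ℤ (Set.range y₀) = ⊤)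
    {z : ι → B[X]} {θ : B[X]} {y : σ → B[X]} {a b : B[X]}
    (h : E.IsApproxSolution X z θ y a b) (ha : a.Monic) (hb : IsUnit (b.coeff 0)) (ψ : B →+* A) :
    ∃ (Ψ : T →+* PowerSeries A) (r : σ → PowerSeries A),
      ∀ s, Ψ (y₀ s) = (((y s).map ψ : A[X]) : PowerSeries A) + PowerSeries.X ^ 2 * r s := by
  have h' := h.map ((coeToPowerSeries.ringHom (R := A)).comp (mapRingHom ψ))
  simp only [RingHom.comp_apply, coe_mapRingHom, map_X, coeToPowerSeries.ringHom_apply,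
    coe_X] at h'
  obtain ⟨θ', r, hc, hsol⟩ := h'.exists_isSolution (I := Ideal.span {PowerSeries.X})
    (Ideal.mem_span_singleton_self _) (coe_eq_zero_iff.not.mpr (ha.map ψ).ne_zero)
    (by simpa only [PowerSeries.isUnit_iff_constantCoeff, constantCoeff_coe, coeff_map]
      using hb.map ψ)
  obtain ⟨Ψ, hΨ⟩ := h₀.exists_ringHom hy₀ hsol hc
  exact ⟨Ψ, r, hΨ⟩

theorem span_range_cons_add_eq {R : Type*} [CommRing R] {d : ℕ} {T : R}
    (hT : ∀ r, IsUnit (1 + T * r)) {x y : Fin d → R}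
    (h : Ideal.span (Set.range y) = Ideal.span (Set.range x)) (κ : Fin d → R)
    (r : Fin (d + 1) → R) :
    Ideal.span (Set.range fun i =>
      (Fin.cons T fun i => y i + κ i * T : Fin (d + 1) → R) i + T ^ 2 * r i) =
      Ideal.span (Set.range (Fin.cons T x : Fin (d + 1) → R)) := by
  have hle : ∀ (I : Ideal R) (z : Fin d → R), T ∈ I →
      (Ideal.span (Set.range z) ≤ I ↔ ∀ i : Fin d, z i + κ i * T + T ^ 2 * r i.succ ∈ I) := by
    intro I z hTI
    rw [Ideal.span_le, Set.range_subset_iff]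
    refine forall_congr' fun i => ?_
    rw [SetLike.mem_coe, add_assoc, Ideal.add_mem_iff_left]
    exact add_mem (I.mul_mem_left _ hTI) (I.mul_mem_right _ (I.pow_mem_of_mem hTI 2 two_pos))
  refine le_antisymm ?_ ?_
  · have hTI : T ∈ Ideal.span (Set.range (Fin.cons T x : Fin (d + 1) → R)) :=
      Ideal.subset_span ⟨0, rfl⟩
    rw [Ideal.span_le, Set.range_subset_iff, Fin.forall_fin_succ]
    refine ⟨add_mem hTI (Ideal.mul_mem_right _ _ (Ideal.pow_mem_of_mem _ hTI 2 two_pos)),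
      (hle _ y hTI).mp (h.le.trans (Ideal.span_mono ?_))⟩
    rintro _ ⟨i, rfl⟩
    exact ⟨i.succ, rfl⟩
  · set I := Ideal.span (Set.range fun i =>
      (Fin.cons T fun i => y i + κ i * T : Fin (d + 1) → R) i + T ^ 2 * r i)
    have hmem : ∀ i, (Fin.cons T fun i => y i + κ i * T : Fin (d + 1) → R) i + T ^ 2 * r i ∈ I :=
      fun i => Ideal.subset_span ⟨i, rfl⟩
    have hTI : T ∈ I := by
      have h₀ := hmem 0
      rw [Fin.cons_zero, show T + T ^ 2 * r 0 = T * (1 + T * r 0) by ring] at h₀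
      exact (I.mul_unit_mem_iff_mem (hT _)).mp h₀
    rw [Ideal.span_le, Set.range_subset_iff, Fin.forall_fin_succ]
    exact ⟨hTI, Set.range_subset_iff.mp <| Ideal.span_le.mp <| h.ge.trans <|
      (hle I y hTI).mpr fun i => hmem i.succ⟩

open MvPowerSeries

variable {K : Type*} [Field K] {d : ℕ}

instance : IsDomain (MvPowerSeries (Fin d) K) := NoZeroDivisors.to_isDomain _

theorem RootSystem.IsSolution.exists_subring_isApproxSolution {ι σ : Type*} [Finite ι] [Finite σ]
    {E : RootSystem ι σ} {z : ι → MvPowerSeries (Fin (d + 1)) K}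
    {θ : MvPowerSeries (Fin (d + 1)) K} {y : σ → MvPowerSeries (Fin (d + 1)) K}
    (h : E.IsSolution z θ y) {κ : Fin d → K} (hκ : PowerSeries.map MvPowerSeries.constantCoeff
      (shear κ (bieval z θ (Polynomial.C E.c * derivative E.f))) ≠ 0) :
    ∃ (B : Subring (MvPowerSeries (Fin d) K)) (z' : ι → B[X]) (θ' : B[X]) (y' : σ → B[X])
      (a b : B[X]), Algebra.FiniteType ℤ B ∧ (∀ i, X i ∈ B) ∧ (∀ i, MvPowerSeries.C (κ i) ∈ B) ∧
      a.Monic ∧ IsUnit (b.coeff 0) ∧ E.IsApproxSolution Polynomial.X z' θ' y' a b ∧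
      ∀ s (p : B[X]), shear κ (y s) = (p.map B.subtype : (MvPowerSeries (Fin d) K)[X]) →
        y' s = p := by
  have : IsAdicComplete (IsLocalRing.maximalIdeal (MvPowerSeries (Fin d) K))
      (MvPowerSeries (Fin d) K) := by
    rw [maximalIdeal_mvPowerSeries_eq_span]
    infer_instance
  have hres : (shear κ (bieval z θ (Polynomial.C E.c * derivative E.f))).map
      (IsLocalRing.residue _) ≠ 0 := fun h₀ => hκ <| by
    ext n
    have hn := congrArg (PowerSeries.coeff n) h₀
    rw [PowerSeries.coeff_map, map_zero, IsLocalRing.residue_eq_zero_iff,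
      IsLocalRing.mem_maximalIdeal, mem_nonunits_iff, MvPowerSeries.isUnit_iff_constantCoeff,
      isUnit_iff_ne_zero, not_not] at hn
    rwa [PowerSeries.coeff_map, map_zero]
  rw [map_bieval] at hres
  obtain ⟨z₁, θ₁, r, a₁, b₁, ha₁, hb₁, hr, h₁⟩ :=
    (h.map (shear κ)).exists_isApproxSolution_polynomial hres
  obtain ⟨B, z', θ', y', a, b, hB, hS, ha, hb, hy', h'⟩ := h₁.exists_subring_descent ha₁ hb₁
    ((Set.finite_range X).union (Set.finite_range fun i => MvPowerSeries.C (κ i)))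
  refine ⟨B, z', θ', y', a, b, hB, fun i => hS (.inl ⟨i, rfl⟩), fun i => hS (.inr ⟨i, rfl⟩), ha, hb,
    h', fun s p hp => map_injective B.subtype Subtype.val_injective ?_⟩
  rw [hy', hp, hr]

theorem span_range_finSuccEquiv_symm_eq {y : Fin d → MvPowerSeries (Fin d) K}
    (hy : Ideal.span (Set.range y) = Ideal.span (Set.range X)) (κ : Fin d → MvPowerSeries (Fin d) K)
    {u : Fin (d + 1) → PowerSeries (MvPowerSeries (Fin d) K)}
    (r : Fin (d + 1) → PowerSeries (MvPowerSeries (Fin d) K))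
    (hu₀ : u 0 = PowerSeries.X + PowerSeries.X ^ 2 * r 0)
    (hu : ∀ i : Fin d, u i.succ = PowerSeries.C (y i) + PowerSeries.C (κ i) * PowerSeries.X +
      PowerSeries.X ^ 2 * r i.succ) :
    Ideal.span (Set.range fun i => (finSuccEquiv K d).symm (u i)) = Ideal.span (Set.range X) := by
  have hC := congrArg (Ideal.map (PowerSeries.C (R := MvPowerSeries (Fin d) K))) hy
  simp only [Ideal.map_span, ← Set.range_comp] at hC
  have hspan := span_range_cons_add_eq (T := PowerSeries.X) (fun r => by
    rw [PowerSeries.isUnit_iff_constantCoeff]; simp) hC (fun i => PowerSeries.C (κ i)) r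
  have hsymm := congrArg (Ideal.map (finSuccEquiv K d).symm) <|
    (congrArg (fun u => Ideal.span (Set.range u)) (funext (Fin.cases hu₀ hu))).trans hspan
  simp only [Ideal.map_span, ← Set.range_comp] at hsymm
  refine hsymm.trans ?_
  congr 2
  funext i
  refine (AlgEquiv.symm_apply_eq _).mpr ?_
  cases i using Fin.cases <;> simp

theorem exists_ringHom_span_eq_succ [CharZero K]
    {A : Subring (MvPowerSeries (Fin (d + 1)) K)} [Algebra.FiniteType ℤ A] {x : Fin (d + 1) → A}
    (hx : ∀ i, (x i : MvPowerSeries (Fin (d + 1)) K) = X i) :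
    ∃ (B : Subring (MvPowerSeries (Fin d) K)) (y : Fin d → B), Algebra.FiniteType ℤ B ∧
      (∀ i, (y i : MvPowerSeries (Fin d) K) = X i) ∧
      ∀ {F : Type v} [Field F] (ψ : B →+* MvPowerSeries (Fin d) F),
        Ideal.span (Set.range fun i => ψ (y i)) = Ideal.span (Set.range X) →
        ∃ Ψ : A →+* MvPowerSeries (Fin (d + 1)) F,
          Ideal.span (Set.range fun i => Ψ (x i)) = Ideal.span (Set.range X) := by
  have : CharZero (MvPowerSeries (Fin (d + 1)) K) :=
    charZero_of_injective_algebraMap (R := K) (FaithfulSMul.algebraMap_injective _ _)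
  obtain ⟨S, hS⟩ := Algebra.FiniteType.out (R := ℤ) (A := A)
  let y : (S ∪ Set.range x : Set A) → A := Subtype.val
  have hy : Algebra.adjoin ℤ (Set.range y) = ⊤ :=
    top_le_iff.mp (hS.ge.trans (Algebra.adjoin_mono
      (Subtype.range_val.ge.trans' Set.subset_union_left)))
  obtain ⟨t, E, z, θ, ht, hE⟩ := RootSystem.exists_isGeneric y
  obtain ⟨κ, hκ⟩ := exists_map_constantCoeff_shear_ne_zero
    (Subtype.coe_ne_coe.mpr hE.bieval_derivative_ne_zero)
  rw [← A.subtype_apply, map_bieval] at hκ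
  obtain ⟨B, z', θ', y', a, b, hB, hX, hC, ha, hb, happrox, hy'⟩ :=
    (hE.map A.subtype).exists_subring_isApproxSolution hκ
  let w : Fin (d + 1) → (S ∪ Set.range x : Set A) := fun i => ⟨x i, .inr ⟨i, rfl⟩⟩
  have hw₀ : y' (w 0) = Polynomial.X := hy' _ _ <| by
    simp [w, y, hx, shear_X_zero]
  have hw : ∀ i : Fin d, y' (w i.succ) =
      Polynomial.C ⟨X i, hX i⟩ + Polynomial.C ⟨MvPowerSeries.C (κ i), hC i⟩ * Polynomial.X :=
    fun i => hy' _ _ <| by simp [w, y, hx, shear_X_succ]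
  refine ⟨B, fun i => ⟨X i, hX i⟩, hB, fun i => rfl, fun {F} _ ψ hψ => ?_⟩
  obtain ⟨Ψ, r, hΨ⟩ := hE.exists_ringHom_powerSeries hy happrox ha hb ψ
  refine ⟨(finSuccEquiv F d).symm.toRingHom.comp Ψ, span_range_finSuccEquiv_symm_eq hψ
    (fun i => ψ ⟨MvPowerSeries.C (κ i), hC i⟩) (fun i => r (w i)) ?_ fun i => ?_⟩
  · exact (hΨ (w 0)).trans (by simp [hw₀])
  · exact (hΨ (w i.succ)).trans (by simp [hw])

theorem exists_ringHom_span_eq {K : Type u} [Field K] [CharZero K] {d : ℕ}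
    (A : Subring (MvPowerSeries (Fin d) K)) [Algebra.FiniteType ℤ A] (x : Fin d → A)
    (hx : ∀ i, (x i : MvPowerSeries (Fin d) K) = X i) :
    ∃ (p : ℕ) (F : Type u) (_ : Field F) (ψ : A →+* MvPowerSeries (Fin d) F),
      p.Prime ∧ CharP F p ∧ Ideal.span (Set.range fun i => ψ (x i)) = Ideal.span (Set.range X) := by
  induction d with
  | zero =>
    obtain ⟨𝔪, h𝔪⟩ := Ideal.exists_maximal A
    let _ := Ideal.Quotient.field 𝔪
    obtain ⟨p, hp, hF⟩ := exists_prime_charP_of_surjective (Ideal.Quotient.mk_surjective (I := 𝔪))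
    exact ⟨p, A ⧸ 𝔪, inferInstance, MvPowerSeries.C.comp (Ideal.Quotient.mk 𝔪), hp, hF, by
      simp [Set.range_eq_empty]⟩
  | succ d ih =>
    obtain ⟨B, y, hB, hy, h⟩ := exists_ringHom_span_eq_succ hx
    obtain ⟨p, F, hF, ψ, hp, hF', hψ⟩ := ih B y hy
    obtain ⟨Ψ, hΨ⟩ := h ψ hψ
    exact ⟨p, F, hF, Ψ, hp, hF', hΨ⟩

end Specialization

/-! ## Integral extensions of power series rings -/

section IntegralDescent

open IsLocalRing

theorem ringKrullDim_le_of_isIntegral {A B : Type*} [CommRing A] [CommRing B] [Algebra A B]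
    [Algebra.IsIntegral A B] [FaithfulSMul A B] : ringKrullDim A ≤ ringKrullDim B := by
  refine iSup_le fun l => ?_
  obtain ⟨⟨Q, hQ, hQl⟩⟩ := Ideal.nonempty_primesOver (S := B) l.head.asIdeal
  obtain ⟨L, hL, -, -⟩ := Ideal.exists_ltSeries_of_hasGoingUp (S := B) l Q
  exact hL ▸ Order.LTSeries.length_le_krullDim L

theorem exists_ringHom_comp_algebraMap_eq {B C L : Type*} [CommRing B] [CommRing C] [Algebra B C]
    [Algebra.IsIntegral B C] [FaithfulSMul B C] [Field L] [IsAlgClosed L] (f : B →+* L) :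
    ∃ g : C →+* L, g.comp (algebraMap B C) = f := by
  have := RingHom.ker_isPrime f
  obtain ⟨⟨Q, hQ, hQf⟩⟩ := Ideal.nonempty_primesOver (S := C) (RingHom.ker f)
  let _ : Algebra (B ⧸ RingHom.ker f) L := (RingHom.kerLift f).toAlgebra
  have : FaithfulSMul (B ⧸ RingHom.ker f) L :=
    (faithfulSMul_iff_algebraMap_injective _ _).2 (RingHom.kerLift_injective f)
  have : Module.IsTorsionFree (B ⧸ RingHom.ker f) L := Module.isTorsionFree_iff_faithfulSMul.2 this
  have : Module.IsTorsionFree (B ⧸ RingHom.ker f) (C ⧸ Q) :=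
    Module.isTorsionFree_iff_faithfulSMul.2 inferInstance
  have : Algebra.IsAlgebraic (B ⧸ RingHom.ker f) (C ⧸ Q) := Algebra.IsIntegral.isAlgebraic
  let g : C ⧸ Q →ₐ[B ⧸ RingHom.ker f] L := IsAlgClosed.lift
  exact ⟨(g : C ⧸ Q →+* L).comp (Ideal.Quotient.mk Q),
    RingHom.ext fun b => g.commutes (Ideal.Quotient.mk _ b)⟩

theorem natCast_le_ringKrullDim_mvPowerSeries (F : Type*) [Field F] (d : ℕ) :
    (d : WithBot ℕ∞) ≤ ringKrullDim (MvPowerSeries (Fin d) F) := by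
  induction d with
  | zero => exact_mod_cast ringKrullDim_nonneg_of_nontrivial
  | succ d ih =>
    rw [ringKrullDim_eq_of_ringEquiv (MvPowerSeries.finSuccEquiv F d).toRingEquiv]
    refine le_trans ?_ ringKrullDim_succ_le_ringKrullDim_powerseries
    push_cast
    gcongr

theorem exists_isMaximal_natCast_le_height {R : Type*} [CommRing R] {d : ℕ}
    (h : (d : WithBot ℕ∞) ≤ ringKrullDim R) : ∃ 𝔫 : Ideal R, 𝔫.IsMaximal ∧ (d : ℕ∞) ≤ 𝔫.height := by
  obtain ⟨l, rfl⟩ := Order.le_krullDim_iff.mp h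
  obtain ⟨𝔫, h𝔫, hle⟩ := Ideal.exists_le_maximal _ l.last.isPrime.ne_top
  refine ⟨𝔫, h𝔫, le_trans ?_ (Ideal.height_mono hle)⟩
  rw [PrimeSpectrum.height_eq_orderHeight]
  exact Order.length_le_height_last

theorem radical_map_maximalIdeal_localizationAtPrime {A B : Type*} [CommRing A] [IsLocalRing A]
    [CommRing B] [Algebra A B] [Algebra.IsIntegral A B] (𝔫 : Ideal B) [h𝔫 : 𝔫.IsMaximal] :
    ((maximalIdeal A).map (algebraMap A (Localization.AtPrime 𝔫))).radical =
      maximalIdeal (Localization.AtPrime 𝔫) := by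
  have hcomap : 𝔫.comap (algebraMap A B) = maximalIdeal A :=
    eq_maximalIdeal (Ideal.isMaximal_comap_of_isIntegral_of_isMaximal 𝔫)
  rw [IsScalarTower.algebraMap_eq A B, ← Ideal.map_map]
  apply le_antisymm
  · refine (Ideal.IsPrime.radical_le_iff inferInstance).2 ?_
    rw [← Localization.AtPrime.map_eq_maximalIdeal]
    exact Ideal.map_mono (Ideal.map_le_iff_le_comap.2 hcomap.ge)
  · rw [Ideal.radical_eq_sInf]
    refine le_sInf fun P ⟨hle, hP⟩ => ?_
    have hle' : maximalIdeal A ≤ (P.under B).comap (algebraMap A B) := by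
      rwa [Ideal.map_le_iff_le_comap, Ideal.map_le_iff_le_comap] at hle
    have hmax : ((P.under B).comap (algebraMap A B)).IsMaximal :=
      (maximalIdeal.isMaximal A).eq_of_le (Ideal.IsPrime.comap _).ne_top hle' ▸ inferInstance
    have hPn : P.under B = 𝔫 :=
      (Ideal.isMaximal_of_isIntegral_of_isMaximal_comap _ hmax).eq_of_le h𝔫.ne_top fun b hb =>
        (IsLocalization.AtPrime.to_map_mem_maximal_iff (Localization.AtPrime 𝔫) 𝔫 b).1
          (le_maximalIdeal hP.ne_top hb)
    rw [← IsLocalization.map_under 𝔫.primeCompl (Localization.AtPrime 𝔫) P, hPn,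
      Localization.AtPrime.map_eq_maximalIdeal]

theorem adjoin_int_le_of_subset {A : Type*} [CommRing A] {G : Set A} {S : Subring A} (h : G ⊆ S) :
    ∀ a ∈ Algebra.adjoin ℤ G, a ∈ S :=
  fun _ ha => Algebra.adjoin_le (S := subalgebraOfSubring S) h ha

theorem exists_subring_isIntegralElem {S R A : Type*} [CommRing S] [CommRing R] [CommRing A]
    [Algebra.FiniteType ℤ A] {e : S →+* R} (he : e.IsIntegral) (φ : A →+* R) {T : Set S}
    (hT : T.Finite) :
    ∃ B : Subring S, Algebra.FiniteType ℤ B ∧ T ⊆ B ∧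
      ∀ a, (e.comp B.subtype).IsIntegralElem (φ a) := by
  obtain ⟨G, hG⟩ := Algebra.FiniteType.out (R := ℤ) (A := A)
  choose P hPm hP using fun a => he (φ a)
  obtain ⟨B, hB, hmem⟩ := exists_subring_mem_lifts
    (P := P '' G ∪ Polynomial.C '' T) ((G.finite_toSet.image P).union (hT.image _))
  refine ⟨B, hB, fun s hs => ?_, fun a => ?_⟩
  · obtain ⟨c, hc⟩ := (Polynomial.lifts_iff_coeff_lifts _).1 (hmem _ (.inr ⟨s, hs, rfl⟩)) 0
    rw [Polynomial.coeff_C_zero] at hc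
    exact hc ▸ c.2
  · let _ : Algebra B R := (e.comp B.subtype).toAlgebra
    refine adjoin_int_le_of_subset (S := (integralClosure B R).toSubring.comap φ)
      (fun g hg => ?_) a (hG.ge trivial)
    obtain ⟨q, hq, -, hqm⟩ :=
      Polynomial.lifts_and_natDegree_eq_and_monic (hmem _ (.inl ⟨g, hg, rfl⟩)) (hPm g)
    exact ⟨q, hqm, (Polynomial.eval₂_map _ _ _).symm.trans (hq ▸ hP g)⟩

theorem exists_finite_subalgebra_forall_mem {A A' L : Type*} [CommRing A] [Algebra.FiniteType ℤ A]
    [CommRing A'] [CommRing L] [Algebra A' L] (h : A →+* L) (hint : ∀ a, IsIntegral A' (h a)) :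
    ∃ R' : Subalgebra A' L, Module.Finite A' R' ∧ ∀ a, h a ∈ R' := by
  obtain ⟨G, hG⟩ := Algebra.FiniteType.out (R := ℤ) (A := A)
  refine ⟨Algebra.adjoin A' (h '' G),
    Algebra.finite_adjoin_of_finite_of_isIntegral (G.finite_toSet.image h)
      (Set.forall_mem_image.2 fun g _ => hint g), fun a => ?_⟩
  exact adjoin_int_le_of_subset (S := (Algebra.adjoin A' (h '' G)).toSubring.comap h)
    (fun g hg => Algebra.subset_adjoin ⟨g, hg, rfl⟩) a (hG.ge trivial)

open MvPowerSeries

/- An integral extension of a ring of power series only involves finitely many power series when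
restricted to a finitely generated ring; specializing these to characteristic `p` and extending
to an algebraically closed field gives the analogous extension in characteristic `p`. -/
theorem exists_finite_subalgebra_ringHom {K : Type u} [Field K] [CharZero K] {d : ℕ}
    {R A : Type*} [CommRing R] [CommRing A] [Algebra.FiniteType ℤ A]
    {e : MvPowerSeries (Fin d) K →+* R} (he : Function.Injective e) (hint : e.IsIntegral)
    (φ : A →+* R) {x : Fin d → A} (hx : ∀ i, φ (x i) = e (X i)) :
    ∃ (p : ℕ) (F : Type u) (_ : Field F)
      (R' : Subalgebra (MvPowerSeries (Fin d) F)
        (AlgebraicClosure (FractionRing (MvPowerSeries (Fin d) F)))) (ψ : A →+* R'),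
      p.Prime ∧ CharP F p ∧ Module.Finite (MvPowerSeries (Fin d) F) R' ∧
      Ideal.span (Set.range fun i => ψ (x i)) =
        (Ideal.span (Set.range X)).map (algebraMap (MvPowerSeries (Fin d) F) R') := by
  obtain ⟨B, hB, hX, hφ⟩ := exists_subring_isIntegralElem hint φ (Set.finite_range X)
  obtain ⟨p, F, _, σ, hp, hF, hσ⟩ :=
    exists_ringHom_span_eq B (fun i => ⟨X i, hX ⟨i, rfl⟩⟩) fun _ => rfl
  let _ : Algebra B R := (e.comp B.subtype).toAlgebra
  have : FaithfulSMul B (integralClosure B R) :=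
    (faithfulSMul_iff_algebraMap_injective _ _).2 fun a b h =>
      Subtype.ext (he (congrArg Subtype.val h))
  let L := AlgebraicClosure (FractionRing (MvPowerSeries (Fin d) F))
  obtain ⟨g, hg⟩ := exists_ringHom_comp_algebraMap_eq (C := integralClosure B R)
    ((algebraMap (MvPowerSeries (Fin d) F) L).comp σ)
  let φ' : A →+* integralClosure B R := φ.codRestrict (integralClosure B R) hφ
  obtain ⟨R', hR', hmem⟩ := exists_finite_subalgebra_forall_mem
    (A' := MvPowerSeries (Fin d) F) (g.comp φ') fun a => by
      obtain ⟨q, hqm, hq⟩ := Algebra.IsIntegral.isIntegral (R := B) (φ' a)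
      refine ⟨q.map σ, hqm.map _, ?_⟩
      rw [Polynomial.eval₂_map, ← hg, RingHom.comp_apply, ← Polynomial.hom_eval₂, hq, map_zero]
  refine ⟨p, F, _, R', (g.comp φ').codRestrict R' hmem, hp, hF, hR', ?_⟩
  rw [← hσ, Ideal.map_span, ← Set.range_comp]
  congr 2
  funext i
  apply Subtype.ext
  have hxi : φ' (x i) = algebraMap B _ ⟨X i, hX ⟨i, rfl⟩⟩ := Subtype.ext (hx i)
  exact (congrArg g hxi).trans (RingHom.congr_fun hg _)

theorem exists_ringHom_isLocalRing_of_isIntegral {K : Type u} [Field K] [CharZero K] {d : ℕ}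
    {R A : Type*} [CommRing R] [CommRing A] [Algebra.FiniteType ℤ A]
    {e : MvPowerSeries (Fin d) K →+* R} (he : Function.Injective e) (hint : e.IsIntegral)
    (φ : A →+* R) {x : Fin d → A} (hx : ∀ i, φ (x i) = e (X i)) :
    ∃ (p : ℕ) (D : Type u) (_ : CommRing D) (_ : IsDomain D) (_ : IsNoetherianRing D)
      (_ : IsLocalRing D) (ψ : A →+* D), p.Prime ∧ CharP D p ∧
      (d : WithBot ℕ∞) ≤ ringKrullDim D ∧
      (Ideal.span (Set.range fun i => ψ (x i))).radical = maximalIdeal D := by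
  obtain ⟨p, F, _, R', ψ, hp, hF, hfin, hψ⟩ := exists_finite_subalgebra_ringHom he hint φ hx
  have : FaithfulSMul (MvPowerSeries (Fin d) F)
      (AlgebraicClosure (FractionRing (MvPowerSeries (Fin d) F))) :=
    FaithfulSMul.trans _ (FractionRing (MvPowerSeries (Fin d) F)) _
  have : IsNoetherianRing R' := IsNoetherianRing.of_finite (MvPowerSeries (Fin d) F) R'
  obtain ⟨𝔫, h𝔫, hdim⟩ := exists_isMaximal_natCast_le_height
    ((natCast_le_ringKrullDim_mvPowerSeries F d).trans (ringKrullDim_le_of_isIntegral (B := R')))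
  have h𝔫' : 𝔫.primeCompl ≤ nonZeroDivisors R' := 𝔫.primeCompl_le_nonZeroDivisors
  have : IsDomain (Localization.AtPrime 𝔫) := IsLocalization.isDomain_localization h𝔫'
  refine ⟨p, Localization.AtPrime 𝔫, inferInstance, inferInstance,
    IsLocalization.isNoetherianRing 𝔫.primeCompl _ inferInstance, inferInstance,
    (algebraMap R' _).comp ψ, hp, ?_, ?_, ?_⟩
  · exact charP_of_injective_ringHom
      ((algebraMap (MvPowerSeries (Fin d) F) (Localization.AtPrime 𝔫)).comp C).injective p
  · rw [IsLocalization.AtPrime.ringKrullDim_eq_height 𝔫]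
    exact_mod_cast hdim
  · rw [← radical_map_maximalIdeal_localizationAtPrime (A := MvPowerSeries (Fin d) F),
      IsScalarTower.algebraMap_eq (MvPowerSeries (Fin d) F) R', ← Ideal.map_map,
      maximalIdeal_mvPowerSeries_eq_span, ← hψ, Ideal.map_span, ← Set.range_comp]
    rfl

end IntegralDescent

/-! ## Noether normalization of complete local rings -/

section CompleteLocal

open IsLocalRing

theorem mem_smul_top_pi_iff {A ι : Type*} [CommRing A] [Finite ι] (J : Ideal A) (v : ι → A) :
    v ∈ J • (⊤ : Submodule A (ι → A)) ↔ ∀ i, v i ∈ J := by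
  classical
  refine ⟨fun h i => ?_, fun h => ?_⟩
  · have := Submodule.mem_map_of_mem (f := LinearMap.proj (R := A) (φ := fun _ : ι => A) i) h
    rw [Submodule.map_smul''] at this
    exact Submodule.smul_le.2 (fun r hr n _ => J.mul_mem_right n hr) this
  · have := Fintype.ofFinite ι
    rw [pi_eq_sum_univ v]
    exact Submodule.sum_mem _ fun i _ => Submodule.smul_mem_smul (h i) trivial

theorem isPrecomplete_pi {A ι : Type*} [CommRing A] [Finite ι] (J : Ideal A) [IsPrecomplete J A] :
    IsPrecomplete J (ι → A) := by
  refine ⟨fun f hf => ?_⟩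
  simp only [SModEq.sub_mem, mem_smul_top_pi_iff] at hf
  choose L hL using fun i => IsPrecomplete.prec ‹_› (f := fun n => f n i) fun {m n} hmn => by
    rw [SModEq.sub_mem]
    simpa using hf hmn i
  refine ⟨L, fun n => ?_⟩
  rw [SModEq.sub_mem, mem_smul_top_pi_iff]
  intro i
  simpa using SModEq.sub_mem.1 (hL i n)

theorem eq_top_of_sup_smul_top_eq_top_of_isPrecomplete {A M : Type*} [CommRing A] [AddCommGroup M]
    [Module A M] {J : Ideal A} [IsPrecomplete J A] [IsHausdorff J M] {N : Submodule A M}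
    (hN : N.FG) (h : N ⊔ J • ⊤ = ⊤) : N = ⊤ := by
  obtain ⟨m, t, rfl⟩ := Submodule.fg_iff_exists_fin_generating_family.1 hN
  have : IsPrecomplete J (Fin m → A) := isPrecomplete_pi J
  rw [← Fintype.range_linearCombination, LinearMap.range_eq_top]
  refine surjective_of_mkQ_comp_surjective (I := J) (LinearMap.range_eq_top.1 ?_)
  rw [LinearMap.range_comp, Fintype.range_linearCombination]
  rwa [Submodule.map_mkQ_eq_top, sup_comm]

theorem exists_fg_sup_pow_eq_top {A S : Type*} [CommRing A] [CommRing S] [Algebra A S]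
    {I : Ideal S} (hI : I.FG) (h : ∀ r : S, ∃ a : A, r - algebraMap A S a ∈ I) (n : ℕ) :
    ∃ N : Submodule A S, N.FG ∧ N ⊔ (I ^ n).restrictScalars A = ⊤ := by
  induction n with
  | zero => exact ⟨⊥, Submodule.fg_bot, by simp⟩
  | succ n ih =>
    obtain ⟨N, hN, hNn⟩ := ih
    obtain ⟨G, hG⟩ := hI.pow (n := n)
    refine ⟨N ⊔ Submodule.span A G, hN.sup ⟨G, rfl⟩, ?_⟩
    have hpow : (I ^ n).restrictScalars A ≤
        Submodule.span A G ⊔ (I ^ (n + 1)).restrictScalars A := fun s hs => by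
      rw [Submodule.restrictScalars_mem, ← hG] at hs
      induction hs using Submodule.span_induction with
      | mem g hg => exact Submodule.mem_sup_left (Submodule.subset_span hg)
      | zero => exact zero_mem _
      | add _ _ _ _ hs ht => exact add_mem hs ht
      | smul r s hs ih =>
        obtain ⟨a, ha⟩ := h r
        rw [← sub_add_cancel r (algebraMap A S a), add_smul, algebraMap_smul]
        refine add_mem (Submodule.mem_sup_right ?_) (Submodule.smul_mem _ a ih)
        rw [Submodule.restrictScalars_mem, pow_succ', smul_eq_mul]
        exact Ideal.mul_mem_mul ha (hG ▸ hs)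
    rw [eq_top_iff, ← hNn, sup_assoc]
    exact sup_le_sup_left hpow N

theorem finite_of_pow_le_map {A S : Type*} [CommRing A] [CommRing S] [Algebra A S] {J : Ideal A}
    [IsPrecomplete J A] {I : Ideal S} [IsHausdorff I S] (hI : I.FG)
    (hJ : J.map (algebraMap A S) ≤ I) {n : ℕ} (hn : I ^ n ≤ J.map (algebraMap A S))
    (h : ∀ r : S, ∃ a : A, r - algebraMap A S a ∈ I) : Module.Finite A S := by
  have : IsHausdorff J S := .of_map hJ
  obtain ⟨N, hN, hNn⟩ := exists_fg_sup_pow_eq_top hI h n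
  refine ⟨eq_top_of_sup_smul_top_eq_top_of_isPrecomplete (J := J) hN ?_ ▸ hN⟩
  rw [Ideal.smul_top_eq_map]
  exact top_le_iff.1 (hNn.ge.trans (sup_le_sup_left (show (I ^ n).restrictScalars A ≤ _ from hn) N))

theorem exists_ringHom_adicCompletion {A S : Type*} [CommRing A] [CommRing S] {V : Ideal A}
    {I : Ideal S} [IsAdicComplete I S] {f : A →+* S} (hf : V ≤ I.comap f) :
    ∃ F : AdicCompletion V A →+* S, ∀ a, F (AdicCompletion.of V A a) = f a := by
  have hpow (n : ℕ) : V ^ n ≤ (I ^ n).comap f :=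
    (Ideal.pow_right_mono hf n).trans (Ideal.le_comap_pow _ _)
  let F (n : ℕ) : AdicCompletion V A →+* S ⧸ I ^ n :=
    (Ideal.quotientMap (I ^ n) f (hpow n)).comp (AdicCompletion.evalₐ V n).toRingHom
  have hF {m n : ℕ} (hmn : m ≤ n) : (Ideal.Quotient.factorPow I hmn).comp (F n) = F m := by
    ext p
    obtain ⟨q, rfl⟩ := AdicCompletion.mk_surjective V A p
    simp only [F, RingHom.comp_apply, AlgHom.toRingHom_eq_coe, RingHom.coe_coe,
      AdicCompletion.evalₐ_mk]
    refine Ideal.Quotient.eq.2 ?_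
    have := SModEq.sub_mem.1 (q.2 hmn)
    rw [smul_eq_mul, Ideal.mul_top] at this
    rw [← map_sub, ← neg_sub, map_neg]
    exact neg_mem (hpow m this)
  refine ⟨IsAdicComplete.liftRingHom I F hF, fun a => sub_eq_zero.1 ?_⟩
  refine IsHausdorff.haus (inferInstance : IsHausdorff I S) _ fun n => ?_
  rw [SModEq.zero, smul_eq_mul, Ideal.mul_top, ← Ideal.Quotient.eq_zero_iff_mem, map_sub,
    sub_eq_zero, IsAdicComplete.mk_liftRingHom]
  simp only [F, RingHom.comp_apply, AlgHom.toRingHom_eq_coe, RingHom.coe_coe,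
    AdicCompletion.evalₐ_of, Ideal.quotientMap_mk]

theorem exists_ringHom_mvPowerSeries {σ K S : Type*} [Finite σ] [CommRing K] [CommRing S]
    {I : Ideal S} [IsAdicComplete I S] (g : K →+* S) {x : σ → S} (hx : ∀ i, x i ∈ I) :
    ∃ e : MvPowerSeries σ K →+* S,
      (∀ k, e (MvPowerSeries.C k) = g k) ∧ ∀ i, e (MvPowerSeries.X i) = x i := by
  obtain ⟨F, hF⟩ := exists_ringHom_adicCompletion (V := MvPolynomial.idealOfVars σ K) (I := I)
    (f := MvPolynomial.eval₂Hom g x) (Ideal.span_le.2 (by rintro _ ⟨i, rfl⟩; simpa using hx i))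
  refine ⟨F.comp (MvPowerSeries.toAdicCompletion σ K).toRingHom, fun k => ?_, fun i => ?_⟩
  · simp [← MvPolynomial.coe_C, MvPowerSeries.toAdicCompletion_coe, hF]
  · simp [← MvPolynomial.coe_X, MvPowerSeries.toAdicCompletion_coe, hF]

theorem formallySmooth_of_charZero {k L : Type*} [Field k] [CharZero k] [Field L] [Algebra k L] :
    Algebra.FormallySmooth k L := by
  obtain ⟨ι, v, hv⟩ := exists_isTranscendenceBasis' k L
  have := hv.isAlgebraic_field
  exact Algebra.FormallySmooth.of_algebraicIndependent_of_isSeparable hv.1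

theorem exists_residue_comp_eq_id {S : Type*} [CommRing S] [IsLocalRing S] [Algebra ℚ S]
    [IsAdicComplete (maximalIdeal S) S] :
    ∃ g : ResidueField S →+* S, (residue S).comp g = RingHom.id _ := by
  have : Algebra.FormallySmooth ℚ (S ⧸ maximalIdeal S) :=
    formallySmooth_of_charZero (L := ResidueField S)
  obtain ⟨g, hg⟩ := Algebra.FormallySmooth.exists_mkₐ_comp_eq_of_isAdicComplete (R := ℚ)
    (AlgHom.id ℚ (S ⧸ maximalIdeal S))
  exact ⟨g.toRingHom, RingHom.ext fun k => congrArg (· k) hg⟩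

theorem exists_finite_ringHom_mvPowerSeries {S : Type u} [CommRing S] [IsLocalRing S] [Algebra ℚ S]
    [IsAdicComplete (maximalIdeal S) S] (hS : (maximalIdeal S).FG) {d : ℕ} {x : Fin d → S}
    (hx : (Ideal.span (Set.range x)).radical = maximalIdeal S) :
    ∃ (K : Type u) (_ : Field K) (_ : CharZero K) (e : MvPowerSeries (Fin d) K →+* S),
      e.Finite ∧ ∀ i, e (MvPowerSeries.X i) = x i := by
  obtain ⟨g, hg⟩ := exists_residue_comp_eq_id (S := S)
  have hxm (i) : x i ∈ maximalIdeal S := hx ▸ Ideal.le_radical (Ideal.subset_span ⟨i, rfl⟩)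
  obtain ⟨e, heC, heX⟩ := exists_ringHom_mvPowerSeries g hxm
  have hmap : (Ideal.span (Set.range MvPowerSeries.X)).map e = Ideal.span (Set.range x) := by
    rw [Ideal.map_span, ← Set.range_comp]
    exact congrArg _ (congrArg _ (funext heX))
  obtain ⟨n, hn⟩ := Ideal.exists_radical_pow_le_of_fg _ (hx ▸ hS)
  let _ := e.toAlgebra
  refine ⟨ResidueField S, inferInstance, algebraRat.charZero _, e, ?_, heX⟩
  refine finite_of_pow_le_map (J := Ideal.span (Set.range MvPowerSeries.X)) hS
    (hmap.trans_le (hx ▸ Ideal.le_radical)) (hx ▸ hn.trans hmap.ge) fun r => ?_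
  refine ⟨MvPowerSeries.C (residue S r), ?_⟩
  rw [RingHom.algebraMap_toAlgebra, heC, ← residue_eq_zero_iff, map_sub, sub_eq_zero]
  exact (RingHom.congr_fun hg _).symm

theorem ringKrullDim_mvPowerSeries_le (F : Type*) [Field F] (d : ℕ) :
    ringKrullDim (MvPowerSeries (Fin d) F) ≤ d := by
  rw [← maximalIdeal_height_eq_ringKrullDim]
  have hX : maximalIdeal (MvPowerSeries (Fin d) F) ∈
      (Ideal.span (Set.range MvPowerSeries.X)).minimalPrimes := by
    rw [← maximalIdeal_mvPowerSeries_eq_span, Ideal.minimalPrimes_eq_subsingleton_self]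
    rfl
  have hcard : (Set.range (MvPowerSeries.X : Fin d → MvPowerSeries (Fin d) F)).ncard ≤ d := by
    simpa [Set.image_univ] using Set.ncard_image_le
      (f := (MvPowerSeries.X : Fin d → MvPowerSeries (Fin d) F)) Set.finite_univ
  exact_mod_cast (Ideal.height_le_card_of_mem_minimalPrimes_span (Set.finite_range _) hX).trans
    (Nat.cast_le.2 hcard)

theorem ringKrullDim_le_base_of_isIntegral {A B : Type*} [CommRing A] [CommRing B] [Algebra A B]
    [Algebra.IsIntegral A B] : ringKrullDim B ≤ ringKrullDim A :=
  Order.krullDim_le_of_strictMono (PrimeSpectrum.comap (algebraMap A B)) fun _ _ h =>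
    Ideal.IsIntegral.comap_lt_comap h

theorem ringKrullDim_le_of_flat {A B : Type*} [CommRing A] [IsNoetherianRing A] [IsLocalRing A]
    [CommRing B] [IsNoetherianRing B] [IsLocalRing B] [Algebra A B] [IsLocalHom (algebraMap A B)]
    [Module.Flat A B] :
    ringKrullDim A ≤ ringKrullDim B := by
  rw [← maximalIdeal_height_eq_ringKrullDim, ← maximalIdeal_height_eq_ringKrullDim,
    Ideal.height_eq_height_add_of_liesOver_of_hasGoingDown (maximalIdeal A) (maximalIdeal B)]
  exact_mod_cast le_self_add

theorem ringKrullDim_quotient_span_singleton_lt {A : Type*} [CommRing A] [FiniteRingKrullDim A]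
    {c : A} (hc : c ∈ nonZeroDivisors A) : ringKrullDim (A ⧸ Ideal.span {c}) < ringKrullDim A := by
  have h := ringKrullDim_quotient_succ_le_of_nonZeroDivisor hc
  obtain ⟨n, hn⟩ := WithBot.ne_bot_iff_exists.1 (ringKrullDim_ne_bot (R := A))
  have hn_top : n ≠ ⊤ := fun htop => ringKrullDim_ne_top (R := A) (by rw [← hn, htop]; rfl)
  rw [← hn] at h ⊢
  cases hm : ringKrullDim (A ⧸ Ideal.span {c}) with
  | bot => exact WithBot.bot_lt_coe n
  | coe m =>
    rw [hm] at h
    exact WithBot.coe_lt_coe.2 ((ENat.add_one_le_iff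
      (ne_top_of_le_ne_top hn_top (le_self_add.trans (WithBot.coe_le_coe.1 h)))).1
      (WithBot.coe_le_coe.1 h))

theorem injective_of_isIntegral_of_ringKrullDim_le {A S : Type*} [CommRing A] [IsDomain A]
    [FiniteRingKrullDim A] [CommRing S] {e : A →+* S} (he : e.IsIntegral)
    (h : ringKrullDim A ≤ ringKrullDim S) : Function.Injective e := by
  rw [RingHom.injective_iff_ker_eq_bot]
  by_contra hne
  obtain ⟨f, hf, hf0⟩ := Submodule.exists_mem_ne_zero_of_ne_bot hne
  let _ : Algebra (A ⧸ RingHom.ker e) S := (RingHom.kerLift e).toAlgebra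
  have : Algebra.IsIntegral (A ⧸ RingHom.ker e) S :=
    ⟨(show ((RingHom.kerLift e).comp (Ideal.Quotient.mk _)).IsIntegral from he).tower_top _ _⟩
  have hS : ringKrullDim S ≤ ringKrullDim (A ⧸ Ideal.span {f}) :=
    ringKrullDim_le_base_of_isIntegral.trans <| ringKrullDim_le_of_surjective
      (Ideal.Quotient.factor ((Ideal.span_singleton_le_iff_mem _).2 hf))
      (Ideal.Quotient.factor_surjective _)
  exact (h.trans hS).not_gt
    (ringKrullDim_quotient_span_singleton_lt (mem_nonZeroDivisors_of_ne_zero hf0))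

theorem exists_isIntegral_ringHom_mvPowerSeries {D : Type u} [CommRing D] [IsNoetherianRing D]
    [IsLocalRing D] [Algebra ℚ D] {d : ℕ} (hd : (d : WithBot ℕ∞) ≤ ringKrullDim D) {x : Fin d → D}
    (hx : (Ideal.span (Set.range x)).radical = maximalIdeal D) :
    ∃ (K : Type u) (_ : Field K) (_ : CharZero K) (S : Type u) (_ : CommRing S)
      (e : MvPowerSeries (Fin d) K →+* S) (φ : D →+* S), Function.Injective e ∧ e.IsIntegral ∧
      ∀ i, φ (x i) = e (MvPowerSeries.X i) := by
  let S := AdicCompletion (maximalIdeal D) D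
  let _ : Algebra ℚ S := ((algebraMap D S).comp (algebraMap ℚ D)).toAlgebra
  have hS : maximalIdeal S = (maximalIdeal D).map (algebraMap D S) :=
    AdicCompletion.maximalIdeal_eq_map
  have hxS : (Ideal.span (Set.range fun i => algebraMap D S (x i))).radical = maximalIdeal S := by
    have hmap : Ideal.span (Set.range fun i => algebraMap D S (x i)) =
        (Ideal.span (Set.range x)).map (algebraMap D S) := by
      rw [Ideal.map_span, ← Set.range_comp]
      rfl
    refine le_antisymm ((maximalIdeal.isMaximal S).isPrime.radical_le_iff.2 ?_) ?_
    · rw [hmap, hS]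
      exact Ideal.map_mono (hx ▸ Ideal.le_radical)
    · rw [hmap, hS]
      exact (Ideal.map_mono hx.ge).trans (Ideal.map_radical_le _)
  obtain ⟨K, _, _, e, he, hex⟩ := exists_finite_ringHom_mvPowerSeries
    (hS ▸ (maximalIdeal D).fg_of_isNoetherianRing.map _) hxS
  have : IsNoetherianRing S :=
    let _ := e.toAlgebra
    have : Module.Finite (MvPowerSeries (Fin d) K) S := he
    .of_finite (MvPowerSeries (Fin d) K) S
  refine ⟨K, inferInstance, inferInstance, S, inferInstance, e, algebraMap D S, ?_,
    he.to_isIntegral, fun i => (hex i).symm⟩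
  refine injective_of_isIntegral_of_ringKrullDim_le he.to_isIntegral ?_
  exact (ringKrullDim_mvPowerSeries_le K d).trans (hd.trans ringKrullDim_le_of_flat)

theorem exists_ringHom_charP {D : Type u} [CommRing D] [IsNoetherianRing D]
    [IsLocalRing D] [Algebra ℚ D] {d : ℕ} (hd : (d : WithBot ℕ∞) ≤ ringKrullDim D)
    {A : Type*} [CommRing A] [Algebra.FiniteType ℤ A] (φ : A →+* D) {x : Fin d → A}
    (hx : (Ideal.span (Set.range fun i => φ (x i))).radical = maximalIdeal D) :
    ∃ (p : ℕ) (E : Type u) (_ : CommRing E) (_ : IsDomain E) (_ : IsNoetherianRing E)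
      (_ : IsLocalRing E) (ψ : A →+* E), p.Prime ∧ CharP E p ∧
      (d : WithBot ℕ∞) ≤ ringKrullDim E ∧
      (Ideal.span (Set.range fun i => ψ (x i))).radical = maximalIdeal E := by
  obtain ⟨K, _, _, S, _, e, ι, he, hint, hι⟩ := exists_isIntegral_ringHom_mvPowerSeries hd hx
  exact exists_ringHom_isLocalRing_of_isIntegral he hint (ι.comp φ) hι

end CompleteLocal

/-! ## Growth of the length of quotients by powers of parameters -/

section LengthGrowth

open IsLocalRing

theorem exists_lt_natCast_le_coheight {α : Type*} [Preorder α] {a : α} {d : ℕ}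
    (h : ((d + 1 : ℕ) : ℕ∞) ≤ Order.coheight a) : ∃ b > a, d ≤ Order.coheight b := by
  by_contra! lt
  have coheight_le : Order.coheight a ≤ d := by
    rw [Order.coheight_eq_iSup_gt_coheight]
    exact iSup₂_le fun b hb => Order.add_one_le_of_lt (lt b hb)
  exact absurd (Nat.cast_le.mp (h.trans coheight_le)) (by lia)

theorem pow_succ_le_pow_succ_add {n m k : ℕ} (d : ℕ) (hmn : m ≤ n) (hnk : n ≤ m + k) :
    n ^ (d + 1) ≤ m ^ (d + 1) + (d + 1) * k * n ^ d := by
  zify at *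
  have diff_le := (le_abs_self _).trans (abs_pow_sub_pow_le (n : ℤ) m (d + 1))
  rw [abs_of_nonneg (sub_nonneg.mpr hmn), Nat.abs_cast, Nat.abs_cast, max_eq_left hmn,
    Nat.add_sub_cancel] at diff_le
  have : ((n : ℤ) - m) * ((d + 1 : ℕ) : ℤ) * n ^ d ≤ k * ((d + 1 : ℕ) : ℤ) * n ^ d := by
    gcongr
    linarith
  push_cast at *
  linarith

theorem length_quotient_add_length_quotient_le {R : Type*} [CommRing R] {I J₁ J₂ : Ideal R} {c : R}
    (hJ₁ : ∀ a, a * c ∈ I → a ∈ J₁) (hJ₂ : I ≤ J₂) (hc : c ∈ J₂) :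
    Module.length R (R ⧸ J₁) + Module.length R (R ⧸ J₂) ≤ Module.length R (R ⧸ I) := by
  let mulC : R →ₗ[R] R ⧸ I := LinearMap.toSpanSingleton R _ (Ideal.Quotient.mk I c)
  let proj : (R ⧸ I) →ₗ[R] R ⧸ J₂ := Submodule.factor hJ₂
  have ker_le : LinearMap.ker mulC ≤ J₁ := fun a ha =>
    hJ₁ a (Ideal.Quotient.eq_zero_iff_mem.mp ha)
  have range_le : LinearMap.range mulC ≤ LinearMap.ker proj := by
    rintro _ ⟨a, rfl⟩
    exact Ideal.Quotient.eq_zero_iff_mem.mpr (J₂.mul_mem_left a hc)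
  rw [Module.length_eq_add_of_exact (LinearMap.ker proj).subtype proj
    (Submodule.subtype_injective _) (Submodule.factor_surjective _)
    (LinearMap.exact_subtype_ker_map proj)]
  gcongr
  calc Module.length R (R ⧸ J₁)
      ≤ Module.length R (R ⧸ LinearMap.ker mulC) :=
        Module.length_le_of_surjective _ (Submodule.factor_surjective ker_le)
    _ = Module.length R (LinearMap.range mulC) := mulC.quotKerEquivRange.length_eq
    _ ≤ Module.length R (LinearMap.ker proj) :=
        Module.length_le_of_injective _ (Submodule.inclusion_injective range_le)

theorem exists_forall_mem_sup_pow_of_mul_mem {R : Type*} [CommRing R] [IsNoetherianRing R]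
    (m P : Ideal R) [P.IsPrime] {c : R} (hc : c ∉ P) :
    ∃ k, ∀ n a, a * c ∈ P ⊔ m ^ n → a ∈ P ⊔ m ^ (n - k) := by
  let C : Submodule R (R ⧸ P) := Submodule.span R {Ideal.Quotient.mk P c}
  obtain ⟨k, artin_rees⟩ := Ideal.exists_pow_inf_eq_pow_smul m C
  have mk_mem_iff (n : ℕ) (b : R) :
      Ideal.Quotient.mk P b ∈ m ^ n • (⊤ : Submodule R (R ⧸ P)) ↔ b ∈ P ⊔ m ^ n := by
    rw [Ideal.smul_top_eq_map, Submodule.restrictScalars_mem, Ideal.Quotient.algebraMap_eq,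
      ← Ideal.mem_comap, Ideal.comap_map_of_surjective' _ Ideal.Quotient.mk_surjective,
      Ideal.mk_ker, sup_comm]
  refine ⟨k, fun n a ha => ?_⟩
  rcases lt_or_ge n k with hn | hn
  · simp [Nat.sub_eq_zero_of_le hn.le]
  have mem_inf : Ideal.Quotient.mk P (a * c) ∈ m ^ n • ⊤ ⊓ C :=
    ⟨(mk_mem_iff n _).mpr ha, Submodule.mem_span_singleton.mpr ⟨a, rfl⟩⟩
  rw [artin_rees n hn] at mem_inf
  obtain ⟨b, hb, hbc⟩ := Submodule.mem_smul_span_singleton.mp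
    (Submodule.smul_mono le_rfl inf_le_right mem_inf)
  have mul_mem : (b - a) * c ∈ P := by
    rw [sub_mul, ← Ideal.Quotient.eq]
    exact hbc
  rw [← sub_sub_self b a, sub_eq_neg_add]
  exact Submodule.add_mem_sup
    (P.neg_mem ((Ideal.IsPrime.mem_or_mem ‹_› mul_mem).resolve_right hc)) hb

theorem exists_pow_le_mul_length_quotient_sup_pow {R : Type*} [CommRing R] [IsNoetherianRing R]
    [IsLocalRing R] {d : ℕ} (p : PrimeSpectrum R) (hp : d ≤ Order.coheight p) :
    ∃ A : ℕ, ∀ n, 0 < n →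
      ((n ^ d : ℕ) : ℕ∞) ≤ A * Module.length R (R ⧸ (p.asIdeal ⊔ maximalIdeal R ^ n)) := by
  induction d generalizing p with
  | zero =>
    refine ⟨1, fun n hn => ?_⟩
    have sup_le : p.asIdeal ⊔ maximalIdeal R ^ n ≤ maximalIdeal R :=
      sup_le (le_maximalIdeal p.2.ne_top) (Ideal.pow_le_self hn.ne')
    have : Nontrivial (R ⧸ (p.asIdeal ⊔ maximalIdeal R ^ n)) :=
      Ideal.Quotient.nontrivial_iff.mpr (ne_top_of_le_ne_top Ideal.IsPrime.ne_top' sup_le)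
    simpa using Order.one_le_iff_pos.mpr Module.length_pos
  | succ d ih =>
    obtain ⟨q, hpq, hq⟩ := exists_lt_natCast_le_coheight hp
    obtain ⟨c, hcq, hcp⟩ := SetLike.exists_of_lt (show p.asIdeal < q.asIdeal from hpq)
    obtain ⟨A, hA⟩ := ih q hq
    obtain ⟨k, hk⟩ := exists_forall_mem_sup_pow_of_mul_mem (maximalIdeal R) p.asIdeal hcp
    refine ⟨(d + 1) * (k + 1) * A, fun n => ?_⟩
    let len (p : PrimeSpectrum R) (n : ℕ) := Module.length R (R ⧸ (p.asIdeal ⊔ maximalIdeal R ^ n))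
    induction n using Nat.strong_induction_on with
    | _ n ihn =>
      intro hn
      have len_add_le : len p (n - (k + 1)) + len q n ≤ len p n :=
        length_quotient_add_length_quotient_le
          (fun a ha => (sup_le_sup_left (Ideal.pow_le_pow_right (by lia)) _ :
            p.asIdeal ⊔ maximalIdeal R ^ (n - k) ≤ _) (hk n a ha))
          (sup_le_sup_right hpq.le _) (Ideal.mem_sup_left hcq)
      have ih_sub : (((n - (k + 1)) ^ (d + 1) : ℕ) : ℕ∞) ≤
          ((d + 1) * (k + 1) * A : ℕ) * len p (n - (k + 1)) := by
        rcases (n - (k + 1)).eq_zero_or_pos with h0 | h0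
        · simp [h0]
        · exact ihn _ (by lia) h0
      calc ((n ^ (d + 1) : ℕ) : ℕ∞)
          ≤ ((n - (k + 1)) ^ (d + 1) + (d + 1) * (k + 1) * n ^ d : ℕ) :=
            Nat.cast_le.mpr (pow_succ_le_pow_succ_add d (by lia) (by lia))
        _ = ((n - (k + 1)) ^ (d + 1) : ℕ) + ((d + 1) * (k + 1) : ℕ) * (n ^ d : ℕ) := by
            push_cast; ring
        _ ≤ ((d + 1) * (k + 1) * A : ℕ) * len p (n - (k + 1)) +
            ((d + 1) * (k + 1) : ℕ) * (A * len q n) := by gcongr; exact hA n hn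
        _ = ((d + 1) * (k + 1) * A : ℕ) * (len p (n - (k + 1)) + len q n) := by
            push_cast; ring
        _ ≤ ((d + 1) * (k + 1) * A : ℕ) * len p n := by gcongr

variable {D : Type*} [CommRing D] [IsNoetherianRing D] [IsLocalRing D] {d : ℕ} {x : Fin d → D}

theorem length_powerQuotient_ne_top (hx : (Ideal.span (Set.range x)).radical = maximalIdeal D)
    {t : Fin d → ℕ} (ht : ∀ i, 0 < t i) : Module.length D (PowerQuotient x t D) ≠ ⊤ := by
  refine ne_top_of_le_ne_top (WithTop.mul_ne_top (ENat.natCast_ne_top _) ?_)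
    ((isBoxSubadditive_length_powerQuotient x D).le_prod_mul_one ht)
  let I : Ideal D := powerIdeal x 1 • ⊤
  have maximal_mem : maximalIdeal D ∈ I.minimalPrimes := by
    have radical_eq : I.radical = maximalIdeal D := by simp [I, powerIdeal_one, hx]
    rw [← Ideal.radical_minimalPrimes, radical_eq,
      Ideal.minimalPrimes_eq_subsingleton_self]
    rfl
  have : IsArtinianRing (D ⧸ I) :=
    quotient_artinian_of_mem_minimalPrimes_of_isLocalRing I maximal_mem
  have : IsArtinian D (D ⧸ I) :=
    isArtinian_of_surjective_algebraMap (R := D ⧸ I) Ideal.Quotient.mk_surjective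
  exact Module.length_ne_top

theorem exists_prod_le_mul_length_powerQuotient [IsDomain D]
    (hd : (d : WithBot ℕ∞) ≤ ringKrullDim D)
    (hx : (Ideal.span (Set.range x)).radical = maximalIdeal D) :
    ∃ A : ℕ, ∀ s : Fin d → ℕ, (∀ i, 0 < s i) →
      ((∏ i, s i : ℕ) : ℕ∞) ≤ A * Module.length D (PowerQuotient x s D) := by
  have x_mem (i : Fin d) : x i ∈ maximalIdeal D :=
    hx ▸ Ideal.le_radical (Ideal.subset_span ⟨i, rfl⟩)
  obtain ⟨A, hA⟩ := exists_pow_le_mul_length_quotient_sup_pow (⊥ : PrimeSpectrum D) (d := d) <| by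
    rw [ringKrullDim, ← Order.coheight_bot_eq_krullDim] at hd
    exact_mod_cast hd
  refine ⟨A * 2 ^ d, fun s hs => ?_⟩
  -- compare the box `s` with the cube of side `n ≥ s i`, whose quotient maps onto `D / m ^ n`
  let n := ∏ i, s i
  have n_pos : 0 < n := Finset.prod_pos fun i _ => hs i
  have s_le (i : Fin d) : 1 * s i ≤ n := by
    rw [one_mul]
    exact Nat.le_of_dvd n_pos (Finset.dvd_prod_of_mem s (Finset.mem_univ i))
  have cube : ((n ^ d : ℕ) : ℕ∞) ≤ A * Module.length D (PowerQuotient x (fun _ => n) D) := by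
    refine (hA n n_pos).trans ?_
    gcongr
    refine Module.length_le_of_surjective _ (Submodule.factor_surjective
      (powerIdeal_smul_top_le_iff.mpr fun i m => ?_))
    exact Ideal.mul_mem_right _ _ (Ideal.mem_sup_right (Ideal.pow_mem_pow (x_mem i) n))
  have compare := (isBoxSubadditive_length_powerQuotient x D).mul_prod_le hs s_le
  lift Module.length D (PowerQuotient x s D) to ℕ using length_powerQuotient_ne_top hx hs with a
  lift Module.length D (PowerQuotient x (fun _ => n) D) to ℕ using
    length_powerQuotient_ne_top hx fun _ => n_pos with b
  norm_cast at cube compare ⊢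
  simp only [one_mul, Finset.prod_const, Finset.card_univ, Fintype.card_fin, mul_pow] at compare
  refine Nat.le_of_mul_le_mul_left ?_ (pow_pos n_pos d)
  calc n ^ d * n ≤ A * b * n := Nat.mul_le_mul_right _ cube
    _ = A * (n * b) := by ring
    _ ≤ A * (2 ^ d * n ^ d * a) := Nat.mul_le_mul_left _ compare
    _ = n ^ d * (A * 2 ^ d * a) := by ring

end LengthGrowth

section BoxDensity

theorem le_of_forall_pow_mul_le_pow_mul {X Y : ℝ} {d : ℕ}
    (h : ∀ N : ℕ, (N : ℝ) ^ d * X ≤ (N + 1 : ℝ) ^ d * Y) : X ≤ Y := by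
  have tendsto := ((tendsto_natCast_div_add_atTop (1 : ℝ)).pow d).mul_const X
  rw [one_pow, one_mul] at tendsto
  refine le_of_tendsto' tendsto fun N => ?_
  rw [div_pow, div_mul_eq_mul_div, div_le_iff₀ (by positivity), mul_comm Y]
  exact h N

namespace IsBoxSubadditive

variable {ι : Type*} [Fintype ι]

/-- The value of `lam` on the box `s` per unit of volume. -/
noncomputable def density (lam : (ι → ℕ) → ℕ∞) (s : ι → ℕ) : ℝ :=
  (lam s).toNat / ∏ i, (s i : ℝ)

variable {lam : (ι → ℕ) → ℕ∞} {s t : ι → ℕ}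

theorem one_le_mul_density (hfin : ∀ s, (∀ i, 0 < s i) → lam s ≠ ⊤) {A : ℕ}
    (hA : ∀ s, (∀ i, 0 < s i) → ((∏ i, s i : ℕ) : ℕ∞) ≤ A * lam s) (hs : ∀ i, 0 < s i) :
    1 ≤ A * density lam s := by
  have prod_le := hA s hs
  rw [← ENat.natCast_toNat (hfin s hs)] at prod_le
  rw [density, mul_div_assoc',
    one_le_div₀ (Finset.prod_pos fun i _ => Nat.cast_pos.mpr (hs i))]
  exact_mod_cast prod_le

theorem prod_mul_density_mul_le (hfin : ∀ s, (∀ i, 0 < s i) → lam s ≠ ⊤) (ht : ∀ i, 0 < t i)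
    {q a b : ℕ} (hq : 0 < q) (H : (a : ℕ∞) * lam (fun i => t i * q) ≤ b * lam (fun _ => q)) :
    (∏ i, t i : ℕ) * a * density lam (fun i => t i * q) ≤ b * density lam (fun _ => q) := by
  rw [← ENat.natCast_toNat (hfin _ fun i => Nat.mul_pos (ht i) hq),
    ← ENat.natCast_toNat (hfin _ fun _ => hq)] at H
  have H_real : (a : ℝ) * (lam fun i => t i * q).toNat ≤ b * (lam fun _ => q).toNat := by
    exact_mod_cast H
  have t_pos : 0 < ∏ i, (t i : ℝ) := Finset.prod_pos fun i _ => Nat.cast_pos.mpr (ht i)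
  have q_pos : 0 < ∏ _i : ι, (q : ℝ) := Finset.prod_pos fun _ _ => Nat.cast_pos.mpr hq
  simp only [density, Nat.cast_mul, Nat.cast_prod, Finset.prod_mul_distrib]
  rw [mul_div_assoc', mul_div_assoc', div_le_div_iff₀ (mul_pos t_pos q_pos) q_pos]
  nlinarith [mul_le_mul_of_nonneg_left H_real (mul_pos t_pos q_pos).le]

variable [DecidableEq ι]

theorem pow_mul_density_le (hlam : IsBoxSubadditive lam)
    (hfin : ∀ s, (∀ i, 0 < s i) → lam s ≠ ⊤) {N : ℕ} (hs : ∀ i, 0 < s i) (ht : ∀ i, 0 < t i)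
    (hst : ∀ i, N * s i ≤ t i) :
    (N : ℝ) ^ Fintype.card ι * density lam t ≤ (N + 1 : ℝ) ^ Fintype.card ι * density lam s := by
  have s_pos : 0 < ∏ i, (s i : ℝ) := Finset.prod_pos fun i _ => Nat.cast_pos.mpr (hs i)
  have t_pos : 0 < ∏ i, (t i : ℝ) := Finset.prod_pos fun i _ => Nat.cast_pos.mpr (ht i)
  have compare := hlam.mul_prod_le hs hst
  rw [← ENat.natCast_toNat (hfin s hs), ← ENat.natCast_toNat (hfin t ht)] at compare
  have compare_real : (∏ i, (N * s i : ℝ)) * (lam t).toNat ≤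
      (∏ i, ((N + 1) * t i : ℝ)) * (lam s).toNat := by exact_mod_cast compare
  rw [Finset.prod_mul_distrib, Finset.prod_mul_distrib, Finset.prod_const, Finset.prod_const,
    Finset.card_univ] at compare_real
  rw [density, density, mul_div_assoc', mul_div_assoc', div_le_div_iff₀ t_pos s_pos]
  linarith

theorem mul_prod_le_of_forall_mul_le (hlam : IsBoxSubadditive lam)
    (hfin : ∀ s, (∀ i, 0 < s i) → lam s ≠ ⊤) {A : ℕ}
    (hA : ∀ s, (∀ i, 0 < s i) → ((∏ i, s i : ℕ) : ℕ∞) ≤ A * lam s) (ht : ∀ i, 0 < t i)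
    {p a b : ℕ} (hp : 1 < p)
    (H : ∀ e, (a : ℕ∞) * lam (fun i => t i * p ^ e) ≤ b * lam (fun _ => p ^ e)) :
    (∏ i, t i) * a ≤ b := by
  have pow_pos (e : ℕ) : 0 < p ^ e := Nat.pow_pos (by lia)
  have mul_pow_pos (e : ℕ) (i : ι) : 0 < t i * p ^ e := Nat.mul_pos (ht i) (pow_pos e)
  let ν : ℝ := ⨅ s : {s : ι → ℕ // ∀ i, 0 < s i}, density lam s
  have : Nonempty {s : ι → ℕ // ∀ i, 0 < s i} := ⟨fun _ => 1, fun _ => one_pos⟩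
  have ν_le {s : ι → ℕ} (hs : ∀ i, 0 < s i) : ν ≤ density lam s :=
    ciInf_le (f := fun s : {s : ι → ℕ // ∀ i, 0 < s i} => density lam s)
      ⟨0, by rintro _ ⟨s, rfl⟩; unfold density; positivity⟩ ⟨s, hs⟩
  have ν_pos : 0 < ν := by
    have one_le : 1 ≤ A * ν := by
      rw [Real.mul_iInf_of_nonneg (Nat.cast_nonneg A)]
      exact le_ciInf fun s => one_le_mul_density hfin hA s.2
    exact pos_of_mul_pos_right (zero_lt_one.trans_le one_le) (Nat.cast_nonneg A)
  have mul_ν_le (s : {s : ι → ℕ // ∀ i, 0 < s i}) :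
      (∏ i, t i : ℕ) * a * ν ≤ b * density lam s := by
    refine le_of_forall_pow_mul_le_pow_mul (d := Fintype.card ι) fun N => ?_
    obtain ⟨e, he⟩ : ∃ e : ℕ, ∀ i, N * s.1 i ≤ p ^ e :=
      ⟨∑ i, N * s.1 i, fun i => (Finset.single_le_sum (f := fun i => N * s.1 i)
        (fun _ _ => Nat.zero_le _) (Finset.mem_univ i)).trans (Nat.lt_pow_self hp).le⟩
    calc (N : ℝ) ^ Fintype.card ι * ((∏ i, t i : ℕ) * a * ν)
        ≤ N ^ Fintype.card ι * (b * density lam (fun _ => p ^ e)) := by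
          refine mul_le_mul_of_nonneg_left (le_trans ?_
            (prod_mul_density_mul_le hfin ht (pow_pos e) (H e))) (by positivity)
          gcongr
          exact ν_le (mul_pow_pos e)
      _ = b * (N ^ Fintype.card ι * density lam (fun _ => p ^ e)) := by ring
      _ ≤ b * ((N + 1) ^ Fintype.card ι * density lam s) := by
          exact mul_le_mul_of_nonneg_left
            (hlam.pow_mul_density_le hfin s.2 (fun _ => pow_pos e) he) (Nat.cast_nonneg b)
      _ = (N + 1) ^ Fintype.card ι * (b * density lam s) := by ring
  have le_mul_ν : (∏ i, t i : ℕ) * a * ν ≤ b * ν := by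
    rw [Real.mul_iInf_of_nonneg (Nat.cast_nonneg b)]
    exact le_ciInf mul_ν_le
  exact_mod_cast le_of_mul_le_mul_right le_mul_ν ν_pos

end IsBoxSubadditive

end BoxDensity

/-! ## Lower bound for the quasilength of free modules -/

section BaseChange

variable {S T : Type*} [CommRing S] [CommRing T] {f : S →+* T} {M N : Type*} [AddCommGroup M]
  [Module S M] [AddCommGroup N] [Module T N]

theorem span_image_sup_span_singleton (φ : M →ₛₗ[f] N) (C : Submodule S M) (m : M) :
    Submodule.span T (φ '' (C ⊔ Submodule.span S {m} : Submodule S M)) =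
      Submodule.span T (φ '' C) ⊔ Submodule.span T {φ m} := by
  refine le_antisymm (Submodule.span_le.mpr ?_) ?_
  · rintro _ ⟨_, hx, rfl⟩
    obtain ⟨c, hc, y, hy, rfl⟩ := Submodule.mem_sup.mp hx
    obtain ⟨a, rfl⟩ := Submodule.mem_span_singleton.mp hy
    rw [map_add, map_smulₛₗ]
    exact Submodule.add_mem_sup (Submodule.subset_span ⟨c, hc, rfl⟩)
      (Submodule.smul_mem _ _ (Submodule.mem_span_singleton_self _))
  · rw [← Submodule.span_union]
    refine Submodule.span_mono (Set.union_subset (Set.image_mono (show C ≤ _ from le_sup_left)) ?_)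
    exact Set.singleton_subset_iff.mpr
      ⟨m, Submodule.mem_sup_right (Submodule.mem_span_singleton_self m), rfl⟩

theorem IsQLChain.span_image {J : Ideal S} {B C : Submodule S M} {h : ℕ} (φ : M →ₛₗ[f] N)
    (H : IsQLChain J B h C) :
    IsQLChain (J.map f) (Submodule.span T (φ '' B)) h (Submodule.span T (φ '' C)) := by
  induction H with
  | zero => exact zero
  | @step h C m _ hm ih =>
    rw [span_image_sup_span_singleton]
    refine step (φ m) ih fun a ha => ?_
    have map_le : J.map f ≤
        (Submodule.span T (φ '' C)).comap (LinearMap.toSpanSingleton T N (φ m)) :=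
      Ideal.map_le_iff_le_comap.mpr fun b hb =>
        Submodule.subset_span ⟨b • m, hm b hb, map_smulₛₗ φ b m⟩
    exact map_le ha

variable {d : ℕ} {x : Fin d → S} {t : Fin d → ℕ} {h : ℕ}

theorem IsQLChain.powerIdeal_smul_top_map {φ : M →ₛₗ[f] N}
    (hφ : Submodule.span T (Set.range φ) = ⊤)
    (H : IsQLChain (Ideal.span (Set.range x)) (powerIdeal x t • (⊤ : Submodule S M)) h ⊤) :
    IsQLChain (Ideal.span (Set.range (f ∘ x)))
      (powerIdeal (f ∘ x) t • (⊤ : Submodule T N)) h ⊤ := by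
  have chain := (H.span_image φ).sup_left (powerIdeal (f ∘ x) t • ⊤)
  have span_le : Submodule.span T (φ '' (powerIdeal x t • ⊤ : Submodule S M)) ≤
      powerIdeal (f ∘ x) t • ⊤ := by
    have le_comap : powerIdeal x t • ⊤ ≤ (powerIdeal (f ∘ x) t • (⊤ : Submodule T N)).comap φ :=
      powerIdeal_smul_top_le_iff.mpr fun i m => by
        rw [Submodule.mem_comap, map_smulₛₗ, map_pow]
        exact powerIdeal_smul_top_le_iff.mp le_rfl i (φ m)
    exact Submodule.span_le.mpr (Set.image_subset_iff.mpr le_comap)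
  rwa [sup_eq_left.mpr span_le, Submodule.top_coe, Set.image_univ, hφ, sup_top_eq, Ideal.map_span,
    ← Set.range_comp] at chain

end BaseChange

section LengthBound

variable {D : Type*} [CommRing D] {M : Type*} [AddCommGroup M] [Module D M] {J : Ideal D}

theorem length_quotient_le_add_length_quotient_sup_span {C : Submodule D M} {m : M}
    (hm : ∀ a ∈ J, a • m ∈ C) :
    Module.length D (M ⧸ C) ≤
      Module.length D (D ⧸ J) + Module.length D (M ⧸ (C ⊔ Submodule.span D {m})) := by
  have le_ker : J ≤ LinearMap.ker (LinearMap.toSpanSingleton D _ (C.mkQ m)) := fun a ha =>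
    (Submodule.Quotient.mk_eq_zero C).mpr (hm a ha)
  refine length_le_add_of_rightExact (f := J.liftQ _ le_ker)
    (Submodule.factor_surjective le_sup_left) ?_
  rw [Submodule.range_liftQ, LinearMap.range_toSpanSingleton, Submodule.factor, Submodule.ker_mapQ,
    Submodule.comap_id, Submodule.map_sup, Submodule.map_span, Set.image_singleton]
  simp

theorem IsQLChain.length_quotient_le {B C : Submodule D M} {h : ℕ} (H : IsQLChain J B h C) :
    Module.length D (M ⧸ B) ≤ h * Module.length D (D ⧸ J) + Module.length D (M ⧸ C) := by
  induction H with
  | zero => simp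
  | @step h C m _ hm ih =>
    calc Module.length D (M ⧸ B)
        ≤ h * Module.length D (D ⧸ J) + Module.length D (M ⧸ C) := ih
      _ ≤ h * Module.length D (D ⧸ J) + (Module.length D (D ⧸ J) +
            Module.length D (M ⧸ (C ⊔ Submodule.span D {m}))) := by
          gcongr
          exact length_quotient_le_add_length_quotient_sup_span hm
      _ = (h + 1 : ℕ) * Module.length D (D ⧸ J) +
            Module.length D (M ⧸ (C ⊔ Submodule.span D {m})) := by push_cast; ring

theorem mul_length_powerQuotient_le {d : ℕ} (x : Fin d → D) (t : Fin d → ℕ) (r : ℕ) :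
    r * Module.length D (PowerQuotient x t D) ≤
      Module.length D (PowerQuotient x t (Fin r → D)) := by
  let proj (b : Fin r) : PowerQuotient x t (Fin r → D) →ₗ[D] PowerQuotient x t D :=
    PowerQuotient.map x t (LinearMap.proj b)
  have pi_surjective : Function.Surjective (LinearMap.pi proj) := fun w => by
    choose z hz using fun b => Submodule.mkQ_surjective _ (w b)
    exact ⟨Submodule.Quotient.mk z, funext hz⟩
  simpa [Module.length_pi] using Module.length_le_of_surjective _ pi_surjective

end LengthBound

section PrimeCharacteristic

variable {D : Type*} [CommRing D] [IsDomain D] [IsNoetherianRing D] [IsLocalRing D] {d : ℕ}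
  {x : Fin d → D} {t : Fin d → ℕ} {r h : ℕ}

/-- The coordinatewise action of a ring homomorphism on free modules. -/
def piMapₛₗ {S T : Type*} [CommSemiring S] [CommSemiring T] (f : S →+* T) (ι : Type*) :
    (ι → S) →ₛₗ[f] (ι → T) where
  toFun v i := f (v i)
  map_add' _ _ := funext fun _ => map_add f _ _
  map_smul' _ _ := funext fun _ => map_mul f _ _

theorem span_range_piMapₛₗ {S T : Type*} [CommSemiring S] [CommSemiring T] (f : S →+* T)
    (ι : Type*) [Finite ι] : Submodule.span T (Set.range (piMapₛₗ f ι)) = ⊤ := by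
  classical
  have := Fintype.ofFinite ι
  refine eq_top_iff.mpr (le_of_eq_of_le (Pi.basisFun T ι).span_eq.symm (Submodule.span_mono ?_))
  rintro _ ⟨i, rfl⟩
  refine ⟨Pi.single i 1, funext fun j => ?_⟩
  simp [piMapₛₗ, Pi.single_apply, apply_ite f]

theorem prod_mul_le_of_isQLChain_of_charP {p : ℕ} (hp : p.Prime) [CharP D p]
    (hd : (d : WithBot ℕ∞) ≤ ringKrullDim D)
    (hx : (Ideal.span (Set.range x)).radical = IsLocalRing.maximalIdeal D) (ht : ∀ i, 0 < t i)
    (H : IsQLChain (Ideal.span (Set.range x))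
      (powerIdeal x t • (⊤ : Submodule D (Fin r → D))) h ⊤) :
    (∏ i, t i) * r ≤ h := by
  have := Fact.mk hp
  obtain ⟨A, hA⟩ := exists_prod_le_mul_length_powerQuotient hd hx
  refine (isBoxSubadditive_length_powerQuotient x D).mul_prod_le_of_forall_mul_le
    (fun s hs => length_powerQuotient_ne_top hx hs) hA ht hp.one_lt fun e => ?_
  let F := iterateFrobenius D p e
  have powerIdeal_frobenius : powerIdeal (F ∘ x) t = powerIdeal x fun i => t i * p ^ e := by
    simp only [powerIdeal, F, Function.comp_apply, iterateFrobenius_def, ← pow_mul, mul_comm]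
  have span_frobenius : Ideal.span (Set.range (F ∘ x)) = powerIdeal x (fun _ => p ^ e) • ⊤ :=
    (Ideal.mul_top _).symm
  have length_le := (H.powerIdeal_smul_top_map (span_range_piMapₛₗ F _)).length_quotient_le
  rw [powerIdeal_frobenius, span_frobenius, Module.length_eq_zero (M := _ ⧸ ⊤), add_zero]
    at length_le
  calc (r : ℕ∞) * Module.length D (PowerQuotient x (fun i => t i * p ^ e) D)
      ≤ Module.length D (PowerQuotient x (fun i => t i * p ^ e) (Fin r → D)) :=
        mul_length_powerQuotient_le x _ r
    _ ≤ h * Module.length D (PowerQuotient x (fun _ => p ^ e) D) := length_le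

end PrimeCharacteristic

section Descent

variable {D M : Type*} [CommRing D] [AddCommGroup M] [Module D M]

theorem exists_finite_forall_subring_mem_span {S : Set M} {m : M}
    (hm : m ∈ Submodule.span D S) :
    ∃ T : Set D, T.Finite ∧ ∀ A : Subring D, T ⊆ A → m ∈ Submodule.span A S := by
  induction hm using Submodule.span_induction with
  | mem m hm => exact ⟨∅, Set.finite_empty, fun A _ => Submodule.subset_span hm⟩
  | zero => exact ⟨∅, Set.finite_empty, fun A _ => Submodule.zero_mem _⟩
  | add m n _ _ ihm ihn =>
    obtain ⟨T, hT, mem_m⟩ := ihm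
    obtain ⟨T', hT', mem_n⟩ := ihn
    exact ⟨T ∪ T', hT.union hT', fun A hA => Submodule.add_mem _
      (mem_m A (Set.subset_union_left.trans hA)) (mem_n A (Set.subset_union_right.trans hA))⟩
  | smul a m _ ih =>
    obtain ⟨T, hT, mem_m⟩ := ih
    refine ⟨insert a T, hT.insert a, fun A hA => ?_⟩
    exact Submodule.smul_mem _ (⟨a, hA (Set.mem_insert a T)⟩ : A)
      (mem_m A ((Set.subset_insert a T).trans hA))

theorem IsQLChain.exists_finite_forall_subring {X : Set D} (hX : X.Finite) {S : Set M} {h : ℕ}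
    {C : Submodule D M} (H : IsQLChain (Ideal.span X) (Submodule.span D S) h C) {F : Set M}
    (hF : F.Finite) (hFC : F ⊆ C) :
    ∃ (T : Set D) (G : Set M), T.Finite ∧ G.Finite ∧
      ∀ (A : Subring D) (N : Type*) [AddCommGroup N] [Module A N] (φ : N →ₗ[A] M),
        Function.Injective φ → T ∪ X ⊆ A → G ∪ S ⊆ Set.range φ →
        ∃ C' : Submodule A N, F ⊆ C'.map φ ∧
          IsQLChain (Ideal.span (Subtype.val ⁻¹' X)) (Submodule.span A (φ ⁻¹' S)) h C' := by
  induction H generalizing F with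
  | zero =>
    choose! T hT mem_span using fun m (hm : m ∈ F) => exists_finite_forall_subring_mem_span (hFC hm)
    refine ⟨⋃ m ∈ F, T m, ∅, hF.biUnion hT, Set.finite_empty, fun A N _ _ φ _ hTA hS => ?_⟩
    refine ⟨Submodule.span A (φ ⁻¹' S), fun m hm => ?_, zero⟩
    rw [Submodule.map_span, Set.image_preimage_eq_of_subset (Set.union_subset_iff.mp hS).2]
    exact mem_span m hm A ((Set.subset_biUnion_of_mem hm).trans (Set.union_subset_iff.mp hTA).1)
  | @step h C u _ hu ih =>
    have exists_eq (m : M) (hm : m ∈ F) : ∃ c ∈ C, ∃ a : D, c + a • u = m := by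
      obtain ⟨c, hc, y, hy, rfl⟩ := Submodule.mem_sup.mp (hFC hm)
      obtain ⟨a, rfl⟩ := Submodule.mem_span_singleton.mp hy
      exact ⟨c, hc, a, rfl⟩
    choose! c hc a add_smul_eq using exists_eq
    have smul_mem : (· • u) '' X ⊆ C :=
      Set.image_subset_iff.mpr fun b (hb : b ∈ X) => hu b (Ideal.subset_span hb)
    obtain ⟨T, G, hT, hG, descend⟩ := ih ((hF.image c).union (hX.image (· • u)))
      (Set.union_subset (Set.image_subset_iff.mpr hc) smul_mem)
    refine ⟨T ∪ a '' F, insert u G, hT.union (hF.image a), hG.insert u,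
      fun A N _ _ φ hφ hTA hGS => ?_⟩
    rw [Set.union_subset_iff, Set.union_subset_iff] at hTA
    obtain ⟨⟨T_le, image_le⟩, X_le⟩ := hTA
    rw [Set.insert_union, Set.insert_subset_iff] at hGS
    obtain ⟨⟨n, rfl⟩, G_le⟩ := hGS
    obtain ⟨C', F_le, chain⟩ := descend A N φ hφ (Set.union_subset T_le X_le) G_le
    have smul_n_mem : Ideal.span (Subtype.val ⁻¹' X) ≤
        C'.comap (LinearMap.toSpanSingleton A N n) := Ideal.span_le.mpr fun b hb => by
      obtain ⟨y, hy, y_eq⟩ := F_le (Or.inr ⟨b, hb, rfl⟩)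
      rwa [hφ (y_eq.trans (map_smul φ b n).symm)] at hy
    refine ⟨C' ⊔ Submodule.span A {n}, fun m hm => ?_, step n chain smul_n_mem⟩
    obtain ⟨y, hy, y_eq⟩ := F_le (Or.inl ⟨m, hm, rfl⟩)
    refine ⟨y + (⟨a m, image_le ⟨m, hm, rfl⟩⟩ : A) • n, Submodule.add_mem_sup hy
      (Submodule.smul_mem _ _ (Submodule.mem_span_singleton_self n)), ?_⟩
    rw [map_add, map_smul, y_eq]
    exact add_smul_eq m hm

variable {d : ℕ} {x : Fin d → D} {t : Fin d → ℕ} {r h : ℕ}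

theorem powerIdeal_smul_top_pi (x : Fin d → D) (t : Fin d → ℕ) (r : ℕ) :
    (powerIdeal x t • ⊤ : Submodule D (Fin r → D)) =
      Submodule.span D (Set.range fun k : Fin d × Fin r => Pi.single k.2 (x k.1 ^ t k.1)) := by
  refine le_antisymm (powerIdeal_smul_top_le_iff.mpr fun i m => ?_) (Submodule.span_le.mpr ?_)
  · rw [← Finset.univ_sum_single m, Finset.smul_sum]
    refine Submodule.sum_mem _ fun b _ => ?_
    rw [← Pi.single_smul, smul_eq_mul, mul_comm, ← smul_eq_mul, Pi.single_smul]
    exact Submodule.smul_mem _ _ (Submodule.subset_span ⟨(i, b), rfl⟩)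
  · rintro _ ⟨k, rfl⟩
    have smul_mem := powerIdeal_smul_top_le_iff.mp (le_refl (powerIdeal x t • ⊤)) k.1
      (Pi.single k.2 1 : Fin r → D)
    rwa [← Pi.single_smul, smul_eq_mul, mul_one] at smul_mem

theorem compLeft_linearMap_single (A : Subring D) (b : Fin r) (a : A) :
    (Algebra.linearMap A D).compLeft (Fin r) (Pi.single b a) = Pi.single b (a : D) :=
  funext fun c => Pi.apply_single (fun _ => Algebra.linearMap A D) (fun _ => map_zero _) b a c

theorem IsQLChain.exists_finite_forall_subring_pi
    (H : IsQLChain (Ideal.span (Set.range x))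
      (powerIdeal x t • (⊤ : Submodule D (Fin r → D))) h ⊤) :
    ∃ T : Set D, T.Finite ∧ ∀ (A : Subring D) (y : Fin d → A), T ⊆ A → Subtype.val ∘ y = x →
      IsQLChain (Ideal.span (Set.range y))
        (powerIdeal y t • (⊤ : Submodule A (Fin r → A))) h ⊤ := by
  rw [powerIdeal_smul_top_pi] at H
  obtain ⟨T, G, hT, hG, descend⟩ := H.exists_finite_forall_subring (Set.finite_range x)
    (Set.finite_range fun b => Pi.single b (1 : D)) (fun _ _ => Submodule.mem_top)
  refine ⟨T ∪ ⋃ g ∈ G, Set.range g, hT.union (hG.biUnion fun g _ => Set.finite_range g), ?_⟩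
  rintro A y hA rfl
  obtain ⟨T_le, G_le⟩ := Set.union_subset_iff.mp hA
  let φ : (Fin r → A) →ₗ[A] (Fin r → D) := (Algebra.linearMap A D).compLeft (Fin r)
  have hφ : Function.Injective φ := Subtype.val_injective.comp_left
  have φ_single (b : Fin r) (a : A) : φ (Pi.single b a) = Pi.single b (a : D) :=
    compLeft_linearMap_single A b a
  have range_le : Set.range (Subtype.val ∘ y) ⊆ (A : Set D) := by
    rintro _ ⟨i, rfl⟩
    exact (y i).2
  obtain ⟨C', F_le, chain⟩ := descend A (Fin r → A) φ hφ (Set.union_subset T_le range_le)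
    (Set.union_subset (fun g hg => ⟨fun b => ⟨g b, G_le (Set.mem_biUnion hg ⟨b, rfl⟩)⟩, rfl⟩)
      (by rintro _ ⟨k, rfl⟩; exact ⟨_, φ_single k.2 (y k.1 ^ t k.1)⟩))
  have C'_eq_top : C' = ⊤ := by
    rw [eq_top_iff, ← (Pi.basisFun A (Fin r)).span_eq, Submodule.span_le]
    rintro _ ⟨b, rfl⟩
    obtain ⟨v, hv, v_eq⟩ := F_le ⟨b, rfl⟩
    rwa [Pi.basisFun_apply, ← hφ (v_eq.trans (φ_single b 1).symm)]
  have preimage_gens : (φ ⁻¹' Set.range fun k : Fin d × Fin r =>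
      Pi.single k.2 ((Subtype.val ∘ y) k.1 ^ t k.1)) =
      Set.range fun k : Fin d × Fin r => Pi.single k.2 (y k.1 ^ t k.1) := by
    rw [← Set.preimage_image_eq (Set.range fun k : Fin d × Fin r => _) hφ, ← Set.range_comp]
    exact congrArg (fun g => φ ⁻¹' Set.range g)
      (funext fun k => (φ_single k.2 (y k.1 ^ t k.1)).symm)
  have preimage_range : Subtype.val ⁻¹' Set.range (Subtype.val ∘ y) = Set.range y := by
    rw [Set.range_comp, Set.preimage_image_eq _ Subtype.val_injective]
  rwa [C'_eq_top, preimage_range, preimage_gens, ← powerIdeal_smul_top_pi] at chain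

theorem exists_subring_finiteType {T : Set D} (hT : T.Finite) :
    ∃ A : Subring D, T ⊆ A ∧ Algebra.FiniteType ℤ A := by
  have : Algebra.FiniteType ℤ (Algebra.adjoin ℤ T) :=
    (Subalgebra.fg_iff_finiteType _).mp (Subalgebra.fg_def.mpr ⟨T, hT, rfl⟩)
  exact ⟨(Algebra.adjoin ℤ T).toSubring, Algebra.subset_adjoin, this⟩

end Descent

section LowerBound

theorem prod_mul_le_of_isQLChain_of_algebraRat {D : Type u} [CommRing D] [IsNoetherianRing D]
    [IsLocalRing D] [Algebra ℚ D] {d : ℕ} {x : Fin d → D} {t : Fin d → ℕ} {r h : ℕ}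
    (hd : (d : WithBot ℕ∞) ≤ ringKrullDim D)
    (hx : (Ideal.span (Set.range x)).radical = IsLocalRing.maximalIdeal D) (ht : ∀ i, 0 < t i)
    (H : IsQLChain (Ideal.span (Set.range x))
      (powerIdeal x t • (⊤ : Submodule D (Fin r → D))) h ⊤) :
    (∏ i, t i) * r ≤ h := by
  obtain ⟨T, hT, descend⟩ := H.exists_finite_forall_subring_pi
  obtain ⟨A, T_le, _⟩ := exists_subring_finiteType (hT.union (Set.finite_range x))
  rw [Set.union_subset_iff] at T_le
  let y (i : Fin d) : A := ⟨x i, T_le.2 ⟨i, rfl⟩⟩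
  obtain ⟨p, E, _, _, _, _, ψ, hp, _, hE, hψ⟩ := exists_ringHom_charP hd A.subtype (x := y) hx
  have chain := (descend A y T_le.1 rfl).powerIdeal_smul_top_map (span_range_piMapₛₗ ψ _)
  exact prod_mul_le_of_isQLChain_of_charP hp hE hψ ht chain

theorem prod_mul_le_of_isQLChain {D : Type u} [CommRing D] [IsDomain D] [IsNoetherianRing D]
    [IsLocalRing D] {K : Type*} [Field K] (g : K →+* D) {d : ℕ} {x : Fin d → D} {t : Fin d → ℕ}
    {r h : ℕ} (hd : (d : WithBot ℕ∞) ≤ ringKrullDim D)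
    (hx : (Ideal.span (Set.range x)).radical = IsLocalRing.maximalIdeal D) (ht : ∀ i, 0 < t i)
    (H : IsQLChain (Ideal.span (Set.range x))
      (powerIdeal x t • (⊤ : Submodule D (Fin r → D))) h ⊤) :
    (∏ i, t i) * r ≤ h := by
  obtain ⟨p, _⟩ := CharP.exists K
  rcases CharP.char_is_prime_or_zero K p with hp | rfl
  · have := charP_of_injective_ringHom g.injective p
    exact prod_mul_le_of_isQLChain_of_charP hp hd hx ht H
  · have := CharP.charP_to_charZero K
    let _ : Algebra ℚ D := (g.comp (algebraMap ℚ K)).toAlgebra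
    exact prod_mul_le_of_isQLChain_of_algebraRat hd hx ht H

theorem radical_span_range_map_of_surjective {R S : Type*} [CommRing R] [IsLocalRing R]
    [CommRing S] [IsLocalRing S] {f : R →+* S} (hf : Function.Surjective f) {ι : Type*} {x : ι → R}
    (hx : (Ideal.span (Set.range x)).radical = IsLocalRing.maximalIdeal R) :
    (Ideal.span (Set.range (f ∘ x))).radical = IsLocalRing.maximalIdeal S := by
  rw [Set.range_comp, ← Ideal.map_span, ← IsLocalRing.map_maximalIdeal_of_surjective f hf, ← hx]
  refine le_antisymm ?_ (Ideal.map_radical_le f)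
  rw [hx, IsLocalRing.map_maximalIdeal_of_surjective f hf,
    (inferInstance : (IsLocalRing.maximalIdeal S).IsPrime).radical_le_iff,
    ← IsLocalRing.map_maximalIdeal_of_surjective f hf, ← hx]
  exact Ideal.map_mono Ideal.le_radical

theorem le_quasilength_powerQuotient_pi {R : Type u} [CommRing R] [IsNoetherianRing R]
    [IsLocalRing R] (hfield : ∃ K : Subring R, IsField K) {d : ℕ} {x : Fin d → R}
    (hx : (Ideal.span (Set.range x)).radical = IsLocalRing.maximalIdeal R) {P : Ideal R} [P.IsPrime]
    (hP : (d : WithBot ℕ∞) ≤ ringKrullDim (R ⧸ P)) {t : Fin d → ℕ} (ht : ∀ i, 0 < t i) (r : ℕ) :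
    ((∏ i, t i : ℕ) : ℕ∞) * r ≤
      quasilength R (Ideal.span (Set.range x)) (PowerQuotient x t (Fin r → R ⧸ P)) := by
  by_cases htop : quasilength R (Ideal.span (Set.range x)) (PowerQuotient x t (Fin r → R ⧸ P)) = ⊤
  · exact htop ▸ le_top
  obtain ⟨h, quasilength_eq, chain⟩ := exists_isQLChain_of_quasilength_ne_top htop
  let π := Ideal.Quotient.mk P
  have hπ : Function.Surjective π := Ideal.Quotient.mk_surjective
  have : IsLocalRing (R ⧸ P) := .of_surjective' π hπ
  let φ : (Fin r → R ⧸ P) →ₛₗ[π] (Fin r → R ⧸ P) :=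
    { toFun := id, map_add' := fun _ _ => rfl, map_smul' := fun _ _ => rfl }
  have chain_quotient : IsQLChain (Ideal.span (Set.range (π ∘ x)))
      (powerIdeal (π ∘ x) t • (⊤ : Submodule (R ⧸ P) (Fin r → R ⧸ P))) h ⊤ := by
    have span_range_eq_top : Submodule.span (R ⧸ P) (Set.range φ) = ⊤ := by
      rw [show Set.range φ = Set.univ from Set.range_id, Submodule.span_univ]
    have chain_comap := chain.comap (Submodule.mkQ_surjective _)
    rw [Submodule.comap_bot, Submodule.ker_mkQ, Submodule.comap_top] at chain_comap
    exact chain_comap.powerIdeal_smul_top_map span_range_eq_top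
  rw [quasilength_eq, ← Nat.cast_mul, Nat.cast_le]
  obtain ⟨K, hK⟩ := hfield
  let _ : Field K := hK.toField
  exact prod_mul_le_of_isQLChain (π.comp K.subtype) hP
    (radical_span_range_map_of_surjective hπ hx) ht chain_quotient

end LowerBound

/-! ## Generic rank -/

section GenericRank

variable {D N : Type*} [CommRing D] [IsDomain D] [AddCommGroup N] [Module D N] [Module.Finite D N]

theorem exists_ne_zero_forall_smul_eq_zero_of_finrank_eq_zero (h : Module.finrank D N = 0) :
    ∃ c : D, c ≠ 0 ∧ ∀ z : N, c • z = 0 := by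
  obtain ⟨c, hc, c_mem⟩ :=
    Submodule.annihilator_top_inter_nonZeroDivisors (Module.finrank_eq_zero_iff_isTorsion.mp h)
  exact ⟨c, nonZeroDivisors.ne_zero c_mem,
    fun z => Submodule.mem_annihilator.mp hc z Submodule.mem_top⟩

theorem exists_ne_zero_forall_smul_mem_span_of_linearIndependent
    {n : Fin (Module.finrank D N) → N} (hn : LinearIndependent D n) :
    ∃ c : D, c ≠ 0 ∧ ∀ z, c • z ∈ Submodule.span D (Set.range n) := by
  have finrank_quotient : Module.finrank D (N ⧸ Submodule.span D (Set.range n)) = 0 := by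
    have := (Submodule.span D (Set.range n)).finrank_quotient_add_finrank
    rw [finrank_span_eq_card hn, Fintype.card_fin] at this
    lia
  obtain ⟨c, hc, smul_eq_zero⟩ :=
    exists_ne_zero_forall_smul_eq_zero_of_finrank_eq_zero finrank_quotient
  refine ⟨c, hc, fun z => ?_⟩
  simpa [← Submodule.Quotient.mk_smul] using smul_eq_zero (Submodule.Quotient.mk z)

variable (D N)

theorem exists_linearMap_fin_finrank_smul_mem_range :
    ∃ (f : N →ₗ[D] (Fin (Module.finrank D N) → D)) (c : D),
      c ≠ 0 ∧ ∀ w, c • w ∈ LinearMap.range f := by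
  obtain ⟨n, hn⟩ := exists_linearIndependent_of_le_finrank (le_refl (Module.finrank D N))
  obtain ⟨c, hc, smul_mem⟩ := exists_ne_zero_forall_smul_mem_span_of_linearIndependent hn
  let b := Module.Basis.span hn
  refine ⟨b.equivFun.toLinearMap ∘ₗ (LinearMap.lsmul D N c).codRestrict _ smul_mem, c, hc,
    fun w => ?_⟩
  have smul_eq : (LinearMap.lsmul D N c).codRestrict _ smul_mem (b.equivFun.symm w : N) =
      c • b.equivFun.symm w := Subtype.ext rfl
  exact ⟨b.equivFun.symm w, by
    rw [LinearMap.comp_apply, smul_eq, map_smul, LinearEquiv.coe_coe, b.equivFun.apply_symm_apply]⟩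

theorem exists_fin_smul_mem_span_of_finrank_le {r : ℕ} (hr : Module.finrank D N ≤ r) :
    ∃ (n : Fin r → N) (c : D), c ≠ 0 ∧ ∀ z, c • z ∈ Submodule.span D (Set.range n) := by
  obtain ⟨n, hn⟩ := exists_linearIndependent_of_le_finrank (le_refl (Module.finrank D N))
  obtain ⟨c, hc, smul_mem⟩ := exists_ne_zero_forall_smul_mem_span_of_linearIndependent hn
  refine ⟨Function.extend (Fin.castLE hr) n 0, c, hc, fun z => Submodule.span_mono ?_ (smul_mem z)⟩
  rintro _ ⟨i, rfl⟩
  exact ⟨Fin.castLE hr i, (Fin.castLE_injective hr).extend_apply n 0 i⟩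

end GenericRank

theorem finrank_fractionRing_tensorProduct (D N : Type*) [CommRing D] [IsDomain D]
    [AddCommGroup N] [Module D N] :
    Module.finrank (FractionRing D) (FractionRing D ⊗[D] N) = Module.finrank D N :=
  (TensorProduct.isBaseChange D N (FractionRing D)).finrank_eq

/-! ## Content and generic rank -/

section LowerBound

variable {R : Type u} [CommRing R] {P : Ideal R} [P.IsPrime]

theorem ringKrullDim_quotient_sup_span_singleton_lt [FiniteRingKrullDim (R ⧸ P)] {c : R}
    (hc : c ∉ P) : ringKrullDim (R ⧸ P ⊔ Ideal.span {c}) < ringKrullDim (R ⧸ P) := by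
  rw [← ringKrullDim_eq_of_ringEquiv (DoubleQuot.quotQuotEquivQuotSup P (Ideal.span {c})),
    Ideal.map_span, Set.image_singleton]
  exact ringKrullDim_quotient_span_singleton_lt
    (mem_nonZeroDivisors_of_ne_zero (Ideal.Quotient.eq_zero_iff_mem.not.mpr hc))

variable [IsNoetherianRing R] [IsLocalRing R] {d : ℕ} {x : Fin d → R} {M : Type*} [AddCommGroup M]
  [Module R M]

theorem natCast_le_content_of_smul_mem_range (hfield : ∃ K : Subring R, IsField K)
    (hx : (Ideal.span (Set.range x)).radical = IsLocalRing.maximalIdeal R)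
    (hP : ringKrullDim (R ⧸ P) = d) {r : ℕ} {φ : M →ₗ[R] (Fin r → R ⧸ P)} {c : R} (hc : c ∉ P)
    (hφ : ∀ w, c • w ∈ LinearMap.range φ) : r ≤ content x M := by
  have : IsLocalRing (R ⧸ P) :=
    IsLocalRing.of_surjective' (Ideal.Quotient.mk P) Ideal.Quotient.mk_surjective
  have smul_eq_zero : ∀ a ∈ P ⊔ Ideal.span {c},
      ∀ w : (Fin r → R ⧸ P) ⧸ LinearMap.range φ, a • w = 0 := by
    intro a ha w
    obtain ⟨p, hp, _, hcb, rfl⟩ := Submodule.mem_sup.mp ha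
    obtain ⟨b, rfl⟩ := Ideal.mem_span_singleton.mp hcb
    obtain ⟨w, rfl⟩ := Submodule.Quotient.mk_surjective _ w
    have p_smul : p • w = 0 := funext fun i => by
      rw [Pi.smul_apply, Algebra.smul_def, Ideal.Quotient.algebraMap_eq,
        Ideal.Quotient.eq_zero_iff_mem.mpr hp, zero_mul, Pi.zero_apply]
    rw [← Submodule.Quotient.mk_smul, Submodule.Quotient.mk_eq_zero, add_smul, p_smul, zero_add,
      mul_smul]
    exact hφ _
  calc (r : ℝ≥0∞) ≤ content x (Fin r → R ⧸ P) := le_content_of_le_quasilength fun t ht =>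
        le_quasilength_powerQuotient_pi hfield hx hP.ge ht r
    _ ≤ content x M := content_le_content_of_rightExact (f := φ)
        (LinearMap.range φ).mkQ_surjective (LinearMap.range φ).ker_mkQ.le
        (isContentNegligible_of_ringKrullDim_lt hx
          (hP ▸ ringKrullDim_quotient_sup_span_singleton_lt hc) smul_eq_zero)

theorem finrank_quotient_smul_le_content (hfield : ∃ K : Subring R, IsField K)
    (hx : (Ideal.span (Set.range x)).radical = IsLocalRing.maximalIdeal R)
    (hP : ringKrullDim (R ⧸ P) = d) [Module.Finite R M] :
    (Module.finrank (R ⧸ P) (M ⧸ P • (⊤ : Submodule R M)) : ℝ≥0∞) ≤ content x M := by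
  have : Module.Finite (R ⧸ P) (M ⧸ P • (⊤ : Submodule R M)) :=
    Module.Finite.of_restrictScalars_finite R _ _
  obtain ⟨f, c, hc, smul_mem_range⟩ :=
    exists_linearMap_fin_finrank_smul_mem_range (R ⧸ P) (M ⧸ P • (⊤ : Submodule R M))
  obtain ⟨c, rfl⟩ := Ideal.Quotient.mk_surjective c
  refine natCast_le_content_of_smul_mem_range hfield hx hP
    (φ := f.restrictScalars R ∘ₗ (P • (⊤ : Submodule R M)).mkQ)
    (Ideal.Quotient.eq_zero_iff_mem.not.mp hc) fun w => ?_
  obtain ⟨n, hn⟩ := smul_mem_range w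
  obtain ⟨m, rfl⟩ := Submodule.Quotient.mk_surjective _ n
  exact ⟨m, hn⟩

end LowerBound

section UpperBound

theorem finite_subtype_mem_minimalPrimes (R : Type*) [CommRing R] [IsNoetherianRing R]
    (p : Ideal R → Prop) : Finite {P : Ideal R // P ∈ minimalPrimes R ∧ p P} :=
  ((minimalPrimes.finite_of_isNoetherianRing R).subset fun _ hP => hP.1).to_subtype

variable {R : Type*} [CommRing R]

theorem ringKrullDim_quotient_eq_coheight (p : PrimeSpectrum R) :
    ringKrullDim (R ⧸ p.asIdeal) = Order.coheight p := by
  rw [Order.coheight_eq_krullDim_Ici, ringKrullDim_quotient]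
  rfl

theorem ringKrullDim_quotient_lt_of_forall_mem_minimalPrimes {d : ℕ} (hd : ringKrullDim R ≤ d)
    {𝔞 : Ideal R} (h : ∀ P ∈ minimalPrimes R, ringKrullDim (R ⧸ P) = d → ¬ 𝔞 ≤ P) :
    ringKrullDim (R ⧸ 𝔞) < d := by
  by_contra! le_ringKrullDim
  rw [ringKrullDim_quotient] at le_ringKrullDim
  obtain ⟨l, hl⟩ := Order.le_krullDim_iff.mp le_ringKrullDim
  let p : PrimeSpectrum R := l.head.1
  have le_coheight : (d : ℕ∞) ≤ Order.coheight p := by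
    rw [← hl]
    exact Order.length_le_coheight_head.trans
      (Order.coheight_le_coheight_apply_of_strictMono Subtype.val (fun _ _ h => h) l.head)
  have coheight_le (q : PrimeSpectrum R) : Order.coheight q ≤ d :=
    WithBot.coe_le_coe.mp ((Order.coheight_le_krullDim q).trans hd)
  refine h p.asIdeal ⟨⟨p.2, bot_le⟩, fun Q hQ hQp => ?_⟩ ?_ l.head.2
  · by_contra hpQ
    have := Order.coheight_add_one_le (show (⟨Q, hQ.1⟩ : PrimeSpectrum R) < p from
      lt_of_le_not_ge hQp hpQ)
    have := (add_le_add_left le_coheight 1).trans (this.trans (coheight_le _))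
    exact absurd this (by exact_mod_cast d.lt_succ_self.not_ge)
  · rw [ringKrullDim_quotient_eq_coheight, (coheight_le p).antisymm le_coheight]
    rfl

theorem exists_notMem_forall_ne_mem {ι : Type*} [Finite ι] {P : ι → Ideal R}
    (hP : ∀ i, (P i).IsPrime) (h : ∀ i j, P i ≤ P j → i = j) (i : ι) :
    ∃ a ∉ P i, ∀ j ≠ i, a ∈ P j := by
  classical
  cases nonempty_fintype ι
  have inf_not_le : ¬ (Finset.univ.erase i).inf P ≤ P i := fun hle => by
    obtain ⟨j, hj, hji⟩ := (hP i).inf_le'.mp hle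
    exact Finset.ne_of_mem_erase hj (h j i hji)
  obtain ⟨a, ha, ha_notMem⟩ := SetLike.not_le_iff_exists.mp inf_not_le
  exact ⟨a, ha_notMem, fun j hj => Submodule.mem_finsetInf.mp ha j (by simpa using hj)⟩

variable {M : Type*} [AddCommGroup M] [Module R M] [Module.Finite R M] {P : Ideal R} [P.IsPrime]

theorem not_annihilator_quotient_le {U : Submodule R M} {c : R} (hc : c ∉ P)
    (h : ∀ z, c • z ∈ U ⊔ P • (⊤ : Submodule R M)) : ¬ Module.annihilator R (M ⧸ U) ≤ P := by
  intro hle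
  let p : PrimeSpectrum R := ⟨P, ‹_›⟩
  have p_mem : p ∈ Module.support R ((M ⧸ U) ⧸ P • (⊤ : Submodule R (M ⧸ U))) := by
    rw [Module.support_quotient]
    exact ⟨Module.mem_support_iff_of_finite.mpr hle, le_refl P⟩
  refine hc (Module.mem_support_iff_of_finite.mp p_mem (Module.mem_annihilator.mpr fun z => ?_))
  obtain ⟨z, rfl⟩ := Submodule.Quotient.mk_surjective _ z
  obtain ⟨z, rfl⟩ := Submodule.Quotient.mk_surjective _ z
  rw [← Submodule.Quotient.mk_smul, Submodule.Quotient.mk_eq_zero]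
  have map_sup : (U ⊔ P • (⊤ : Submodule R M)).map U.mkQ ≤ P • ⊤ := by
    rw [Submodule.map_sup, Submodule.map_smul'']
    simp
  exact map_sup ⟨c • z, h z, map_smul _ c z⟩

theorem exists_fin_smul_mem_span_sup_of_finrank_le {r : ℕ}
    (hr : Module.finrank (R ⧸ P) (M ⧸ P • (⊤ : Submodule R M)) ≤ r) :
    ∃ (m : Fin r → M) (c : R), c ∉ P ∧
      ∀ z, c • z ∈ Submodule.span R (Set.range m) ⊔ P • (⊤ : Submodule R M) := by
  have : Module.Finite (R ⧸ P) (M ⧸ P • (⊤ : Submodule R M)) :=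
    Module.Finite.of_restrictScalars_finite R _ _
  obtain ⟨n, c, hc, smul_mem⟩ := exists_fin_smul_mem_span_of_finrank_le _ _ hr
  obtain ⟨m, rfl⟩ := (P • (⊤ : Submodule R M)).mkQ_surjective.comp_left n
  obtain ⟨c, rfl⟩ := Ideal.Quotient.mk_surjective c
  refine ⟨m, c, fun h => hc (Ideal.Quotient.eq_zero_iff_mem.mpr h), fun z => ?_⟩
  have := smul_mem (Submodule.Quotient.mk z)
  rw [← Submodule.restrictScalars_mem R, Submodule.restrictScalars_span R (R ⧸ P)
    Ideal.Quotient.mk_surjective, Set.range_comp, ← Submodule.map_span] at this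
  rw [sup_comm, ← Submodule.comap_map_mkQ]
  exact this

theorem not_annihilator_quotient_span_le {r : ℕ} {m u : Fin r → M} {a c : R} (ha : a ∉ P)
    (hc : c ∉ P) (hm : ∀ z, c • z ∈ Submodule.span R (Set.range m) ⊔ P • (⊤ : Submodule R M))
    (hu : ∀ i, u i - a • m i ∈ P • (⊤ : Submodule R M)) :
    ¬ Module.annihilator R (M ⧸ Submodule.span R (Set.range u)) ≤ P := by
  refine not_annihilator_quotient_le (c := a * c) (‹P.IsPrime›.mul_notMem ha hc) fun z => ?_
  have sup_le_comap : Submodule.span R (Set.range m) ⊔ P • (⊤ : Submodule R M) ≤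
      (Submodule.span R (Set.range u) ⊔ P • (⊤ : Submodule R M)).comap
        (LinearMap.lsmul R M a) := by
    refine sup_le (Submodule.span_le.mpr ?_) fun z hz =>
      Submodule.mem_sup_right (Submodule.smul_mem _ a hz)
    rintro _ ⟨i, rfl⟩
    have := Submodule.sub_mem _
      (Submodule.mem_sup_left (Submodule.subset_span (Set.mem_range_self i)))
      (Submodule.mem_sup_right (S := Submodule.span R (Set.range u)) (hu i))
    simpa using this
  rw [mul_smul]
  exact sup_le_comap (hm z)

variable (M) in
theorem exists_fin_ringKrullDim_quotient_annihilator_lt [IsNoetherianRing R] {d r : ℕ}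
    (hd : ringKrullDim R ≤ d)
    (hr : ∀ P ∈ minimalPrimes R, ringKrullDim (R ⧸ P) = d →
      Module.finrank (R ⧸ P) (M ⧸ P • (⊤ : Submodule R M)) ≤ r) :
    ∃ u : Fin r → M, ringKrullDim
      (R ⧸ Module.annihilator R (M ⧸ Submodule.span R (Set.range u))) < d := by
  let ι := {P : Ideal R // P ∈ minimalPrimes R ∧ ringKrullDim (R ⧸ P) = d}
  have : Finite ι := finite_subtype_mem_minimalPrimes R _
  cases nonempty_fintype ι
  have isPrime (P : ι) : P.1.IsPrime := P.2.1.isPrime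
  choose m c hc hm using fun P : ι =>
    have := isPrime P
    exists_fin_smul_mem_span_sup_of_finrank_le (hr P.1 P.2.1 P.2.2)
  choose a ha a_mem using exists_notMem_forall_ne_mem (P := fun P : ι => P.1) isPrime
    fun P Q hPQ => Subtype.ext (hPQ.antisymm (Q.2.1.2 P.2.1.1 hPQ))
  refine ⟨fun i => ∑ P, a P • m P i,
    ringKrullDim_quotient_lt_of_forall_mem_minimalPrimes hd fun P hP hPd => ?_⟩
  have := isPrime ⟨P, hP, hPd⟩
  refine not_annihilator_quotient_span_le (ha ⟨P, hP, hPd⟩) (hc ⟨P, hP, hPd⟩) (hm ⟨P, hP, hPd⟩)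
    fun i => ?_
  classical
  rw [← Finset.add_sum_erase _ _ (Finset.mem_univ (⟨P, hP, hPd⟩ : ι)), add_sub_cancel_left]
  exact sum_mem fun Q hQ => Submodule.smul_mem_smul
    (a_mem Q ⟨P, hP, hPd⟩ (Finset.ne_of_mem_erase hQ).symm) Submodule.mem_top

end UpperBound

theorem content_le_of_forall_finrank_le {R : Type*} [CommRing R] [IsNoetherianRing R]
    [IsLocalRing R] {d : ℕ} (hd : ringKrullDim R ≤ d) {x : Fin d → R}
    (hx : (Ideal.span (Set.range x)).radical = IsLocalRing.maximalIdeal R)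
    (M : Type*) [AddCommGroup M] [Module R M] [Module.Finite R M] {r : ℕ}
    (hr : ∀ P ∈ minimalPrimes R, ringKrullDim (R ⧸ P) = d →
      Module.finrank (R ⧸ P) (M ⧸ P • (⊤ : Submodule R M)) ≤ r) : content x M ≤ r := by
  classical
  obtain ⟨u, hu⟩ := exists_fin_ringKrullDim_quotient_annihilator_lt M hd hr
  let N := Submodule.span R (Set.range u)
  let s : Finset N := Finset.univ.image fun i => ⟨u i, Submodule.subset_span ⟨i, rfl⟩⟩
  have span_s : Submodule.span R (s : Set N) = ⊤ := by
    refine (Submodule.map_injective_of_injective N.subtype_injective ?_)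
    rw [Submodule.map_span, Submodule.map_subtype_top, Finset.coe_image, Finset.coe_univ,
      Set.image_univ, ← Set.range_comp]
    rfl
  have card_s : s.card ≤ r := Finset.card_image_le.trans_eq (Finset.card_fin r)
  calc content x M ≤ content x N := content_le_content_of_rightExact (f := N.subtype)
        N.mkQ_surjective (by rw [N.ker_mkQ, N.range_subtype])
        (isContentNegligible_of_ringKrullDim_lt hx hu fun _ ha => Module.mem_annihilator.mp ha)
    _ ≤ s.card := content_le_of_quasilength_le fun t ht =>
        quasilength_powerQuotient_le_of_span_eq_top span_s ht
    _ ≤ r := by exact_mod_cast card_s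

theorem exists_iSup_natCast_eq {ι : Type*} [Finite ι] (ρ : ι → ℕ) :
    ∃ r : ℕ, (⨆ i, (ρ i : ℝ≥0∞)) = r ∧ ∀ i, ρ i ≤ r := by
  cases nonempty_fintype ι
  refine ⟨Finset.univ.sup ρ, ?_, fun i => Finset.le_sup (Finset.mem_univ i)⟩
  rw [← Finset.sup_univ_eq_iSup]
  exact (Finset.apply_sup_eq_sup_comp_of_linearOrder Nat.cast Nat.mono_cast Nat.cast_zero).symm

/-- Over a `d`-dimensional Noetherian local ring containing a
field, with `x₁, …, x_d` a system of parameters, the content of a finitely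
generated module `M` is the maximum of the ranks `rank_{R/P}(M/PM)` over the
minimal primes `P` with `dim R/P = d`. -/
theorem content_eq_max_rank
    {R : Type u} [CommRing R] [IsNoetherianRing R] [IsLocalRing R]
    (hfield : ∃ K : Subring R, IsField K)
    {d : ℕ} (hd : ringKrullDim R = d)
    (x : Fin d → R) (hx : ∀ i, x i ∈ IsLocalRing.maximalIdeal R)
    (hxparam : (Ideal.span (Set.range x)).radical = IsLocalRing.maximalIdeal R)
    (M : Type u) [AddCommGroup M] [Module R M] [Module.Finite R M] :
    content x M =
      ⨆ P : {P : Ideal R // P ∈ minimalPrimes R ∧ ringKrullDim (R ⧸ P) = d},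
        (Module.finrank (FractionRing (R ⧸ P.1))
          (FractionRing (R ⧸ P.1) ⊗[R ⧸ P.1] (M ⧸ (P.1 • (⊤ : Submodule R M)))) : ℝ≥0∞) := by
  have isPrime (P : {P : Ideal R // P ∈ minimalPrimes R ∧ ringKrullDim (R ⧸ P) = d}) :
      P.1.IsPrime := P.2.1.isPrime
  have := finite_subtype_mem_minimalPrimes R (fun P => ringKrullDim (R ⧸ P) = d)
  simp only [finrank_fractionRing_tensorProduct]
  refine le_antisymm ?_ (iSup_le fun P => finrank_quotient_smul_le_content hfield hxparam P.2.2)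
  obtain ⟨r, iSup_eq, le_r⟩ := exists_iSup_natCast_eq
    fun P : {P : Ideal R // P ∈ minimalPrimes R ∧ ringKrullDim (R ⧸ P) = d} =>
      Module.finrank (R ⧸ P.1) (M ⧸ P.1 • (⊤ : Submodule R M))
  rw [iSup_eq]
  exact content_le_of_forall_finrank_le hd.le hxparam M fun P hP hPd => le_r ⟨P, hP, hPd⟩
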